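/- There exists α₀ < 2/3 such that for every α with α₀ < α < 2, the system of eigenfunctions of 𝓛_{i,α} (i.e., the case c = i) is complete in L²((0,∞), ℂ). -/

import Mathlib

/-!
For each `λ` the equation `y'' = (i x ^ α - λ) y` has, up to scaling, one decaying solution `ψ`, and
`λ` is an eigenvalue iff `ψ(0) = 0`. Weyl's limit point construction makes its initial data locally
holomorphic in `λ`. If `f` is orthogonal to all eigenfunctions, then `(∫ ψ f) / ψ(0)` extends to an
entire function `F` of `λ`: the numerator vanishes at the zeros of the denominator, and these zeros
are simple because rotating the variable by `-π / (2 (2 + α))` turns the eigenvalue problem into a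
self-adjoint one.

`F` has order at most `1 / 2 + 1 / α`. It decays along every direction outside the closed first
quadrant, which contains the numerical range; by the Phragmén–Lindelöf principle this alone would
give `F = 0` for `α > 2 / 3`. To go below `2 / 3`, one turns the variable `x` and finds that `F` is
also bounded on a ray slightly inside the first quadrant, so that only sectors of opening less than
`π / 2` remain.

Once `∫ ψ f = 0` for every `λ`, the solution of `u'' = (i x ^ α - λ) u + f` with zero initial data
is given by the resolvent kernel. So, for fixed `x`, it decays in `λ` outside the first quadrant;
being entire of order at most `1`, it vanishes, and `f = 0` follows.
-/

open MeasureTheory Set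

/-- `y` is an eigenfunction of the Dirichlet operator `𝓛_{c,α} = −d²/dx² + c·x^α` on
`L²(0,∞)` with eigenvalue `lam`: continuous on `[0,∞)`, `y(0)=0`, not identically zero,
twice differentiable on `(0,∞)` with `y'' = (c x^α − lam) y`, and square integrable. -/
def IsEigenfunction (α : ℝ) (c lam : ℂ) (y : ℝ → ℂ) : Prop :=
  ContinuousOn y (Set.Ici 0) ∧
  y 0 = 0 ∧
  (∃ x ≥ (0 : ℝ), y x ≠ 0) ∧
  (∃ y' : ℝ → ℂ,
    (∀ x ∈ Set.Ioi (0 : ℝ), HasDerivAt y (y' x) x) ∧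
    (∀ x ∈ Set.Ioi (0 : ℝ), HasDerivAt y' ((c * ((x ^ α : ℝ) : ℂ) - lam) * y x) x)) ∧
  MeasureTheory.IntegrableOn (fun x => ‖y x‖ ^ 2) (Set.Ioi 0)

/-- The system of eigenfunctions of `𝓛_{c,α}` is complete in `L²((0,∞),ℂ)`:
the closed linear span of (the `L²`-classes of) all eigenfunctions is everything. -/
def EigenfunctionsComplete (α : ℝ) (c : ℂ) : Prop :=
  closure ((Submodule.span ℂ
      {F : MeasureTheory.Lp ℂ 2 (MeasureTheory.volume.restrict (Set.Ioi (0 : ℝ))) |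
        ∃ lam : ℂ, ∃ y : ℝ → ℂ, IsEigenfunction α c lam y ∧
          ∀ᵐ x ∂(MeasureTheory.volume.restrict (Set.Ioi (0 : ℝ))), F x = y x} :
      Submodule ℂ (MeasureTheory.Lp ℂ 2 (MeasureTheory.volume.restrict (Set.Ioi (0 : ℝ))))) :
    Set (MeasureTheory.Lp ℂ 2 (MeasureTheory.volume.restrict (Set.Ioi (0 : ℝ))))) = Set.univ

open Filter Topology ComplexConjugate

/-! ### Solutions of `y'' = q y` and their flux -/

lemma image_le_of_hasDerivAt_nonneg {f f' : ℝ → ℝ} {x z : ℝ} (hxz : x ≤ z)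
    (hf : ContinuousOn f (Icc x z)) (hf' : ∀ s ∈ Ioo x z, HasDerivAt f (f' s) s)
    (hnonneg : ∀ s ∈ Ioo x z, 0 ≤ f' s) : f x ≤ f z := by
  refine monotoneOn_of_hasDerivWithinAt_nonneg (convex_Icc x z) hf (f' := f') ?_ ?_
    (left_mem_Icc.2 hxz) (right_mem_Icc.2 hxz) hxz
  · intro s hs
    rw [interior_Icc] at hs ⊢
    exact (hf' s hs).hasDerivWithinAt
  · intro s hs
    exact hnonneg s (by rwa [interior_Icc] at hs)

lemma hasDerivAt_norm_sq {y : ℝ → ℂ} {d : ℂ} {s : ℝ} (h : HasDerivAt y d s) :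
    HasDerivAt (fun s ↦ ‖y s‖ ^ 2) (2 * (d * conj (y s)).re) s := by
  simpa [Complex.inner] using h.norm_sq

lemma abs_re_mul_conj_le (z w : ℂ) : |(z * conj w).re| ≤ ‖z‖ * ‖w‖ := by
  simpa using Complex.abs_re_le_norm (z * conj w)

lemma two_mul_mul_le_mul_sq_add_sq_div {ρ : ℝ} (hρ : 0 < ρ) (p r : ℝ) :
    2 * (p * r) ≤ ρ * r ^ 2 + p ^ 2 / ρ := by
  have hsq : 0 ≤ (ρ * r - p) ^ 2 / ρ := by positivity
  have : (ρ * r - p) ^ 2 / ρ = ρ * r ^ 2 + p ^ 2 / ρ - 2 * (p * r) := by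
    field_simp; ring
  linarith

lemma two_mul_abs_mul_le_of_sq_le {a b c p r : ℝ} (ha : 0 ≤ a) (hb : 0 ≤ b)
    (hc : c ^ 2 ≤ a * b) (hp : 0 ≤ p) (hr : 0 ≤ r) :
    2 * |c| * (p * r) ≤ a * p ^ 2 + b * r ^ 2 := by
  have hc' : |c| ≤ √a * √b := by
    rw [← Real.sqrt_mul ha]
    exact Real.abs_le_sqrt hc
  calc 2 * |c| * (p * r) ≤ 2 * (√a * √b) * (p * r) := by gcongr
    _ ≤ (√a * p) ^ 2 + (√b * r) ^ 2 := by nlinarith [sq_nonneg (√a * p - √b * r)]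
    _ = a * p ^ 2 + b * r ^ 2 := by rw [mul_pow, mul_pow, Real.sq_sqrt ha, Real.sq_sqrt hb]

/-- `y` solves `y'' = q y` on `(0, ∞)` with derivative `y'`, both continuous up to the endpoint
`0`, where differentiability is not required. -/
structure IsSolution (q y y' : ℝ → ℂ) : Prop where
  continuousOn : ContinuousOn y (Ici 0)
  continuousOn' : ContinuousOn y' (Ici 0)
  hasDerivAt : ∀ s, 0 < s → HasDerivAt y (y' s) s
  hasDerivAt' : ∀ s, 0 < s → HasDerivAt y' (q s * y s) s

/-- A solution of a second order equation decays if it tends to `0` at `∞` together with its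
derivative. -/
def Decays (y y' : ℝ → ℂ) : Prop := Tendsto y atTop (𝓝 0) ∧ Tendsto y' atTop (𝓝 0)

/-- The flux `Re (g y' ȳ)`, the boundary term of the energy identity obtained by testing
`y'' = q y` against `g ȳ`. -/
def flux (g : ℂ) (y y' : ℝ → ℂ) (s : ℝ) : ℝ := (g * y' s * conj (y s)).re

/-- On `I`, the energy density `Re g |y'|² + Re (g q) |y|²`, which is the derivative of the flux of
a solution of `y'' = q y`, is at least `a |y'|² + b |y|²`. -/
structure CoerciveOn (q : ℝ → ℂ) (g : ℂ) (a b : ℝ) (I : Set ℝ) : Prop where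
  le_re : a ≤ g.re
  le_re_mul : ∀ s ∈ I, b ≤ (g * q s).re

section

variable {q y y' v v' u u' : ℝ → ℂ} {g : ℂ} {a b c x z K M ρ : ℝ} {I J : Set ℝ}

lemma CoerciveOn.mono (h : CoerciveOn q g a b I) (hJ : J ⊆ I) : CoerciveOn q g a b J :=
  ⟨h.le_re, fun s hs ↦ h.le_re_mul s (hJ hs)⟩

lemma CoerciveOn.weaken {a' b' : ℝ} (h : CoerciveOn q g a b I) (ha : a' ≤ a) (hb : b' ≤ b) :
    CoerciveOn q g a' b' I :=
  ⟨ha.trans h.le_re, fun s hs ↦ hb.trans (h.le_re_mul s hs)⟩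

lemma CoerciveOn.nonneg (h : CoerciveOn q g a b I) (ha : 0 ≤ a) (hb : 0 ≤ b) :
    CoerciveOn q g 0 0 I :=
  h.weaken ha hb

lemma CoerciveOn.le_energy (h : CoerciveOn q g a b I) {s : ℝ} (hs : s ∈ I) :
    a * ‖y' s‖ ^ 2 + b * ‖y s‖ ^ 2 ≤ g.re * ‖y' s‖ ^ 2 + (g * q s).re * ‖y s‖ ^ 2 := by
  have := h.le_re
  have := h.le_re_mul s hs
  gcongr

lemma abs_flux_le (g : ℂ) (y y' : ℝ → ℂ) (s : ℝ) : |flux g y y' s| ≤ ‖g‖ * ‖y' s‖ * ‖y s‖ := by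
  simpa [flux] using abs_re_mul_conj_le (g * y' s) (y s)

lemma Decays.tendsto_flux (h : Decays y y') (g : ℂ) : Tendsto (flux g y y') atTop (𝓝 0) := by
  have hlim := (Complex.continuous_re.tendsto _).comp
    ((h.2.const_mul g).mul ((Complex.continuous_conj.tendsto _).comp h.1))
  simp only [mul_zero, zero_mul, Complex.zero_re] at hlim
  exact hlim

lemma flux_smul (g m : ℂ) (y y' : ℝ → ℂ) (s : ℝ) :
    flux g (fun s ↦ m * y s) (fun s ↦ m * y' s) s = ‖m‖ ^ 2 * flux g y y' s := by
  have : g * (m * y' s) * (conj m * conj (y s)) = (m * conj m) * (g * y' s * conj (y s)) := by ring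
  rw [flux, map_mul, this, Complex.mul_conj, Complex.re_ofReal_mul, Complex.normSq_eq_norm_sq, flux]

lemma flux_parallelogram (g : ℂ) (y₁ y₁' y₂ y₂' : ℝ → ℂ) (s : ℝ) :
    flux g (fun s ↦ y₁ s + y₂ s) (fun s ↦ y₁' s + y₂' s) s
      + flux g (fun s ↦ y₁ s - y₂ s) (fun s ↦ y₁' s - y₂' s) s
      = 2 * flux g y₁ y₁' s + 2 * flux g y₂ y₂' s := by
  simp only [flux, map_add, map_sub, two_mul, ← Complex.add_re]
  congr 1
  ring

namespace IsSolution

lemma add (hv : IsSolution q v v') (hu : IsSolution q u u') :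
    IsSolution q (fun s ↦ v s + u s) (fun s ↦ v' s + u' s) where
  continuousOn := hv.continuousOn.add hu.continuousOn
  continuousOn' := hv.continuousOn'.add hu.continuousOn'
  hasDerivAt s hs := (hv.hasDerivAt s hs).add (hu.hasDerivAt s hs)
  hasDerivAt' s hs := by
    rw [mul_add]
    exact (hv.hasDerivAt' s hs).add (hu.hasDerivAt' s hs)

lemma smul (hu : IsSolution q u u') (m : ℂ) :
    IsSolution q (fun s ↦ m * u s) (fun s ↦ m * u' s) where
  continuousOn := continuousOn_const.mul hu.continuousOn
  continuousOn' := continuousOn_const.mul hu.continuousOn'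
  hasDerivAt s hs := (hu.hasDerivAt s hs).const_mul m
  hasDerivAt' s hs := by
    rw [mul_left_comm]
    exact (hu.hasDerivAt' s hs).const_mul m

lemma wronskian_eq (hv : IsSolution q v v') (hu : IsSolution q u u') (hx : 0 ≤ x) :
    v x * u' x - v' x * u x = v 0 * u' 0 - v' 0 * u 0 := by
  have hcont : ContinuousOn (fun s ↦ v s * u' s - v' s * u s) (Icc 0 x) :=
    ((hv.continuousOn.mul hu.continuousOn').sub (hv.continuousOn'.mul hu.continuousOn)).mono
      Icc_subset_Ici_self
  have hderiv : ∀ s ∈ Ioo 0 x, HasDerivAt (fun s ↦ v s * u' s - v' s * u s) 0 s := by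
    intro s hs
    refine (((hv.hasDerivAt s hs.1).mul (hu.hasDerivAt' s hs.1)).sub
      ((hv.hasDerivAt' s hs.1).mul (hu.hasDerivAt s hs.1))).congr_deriv ?_
    ring
  have := intervalIntegral.integral_eq_sub_of_hasDerivAt_of_le hx hcont hderiv (by simp)
  simpa [sub_eq_zero] using this.symm

lemma wronskian_eq_zero_of_decays (hv : IsSolution q v v') (hu : IsSolution q u u')
    (hdv : Decays v v') (hdu : Decays u u') (hx : 0 ≤ x) : v x * u' x - v' x * u x = 0 := by
  rw [hv.wronskian_eq hu hx]
  have hlim : Tendsto (fun s ↦ v s * u' s - v' s * u s) atTop (𝓝 0) := by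
    simpa using (hdv.1.mul hdu.2).sub (hdv.2.mul hdu.1)
  refine tendsto_nhds_unique (tendsto_const_nhds.congr' ?_) hlim
  filter_upwards [eventually_ge_atTop 0] with s hs
  exact (hv.wronskian_eq hu hs).symm

lemma continuousOn_flux (h : IsSolution q y y') (g : ℂ) : ContinuousOn (flux g y y') (Ici 0) :=
  Complex.continuous_re.comp_continuousOn <| (continuousOn_const.mul h.continuousOn').mul <|
    Complex.continuous_conj.comp_continuousOn h.continuousOn

lemma hasDerivAt_flux (h : IsSolution q y y') (g : ℂ) {s : ℝ} (hs : 0 < s) :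
    HasDerivAt (flux g y y') (g.re * ‖y' s‖ ^ 2 + (g * q s).re * ‖y s‖ ^ 2) s := by
  have hderiv := (Complex.reCLM.hasFDerivAt (x := g * y' s * conj (y s))).comp_hasDerivAt s
    (((h.hasDerivAt' s hs).const_mul g).mul (h.hasDerivAt s hs).star)
  refine HasDerivAt.congr_deriv (f := flux g y y') hderiv ?_
  simp only [Complex.sq_norm, Complex.normSq_apply, Complex.reCLM_apply, Complex.add_re,
    Complex.mul_re, Complex.mul_im, Complex.star_def, Complex.conj_re, Complex.conj_im]
  ring

lemma flux_add_sq_mono (h : IsSolution q y y') (hq : CoerciveOn q g a b (Ioo x z)) (hx : 0 ≤ x)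
    (hxz : x ≤ z) (ha : 0 ≤ a) (hb : 0 ≤ b) (hc : c ^ 2 ≤ a * b) :
    flux g y y' x + c * ‖y x‖ ^ 2 ≤ flux g y y' z + c * ‖y z‖ ^ 2 := by
  refine image_le_of_hasDerivAt_nonneg (f := fun s ↦ flux g y y' s + c * ‖y s‖ ^ 2) hxz
    (((h.continuousOn_flux g).add (continuousOn_const.mul (h.continuousOn.norm.pow 2))).mono
      fun s hs ↦ hx.trans hs.1)
    (fun s hs ↦ (h.hasDerivAt_flux g (hx.trans_lt hs.1)).add
      ((hasDerivAt_norm_sq (h.hasDerivAt s (hx.trans_lt hs.1))).const_mul c)) fun s hs ↦ ?_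
  have hcross : |c * (y' s * conj (y s)).re| ≤ |c| * (‖y' s‖ * ‖y s‖) := by
    rw [abs_mul]
    gcongr
    exact abs_re_mul_conj_le _ _
  have hyoung := two_mul_abs_mul_le_of_sq_le ha hb hc (norm_nonneg (y' s)) (norm_nonneg (y s))
  linarith [(abs_le.1 hcross).1, hq.le_energy (y := y) (y' := y') hs]

lemma flux_mono (h : IsSolution q y y') (hq : CoerciveOn q g 0 0 (Ioo x z)) (hx : 0 ≤ x)
    (hxz : x ≤ z) : flux g y y' x ≤ flux g y y' z := by
  simpa using h.flux_add_sq_mono (c := 0) hq hx hxz le_rfl le_rfl (by simp)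

lemma exp_mul_flux_mono (h : IsSolution q y y') (hq : CoerciveOn q g a b (Ioo x z)) (hx : 0 ≤ x)
    (hxz : x ≤ z) (hg : ‖g‖ ≤ 1) (ha : 0 ≤ a) (hb : 0 ≤ b) (hc : c ^ 2 ≤ a * b) :
    Real.exp (2 * c * x) * flux g y y' x ≤ Real.exp (2 * c * z) * flux g y y' z := by
  refine image_le_of_hasDerivAt_nonneg (f := fun s ↦ Real.exp (2 * c * s) * flux g y y' s) hxz
    ((Continuous.continuousOn (by fun_prop)).mul
      ((h.continuousOn_flux g).mono fun s hs ↦ hx.trans hs.1))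
    (fun s hs ↦ ((hasDerivAt_id s).const_mul (2 * c)).exp.mul
      (h.hasDerivAt_flux g (hx.trans_lt hs.1))) fun s hs ↦ ?_
  have hflux : |flux g y y' s| ≤ ‖y' s‖ * ‖y s‖ :=
    (abs_flux_le g y y' s).trans <| by
      rw [mul_assoc]
      exact mul_le_of_le_one_left (by positivity) hg
  have hcross : |c * flux g y y' s| ≤ |c| * (‖y' s‖ * ‖y s‖) := by
    rw [abs_mul]
    gcongr
  have hyoung := two_mul_abs_mul_le_of_sq_le ha hb hc (norm_nonneg (y' s)) (norm_nonneg (y s))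
  have hrate : 0 ≤ 2 * c * flux g y y' s +
      (g.re * ‖y' s‖ ^ 2 + (g * q s).re * ‖y s‖ ^ 2) := by
    linarith [(abs_le.1 hcross).1, hq.le_energy (y := y) (y' := y') hs]
  have := mul_nonneg (Real.exp_pos (2 * c * s)).le hrate
  simp only [id_eq, mul_one]
  linarith

lemma weighted_sq_norm_deriv_add_flux_mono {θ θ' : ℝ → ℝ} {m : ℝ} (h : IsSolution q y y')
    (hq : CoerciveOn q g a b (Ioo x z)) (hM : ∀ s ∈ Ioo x z, ‖q s‖ ≤ M) (hx : 0 ≤ x) (hxz : x ≤ z)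
    (hθ : Continuous θ) (hθ' : ∀ s, HasDerivAt θ (θ' s) s) (hθ_le : ∀ s ∈ Ioo x z, |θ s| ≤ 1)
    (hθ'_le : ∀ s, |θ' s| ≤ m) (hρ : 0 < ρ) (hK : 0 ≤ K) (hKa : m + M / ρ ≤ K * a)
    (hKb : M * ρ ≤ K * b) :
    θ x * ‖y' x‖ ^ 2 + K * flux g y y' x ≤ θ z * ‖y' z‖ ^ 2 + K * flux g y y' z := by
  refine image_le_of_hasDerivAt_nonneg
    (f := fun s ↦ θ s * ‖y' s‖ ^ 2 + K * flux g y y' s) hxz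
    (((hθ.continuousOn.mul (h.continuousOn'.norm.pow 2)).add
      (continuousOn_const.mul (h.continuousOn_flux g))).mono fun s hs ↦ hx.trans hs.1)
    (fun s hs ↦ ((hθ' s).mul (hasDerivAt_norm_sq (h.hasDerivAt' s (hx.trans_lt hs.1)))).add
      ((h.hasDerivAt_flux g (hx.trans_lt hs.1)).const_mul K)) fun s hs ↦ ?_
  have hM0 : 0 ≤ M := (norm_nonneg _).trans (hM s hs)
  have hweight : -(m * ‖y' s‖ ^ 2) ≤ θ' s * ‖y' s‖ ^ 2 := by
    rw [← neg_mul]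
    gcongr
    exact (abs_le.1 (hθ'_le s)).1
  have hcross : |θ s * (q s * y s * conj (y' s)).re| ≤ M * (‖y' s‖ * ‖y s‖) :=
    calc |θ s * (q s * y s * conj (y' s)).re| ≤ 1 * (‖q s * y s‖ * ‖y' s‖) := by
          rw [abs_mul]
          gcongr
          exacts [hθ_le s hs, abs_re_mul_conj_le _ _]
      _ = ‖q s‖ * (‖y' s‖ * ‖y s‖) := by rw [norm_mul]; ring
      _ ≤ M * (‖y' s‖ * ‖y s‖) := by gcongr; exact hM s hs
  have hyoung := mul_le_mul_of_nonneg_left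
    (two_mul_mul_le_mul_sq_add_sq_div hρ ‖y' s‖ ‖y s‖) hM0
  have hM_div : M / ρ * ‖y' s‖ ^ 2 = M * (‖y' s‖ ^ 2 / ρ) := by ring
  have henergy := mul_le_mul_of_nonneg_left (hq.le_energy (y := y) (y' := y') hs) hK
  have hdom_deriv := mul_le_mul_of_nonneg_right hKa (sq_nonneg ‖y' s‖)
  have hdom := mul_le_mul_of_nonneg_right hKb (sq_nonneg ‖y s‖)
  linarith [(abs_le.1 hcross).1]

lemma sq_norm_deriv_left_le (h : IsSolution q y y') (hq : CoerciveOn q g a b (Ioo x z))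
    (hM : ∀ s ∈ Ioo x z, ‖q s‖ ≤ M) (hx : 0 ≤ x) (hxz : x < z) (hρ : 0 < ρ) (hK : 0 ≤ K)
    (hKa : 1 / (z - x) + M / ρ ≤ K * a) (hKb : M * ρ ≤ K * b) :
    ‖y' x‖ ^ 2 ≤ K * (flux g y y' z - flux g y y' x) := by
  have hℓ : 0 < z - x := sub_pos.2 hxz
  have := h.weighted_sq_norm_deriv_add_flux_mono (θ := fun s ↦ (z - s) / (z - x))
    (θ' := fun _ ↦ -1 / (z - x)) (m := 1 / (z - x)) hq hM hx hxz.le (by fun_prop)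
    (fun s ↦ ((hasDerivAt_id s).const_sub z).div_const _)
    (fun s hs ↦ by
      rw [abs_of_nonneg (div_nonneg (by linarith [hs.2]) hℓ.le), div_le_one hℓ]
      linarith [hs.1])
    (fun _ ↦ by rw [abs_div, abs_neg, abs_one, abs_of_pos hℓ]) hρ hK hKa hKb
  simp only [div_self hℓ.ne', sub_self, zero_div, one_mul, zero_mul, zero_add] at this
  linarith

lemma sq_norm_left_le (h : IsSolution q y y') (hq : CoerciveOn q g a b (Ioo x (x + 1)))
    (hx : 0 ≤ x) (ha : 0 < a) (hb : 0 < b) :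
    ‖y x‖ ^ 2 ≤ (1 / a + 2 / b) * (flux g y y' (x + 1) - flux g y y' x) := by
  have := image_le_of_hasDerivAt_nonneg
    (f := fun s ↦ (x + 1 - s) * ‖y s‖ ^ 2 + (1 / a + 2 / b) * flux g y y' s)
    (x := x) (z := x + 1) (by linarith)
    ((((Continuous.continuousOn (by fun_prop)).mul (h.continuousOn.norm.pow 2)).add
      (continuousOn_const.mul (h.continuousOn_flux g))).mono fun s hs ↦ hx.trans hs.1)
    (fun s hs ↦ (((hasDerivAt_id s).const_sub (x + 1)).mul
      (hasDerivAt_norm_sq (h.hasDerivAt s (hx.trans_lt hs.1)))).add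
      ((h.hasDerivAt_flux g (hx.trans_lt hs.1)).const_mul _)) fun s hs ↦ by
      have hcross : |(x + 1 - s) * (y' s * conj (y s)).re| ≤ 1 * (‖y' s‖ * ‖y s‖) := by
        rw [abs_mul, abs_of_nonneg (by linarith [hs.2])]
        gcongr
        exacts [by linarith [hs.1], abs_re_mul_conj_le _ _]
      have henergy := mul_le_mul_of_nonneg_left (hq.le_energy (y := y) (y' := y') hs)
        (show 0 ≤ 1 / a + 2 / b by positivity)
      have hsplit : ‖y' s‖ ^ 2 + 2 * ‖y s‖ ^ 2 ≤
          (1 / a + 2 / b) * (a * ‖y' s‖ ^ 2 + b * ‖y s‖ ^ 2) := by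
        have : 0 ≤ 2 / b * a * ‖y' s‖ ^ 2 + 1 / a * b * ‖y s‖ ^ 2 := by positivity
        have : (1 / a + 2 / b) * (a * ‖y' s‖ ^ 2 + b * ‖y s‖ ^ 2) =
            ‖y' s‖ ^ 2 + 2 * ‖y s‖ ^ 2 +
              (2 / b * a * ‖y' s‖ ^ 2 + 1 / a * b * ‖y s‖ ^ 2) := by
          field_simp; ring
        linarith
      simp only [id_eq]
      linarith [(abs_le.1 hcross).1, sq_nonneg (‖y' s‖ - ‖y s‖)]
  simp only [add_sub_cancel_left, one_mul, sub_self, zero_mul, zero_add] at this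
  linarith

lemma mul_integral_norm_sq_le (h : IsSolution q y y') (hq : CoerciveOn q g 0 b (Ioo x z))
    (hx : 0 ≤ x) (hxz : x ≤ z) :
    b * ∫ s in x..z, ‖y s‖ ^ 2 ≤ flux g y y' z - flux g y y' x := by
  have hcont : ContinuousOn (fun s ↦ ‖y s‖ ^ 2) (Icc x z) :=
    (h.continuousOn.norm.pow 2).mono fun s hs ↦ hx.trans hs.1
  have hint : IntervalIntegrable (fun s ↦ ‖y s‖ ^ 2) volume x z :=
    hcont.intervalIntegrable_of_Icc hxz
  have hprim : ContinuousOn (fun s ↦ ∫ t in x..s, ‖y t‖ ^ 2) (Icc x z) := by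
    simpa only [uIcc_of_le hxz] using
      intervalIntegral.continuousOn_primitive_interval' hint left_mem_uIcc
  have hprim' : ∀ s ∈ Ioo x z, HasDerivAt (fun s ↦ ∫ t in x..s, ‖y t‖ ^ 2) (‖y s‖ ^ 2) s :=
    fun s hs ↦ intervalIntegral.integral_hasDerivAt_right
      (hint.mono_set (by
        rw [uIcc_of_le hxz, uIcc_of_le hs.1.le]; exact Icc_subset_Icc_right hs.2.le))
      ((hcont.stronglyMeasurableAtFilter_nhdsWithin measurableSet_Icc s).filter_mono
        (nhdsWithin_eq_nhds.2 (Icc_mem_nhds hs.1 hs.2)).ge)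
      (hcont.continuousAt (Icc_mem_nhds hs.1 hs.2))
  have := image_le_of_hasDerivAt_nonneg
    (f := fun s ↦ flux g y y' s - b * ∫ t in x..s, ‖y t‖ ^ 2) hxz
    (((h.continuousOn_flux g).mono fun s hs ↦ hx.trans hs.1).sub (continuousOn_const.mul hprim))
    (fun s hs ↦ (h.hasDerivAt_flux g (hx.trans_lt hs.1)).sub ((hprim' s hs).const_mul b))
    fun s hs ↦ by linarith [hq.le_energy (y := y) (y' := y') hs]
  simp only [intervalIntegral.integral_same, mul_zero, sub_zero] at this
  linarith

lemma flux_add_sq_nonpos (h : IsSolution q y y') (hd : Decays y y')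
    (hq : CoerciveOn q g a b (Ioi x)) (hx : 0 ≤ x) (ha : 0 ≤ a) (hb : 0 ≤ b)
    (hc : c ^ 2 ≤ a * b) : flux g y y' x + c * ‖y x‖ ^ 2 ≤ 0 := by
  have hlim : Tendsto (fun z ↦ flux g y y' z + c * ‖y z‖ ^ 2) atTop (𝓝 0) := by
    simpa using (hd.tendsto_flux g).add ((hd.1.norm.pow 2).const_mul c)
  refine ge_of_tendsto hlim ?_
  filter_upwards [eventually_ge_atTop x] with z hz
  exact h.flux_add_sq_mono (hq.mono fun s hs ↦ hs.1) hx hz ha hb hc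

lemma flux_nonpos (h : IsSolution q y y') (hd : Decays y y') (hq : CoerciveOn q g 0 0 (Ioi x))
    (hx : 0 ≤ x) : flux g y y' x ≤ 0 := by
  simpa using h.flux_add_sq_nonpos (c := 0) hd hq hx le_rfl le_rfl (by simp)

lemma integral_norm_sq_le_of_decays (h : IsSolution q y y') (hd : Decays y y')
    (hq : CoerciveOn q g 0 b (Ioi x)) (hx : 0 ≤ x) (hb : 0 < b) :
    IntegrableOn (fun s ↦ ‖y s‖ ^ 2) (Ioi x) ∧
      ∫ s in Ioi x, ‖y s‖ ^ 2 ≤ -flux g y y' x / b := by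
  have hbound : ∀ z, x ≤ z → ∫ s in x..z, ‖y s‖ ^ 2 ≤ -flux g y y' x / b := by
    intro z hz
    have hle := h.mul_integral_norm_sq_le (hq.mono fun s hs ↦ hs.1) hx hz
    have hneg := h.flux_nonpos hd ((hq.nonneg le_rfl hb.le).mono (Ioi_subset_Ioi hz)) (hx.trans hz)
    rw [le_div_iff₀ hb]
    linarith
  have hint : IntegrableOn (fun s ↦ ‖y s‖ ^ 2) (Ioi x) := by
    refine integrableOn_Ioi_of_intervalIntegral_norm_bounded (-flux g y y' x / b) x
      (b := id) (l := atTop) (fun z ↦ ?_) tendsto_id ?_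
    · exact (((h.continuousOn.norm.pow 2).mono fun s hs ↦ hx.trans hs.1).integrableOn_Icc).mono_set
        Ioc_subset_Icc_self
    · filter_upwards [eventually_ge_atTop x] with z hz
      simpa using hbound z hz
  refine ⟨hint, le_of_tendsto (intervalIntegral_tendsto_integral_Ioi x hint tendsto_id) ?_⟩
  filter_upwards [eventually_ge_atTop x] with z hz
  exact hbound z hz

lemma norm_deriv_le_of_decays {ℓ : ℝ} (h : IsSolution q y y') (hd : Decays y y')
    (hq : CoerciveOn q g a b (Ioi x)) (hM : ∀ s ∈ Ioo x (x + ℓ), ‖q s‖ ≤ M) (hx : 0 ≤ x)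
    (hℓ : 0 < ℓ) (hρ : 0 < ρ) (ha : 0 ≤ a) (hb : 0 ≤ b) (hK : 0 ≤ K)
    (hKa : 1 / ℓ + M / ρ ≤ K * a) (hKb : M * ρ ≤ K * b) :
    ‖y' x‖ ≤ K * ‖g‖ * ‖y x‖ := by
  have hleft := h.sq_norm_deriv_left_le (hq.mono fun s hs ↦ hs.1) hM hx (lt_add_of_pos_right x hℓ)
    hρ hK (by rwa [add_sub_cancel_left]) hKb
  have hneg := h.flux_nonpos hd
    ((hq.nonneg ha hb).mono (Ioi_subset_Ioi (le_add_of_nonneg_right hℓ.le))) (by linarith)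
  have hsq : ‖y' x‖ ^ 2 ≤ K * (‖g‖ * ‖y' x‖ * ‖y x‖) :=
    hleft.trans (by gcongr; linarith [(abs_le.1 (abs_flux_le g y y' x)).1])
  rcases (norm_nonneg (y' x)).eq_or_lt with h0 | h0
  · rw [← h0]; positivity
  · refine le_of_mul_le_mul_right ?_ h0
    linarith

end IsSolution

end

/-! ### Weyl's limit point construction -/

lemma tendsto_add_rpow_mul_exp_neg (d p : ℝ) {c : ℝ} (hc : 0 < c) :
    Tendsto (fun s : ℝ ↦ (d + s) ^ p * Real.exp (-c * s)) atTop (𝓝 0) := by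
  have hshift := ((tendsto_rpow_mul_exp_neg_mul_atTop_nhds_zero p c hc).comp
    (tendsto_atTop_add_const_left atTop d tendsto_id)).const_mul (Real.exp (c * d))
  rw [mul_zero] at hshift
  refine hshift.congr fun s ↦ ?_
  simp only [Function.comp_apply, id_eq, mul_left_comm, ← Real.exp_add]
  ring_nf

lemma tendsto_zero_of_tendsto_sq_norm {f : ℝ → ℂ} {l : Filter ℝ}
    (h : Tendsto (fun s ↦ ‖f s‖ ^ 2) l (𝓝 0)) : Tendsto f l (𝓝 0) := by
  rw [tendsto_zero_iff_norm_tendsto_zero]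
  simpa using h.sqrt

namespace IsSolution

variable {q y y' : ℝ → ℂ} {g : ℂ} {a b c x P p : ℝ}

lemma neg_flux_le (h : IsSolution q y y') (hq : CoerciveOn q g a b (Ioi x)) (hx : 0 ≤ x)
    (hg : ‖g‖ ≤ 1) (ha : 0 ≤ a) (hb : 0 ≤ b) (hc : c ^ 2 ≤ a * b) {s : ℝ} (hs : x ≤ s) :
    -flux g y y' s ≤ Real.exp (2 * c * x) * -flux g y y' x * Real.exp (-(2 * c) * s) := by
  have hmono := h.exp_mul_flux_mono (hq.mono fun s hs ↦ hs.1) hx hs hg ha hb hc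
  rw [neg_mul, Real.exp_neg, ← div_eq_mul_inv, le_div_iff₀ (Real.exp_pos _)]
  linarith

lemma tendsto_zero_of_flux_nonpos (h : IsSolution q y y') (hq : CoerciveOn q g a b (Ioi x))
    (hx : 0 ≤ x) (hg : ‖g‖ ≤ 1) (ha : 0 < a) (hb : 0 < b)
    (hflux : ∀ s, x ≤ s → flux g y y' s ≤ 0) : Tendsto y atTop (𝓝 0) := by
  have hexp := (tendsto_add_rpow_mul_exp_neg 0 0
    (show 0 < 2 * √(a * b) by positivity)).const_mul
      ((1 / a + 2 / b) * (Real.exp (2 * √(a * b) * x) * -flux g y y' x))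
  simp only [Real.rpow_zero, one_mul, mul_zero] at hexp
  refine tendsto_zero_of_tendsto_sq_norm
    (squeeze_zero' (Eventually.of_forall fun s ↦ by positivity) ?_ hexp)
  filter_upwards [eventually_ge_atTop x] with s hs
  refine (h.sq_norm_left_le (hq.mono fun t ht ↦ hs.trans_lt ht.1) (hx.trans hs) ha hb).trans ?_
  rw [mul_assoc]
  gcongr
  linarith [h.neg_flux_le hq hx hg ha.le hb.le (Real.sq_sqrt (by positivity)).le hs,
    hflux (s + 1) (by linarith)]

lemma deriv_tendsto_zero_of_flux_nonpos (h : IsSolution q y y') (hq : CoerciveOn q g a b (Ioi x))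
    (hx : 0 ≤ x) (hg : ‖g‖ ≤ 1) (ha : 0 < a) (hb : 0 < b) (hP : 0 ≤ P) (hp : 0 ≤ p)
    (hgrowth : ∀ s, x < s → ‖q s‖ ≤ P * (1 + s) ^ p)
    (hflux : ∀ s, x ≤ s → flux g y y' s ≤ 0) : Tendsto y' atTop (𝓝 0) := by
  set J := Real.exp (2 * √(a * b) * x) * -flux g y y' x
  have hc : 0 < 2 * √(a * b) := by positivity
  have hlim := ((tendsto_add_rpow_mul_exp_neg 2 p hc).const_mul (P * J * (1 / a + 1 / b))).add
    ((tendsto_add_rpow_mul_exp_neg 0 0 hc).const_mul (J / a))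
  simp only [Real.rpow_zero, one_mul, mul_zero, add_zero] at hlim
  refine tendsto_zero_of_tendsto_sq_norm
    (squeeze_zero' (Eventually.of_forall fun s ↦ by positivity) ?_ hlim)
  filter_upwards [eventually_ge_atTop x] with s hs
  have hs0 : 0 ≤ s := hx.trans hs
  set M := P * (2 + s) ^ p
  have : 0 ≤ M := by positivity
  have hM : ∀ t ∈ Ioo s (s + 1), ‖q t‖ ≤ M := fun t ht ↦
    (hgrowth t (hs.trans_lt ht.1)).trans <| by
      have := hs0.trans ht.1.le
      exact mul_le_mul_of_nonneg_left
        (Real.rpow_le_rpow (by positivity) (by linarith [ht.2]) hp) hP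
  have hleft := h.sq_norm_deriv_left_le (K := (1 + M) / a + M / b) (ρ := 1)
    (hq.mono fun t ht ↦ hs.trans_lt ht.1) hM hs0 (lt_add_one s) one_pos (by positivity)
    (by
      have : 0 ≤ M / b * a := by positivity
      rw [add_mul, div_mul_cancel₀ _ ha.ne', add_sub_cancel_left, div_one, div_one]
      linarith)
    (by
      have : 0 ≤ (1 + M) / a * b := by positivity
      rw [add_mul, div_mul_cancel₀ _ hb.ne']
      linarith)
  calc ‖y' s‖ ^ 2 ≤ ((1 + M) / a + M / b) * (flux g y y' (s + 1) - flux g y y' s) := hleft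
    _ ≤ ((1 + M) / a + M / b) * (J * Real.exp (-(2 * √(a * b)) * s)) := by
        gcongr
        linarith [h.neg_flux_le hq hx hg ha.le hb.le (Real.sq_sqrt (by positivity)).le hs,
          hflux (s + 1) (by linarith)]
    _ = P * J * (1 / a + 1 / b) * ((2 + s) ^ p * Real.exp (-(2 * √(a * b)) * s)) +
          J / a * Real.exp (-(2 * √(a * b)) * s) := by simp only [M]; ring

lemma decays_of_flux_nonpos (h : IsSolution q y y') (hq : CoerciveOn q g a b (Ioi x))
    (hx : 0 ≤ x) (hg : ‖g‖ ≤ 1) (ha : 0 < a) (hb : 0 < b) (hP : 0 ≤ P) (hp : 0 ≤ p)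
    (hgrowth : ∀ s, x < s → ‖q s‖ ≤ P * (1 + s) ^ p)
    (hflux : ∀ s, x ≤ s → flux g y y' s ≤ 0) : Decays y y' :=
  ⟨h.tendsto_zero_of_flux_nonpos hq hx hg ha hb hflux,
    h.deriv_tendsto_zero_of_flux_nonpos hq hx hg ha hb hP hp hgrowth hflux⟩

end IsSolution

/-- `v, u` is the fundamental system of `y'' = q y` normalised by `v = u' = 1` and `v' = u = 0`
at `s₀`. -/
structure IsFundamentalSystem (q v v' u u' : ℝ → ℂ) (s₀ : ℝ) : Prop where
  left : IsSolution q v v'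
  right : IsSolution q u u'
  left_eq_one : v s₀ = 1
  left_deriv_eq_zero : v' s₀ = 0
  right_eq_zero : u s₀ = 0
  right_deriv_eq_one : u' s₀ = 1

/-- The Weyl disc at `z` of a fundamental system `v, u`: the slopes `m` for which the flux of
`v + m u` at `z` is nonpositive. -/
def weylDisc (g : ℂ) (v v' u u' : ℝ → ℂ) (z : ℝ) : Set ℂ :=
  {m | flux g (fun s ↦ v s + m * u s) (fun s ↦ v' s + m * u' s) z ≤ 0}

section

variable {q v v' u u' : ℝ → ℂ} {g m n : ℂ} {a b c s₀ x z K M P p : ℝ}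

lemma isClosed_weylDisc (g : ℂ) (v v' u u' : ℝ → ℂ) (z : ℝ) :
    IsClosed (weylDisc g v v' u u' z) := by
  refine isClosed_le ?_ continuous_const
  unfold flux
  fun_prop

lemma neg_div_mem_weylDisc (g : ℂ) (v' u' : ℝ → ℂ) (hu : u z ≠ 0) :
    -(v z / u z) ∈ weylDisc g v v' u u' z := by
  have : v z + -(v z / u z) * u z = 0 := by rw [neg_mul, div_mul_cancel₀ _ hu, add_neg_cancel]
  simp only [weylDisc, flux, mem_ofPred_eq, this, map_zero, mul_zero, Complex.zero_re, le_refl]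

namespace IsFundamentalSystem

lemma isSolution_add_mul (h : IsFundamentalSystem q v v' u u' s₀) (m : ℂ) :
    IsSolution q (fun s ↦ v s + m * u s) (fun s ↦ v' s + m * u' s) :=
  h.left.add (h.right.smul m)

lemma weylDisc_subset (h : IsFundamentalSystem q v v' u u' s₀)
    (hq : CoerciveOn q g 0 0 (Ioo x z)) (hx : 0 ≤ x) (hxz : x ≤ z) :
    weylDisc g v v' u u' z ⊆ weylDisc g v v' u u' x :=
  fun m hm ↦ ((h.isSolution_add_mul m).flux_mono hq hx hxz).trans hm

lemma norm_le_of_mem_weylDisc (h : IsFundamentalSystem q v v' u u' s₀)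
    (hq : CoerciveOn q g a b (Ioi s₀)) (hM : ∀ s ∈ Ioo s₀ (s₀ + 1), ‖q s‖ ≤ M) (hs₀ : 0 ≤ s₀)
    (hg : ‖g‖ ≤ 1) (hK : 0 ≤ K) (hKa : 1 + M ≤ K * a) (hKb : M ≤ K * b)
    (hm : m ∈ weylDisc g v v' u u' (s₀ + 1)) : ‖m‖ ≤ K := by
  have hleft := (h.isSolution_add_mul m).sq_norm_deriv_left_le (ρ := 1)
    (hq.mono fun s hs ↦ hs.1) hM hs₀ (lt_add_one s₀) one_pos hK (by simpa using hKa)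
    (by simpa using hKb)
  have habs := (abs_le.1
    (abs_flux_le g (fun s ↦ v s + m * u s) (fun s ↦ v' s + m * u' s) s₀)).1
  simp only [h.left_eq_one, h.left_deriv_eq_zero, h.right_eq_zero, h.right_deriv_eq_one, mul_one,
    mul_zero, zero_add, add_zero, norm_one] at hleft habs
  have hgm : ‖g‖ * ‖m‖ ≤ 1 * ‖m‖ := by gcongr
  have hsq : ‖m‖ ^ 2 ≤ K * ‖m‖ := hleft.trans <| by
    gcongr
    linarith [show flux g (fun s ↦ v s + m * u s) (fun s ↦ v' s + m * u' s) (s₀ + 1) ≤ 0 from hm]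
  by_contra! hlt
  nlinarith

lemma le_flux_right (h : IsFundamentalSystem q v v' u u' s₀)
    (hq : CoerciveOn q g a b (Ioi s₀)) (hM : ∀ s ∈ Ioo s₀ (s₀ + 1), ‖q s‖ ≤ M) (hs₀ : 0 ≤ s₀)
    (hg : ‖g‖ ≤ 1) (ha : 0 ≤ a) (hb : 0 ≤ b) (hc : c ^ 2 ≤ a * b) (hK : 0 < K)
    (hKa : 1 + M ≤ K * a) (hKb : M ≤ K * b) {t : ℝ} (ht : 0 ≤ t) :
    (1 + 2 * c * t) / K ≤ flux g u u' (s₀ + 1 + t) := by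
  have hinit : 1 / K ≤ flux g u u' (s₀ + 1) := by
    have hleft := h.right.sq_norm_deriv_left_le (ρ := 1) (hq.mono fun s hs ↦ hs.1) hM hs₀
      (lt_add_one s₀) one_pos hK.le (by simpa using hKa) (by simpa using hKb)
    have hzero : flux g u u' s₀ = 0 := by simp [flux, h.right_eq_zero]
    rw [h.right_deriv_eq_one, hzero, norm_one, one_pow, sub_zero] at hleft
    rwa [div_le_iff₀' hK]
  have hmono := h.right.exp_mul_flux_mono (c := -c) (x := s₀ + 1) (z := s₀ + 1 + t)
    (hq.mono fun s hs ↦ (lt_add_one s₀).trans hs.1) (by linarith) (by linarith) hg ha hb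
    (by rwa [neg_sq])
  calc (1 + 2 * c * t) / K ≤ Real.exp (2 * c * t) * (1 / K) := by
        rw [mul_one_div]
        gcongr
        linarith [Real.add_one_le_exp (2 * c * t)]
    _ ≤ Real.exp (2 * c * t) * flux g u u' (s₀ + 1) := by gcongr
    _ = Real.exp (2 * c * (s₀ + 1 + t)) *
          (Real.exp (2 * -c * (s₀ + 1)) * flux g u u' (s₀ + 1)) := by
        rw [← mul_assoc, ← Real.exp_add]; ring_nf
    _ ≤ Real.exp (2 * c * (s₀ + 1 + t)) *
          (Real.exp (2 * -c * (s₀ + 1 + t)) * flux g u u' (s₀ + 1 + t)) := by gcongr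
    _ = flux g u u' (s₀ + 1 + t) := by
        rw [← mul_assoc, ← Real.exp_add]
        ring_nf
        simp

lemma sq_norm_sub_mul_flux_le (h : IsFundamentalSystem q v v' u u' s₀)
    (hq : CoerciveOn q g 0 0 (Ioi s₀)) (hs₀ : 0 ≤ s₀) (hg : ‖g‖ ≤ 1) (hz : s₀ ≤ z)
    (hmK : ‖m‖ ≤ K) (hnK : ‖n‖ ≤ K) (hm : m ∈ weylDisc g v v' u u' z)
    (hn : n ∈ weylDisc g v v' u u' z) : ‖m - n‖ ^ 2 * flux g u u' z ≤ 4 * K := by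
  have hpar := flux_parallelogram g (fun s ↦ v s + m * u s) (fun s ↦ v' s + m * u' s)
    (fun s ↦ v s + n * u s) (fun s ↦ v' s + n * u' s) z
  have hdiff : flux g (fun s ↦ v s + m * u s - (v s + n * u s))
      (fun s ↦ v' s + m * u' s - (v' s + n * u' s)) z = ‖m - n‖ ^ 2 * flux g u u' z := by
    rw [← flux_smul]
    congr 1 <;> (ext s; ring)
  have hmono := ((h.isSolution_add_mul m).add (h.isSolution_add_mul n)).flux_mono
    (hq.mono fun s hs ↦ hs.1) hs₀ hz
  have hinit := (abs_le.1 (abs_flux_le g (fun s ↦ v s + m * u s + (v s + n * u s))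
    (fun s ↦ v' s + m * u' s + (v' s + n * u' s)) s₀)).1
  simp only [h.left_eq_one, h.left_deriv_eq_zero, h.right_eq_zero, h.right_deriv_eq_one, mul_one,
    mul_zero, zero_add, add_zero, one_add_one_eq_two, RCLike.norm_ofNat] at hinit
  have hbound : ‖g‖ * ‖m + n‖ ≤ 1 * (K + K) := by
    gcongr
    exact (norm_add_le _ _).trans (add_le_add hmK hnK)
  simp only [weylDisc, mem_ofPred_eq] at hm hn
  linarith

lemma exists_forall_mem_weylDisc (h : IsFundamentalSystem q v v' u u' s₀)
    (hq : CoerciveOn q g 0 0 (Ioi s₀)) (hs₀ : 0 ≤ s₀) (hu : ∀ k : ℕ, u (s₀ + 1 + k) ≠ 0)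
    (hbdd : Bornology.IsBounded (weylDisc g v v' u u' (s₀ + 1 + (0 : ℕ)))) :
    ∃ m, ∀ k : ℕ, m ∈ weylDisc g v v' u u' (s₀ + 1 + k) := by
  simp only [← mem_iInter]
  refine IsCompact.nonempty_iInter_of_sequence_nonempty_isCompact_isClosed _ (fun k ↦ ?_)
    (fun k ↦ ⟨_, neg_div_mem_weylDisc g v' u' (hu k)⟩)
    (Metric.isCompact_of_isClosed_isBounded (isClosed_weylDisc ..) hbdd)
    fun k ↦ isClosed_weylDisc ..
  refine h.weylDisc_subset (hq.mono fun s hs ↦ ?_) (by positivity) (by simp)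
  exact (by linarith [(Nat.cast_nonneg k : (0 : ℝ) ≤ k)] : s₀ < s₀ + 1 + k).trans hs.1

/-- The Weyl discs shrink to a point: the slope of a decaying solution is the limit of the slopes
of the solutions vanishing at far away points, with an explicit rate. -/
lemma exists_decays (h : IsFundamentalSystem q v v' u u' s₀)
    (hq : CoerciveOn q g a b (Ioi s₀)) (hM : ∀ s ∈ Ioo s₀ (s₀ + 1), ‖q s‖ ≤ M) (hs₀ : 0 ≤ s₀)
    (hg : ‖g‖ ≤ 1) (ha : 0 < a) (hb : 0 < b) (hc0 : 0 ≤ c) (hc : c ^ 2 ≤ a * b) (hK : 0 < K)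
    (hKa : 1 + M ≤ K * a) (hKb : M ≤ K * b) (hP : 0 ≤ P) (hp : 0 ≤ p)
    (hgrowth : ∀ s, s₀ < s → ‖q s‖ ≤ P * (1 + s) ^ p) :
    ∃ m : ℂ, ‖m‖ ≤ K ∧ Decays (fun s ↦ v s + m * u s) (fun s ↦ v' s + m * u' s) ∧
      ∀ k : ℕ, u (s₀ + 1 + k) ≠ 0 ∧
        ‖-(v (s₀ + 1 + k) / u (s₀ + 1 + k)) - m‖ ≤ 2 * K / √(1 + 2 * c * k) := by
  have hq0 := hq.nonneg ha.le hb.le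
  have hpos : ∀ k : ℕ, 0 < 1 + 2 * c * (k : ℝ) := fun k ↦ by positivity
  have hflux := fun k : ℕ ↦
    h.le_flux_right hq hM hs₀ hg ha.le hb.le hc hK hKa hKb (Nat.cast_nonneg k)
  have hu : ∀ k : ℕ, u (s₀ + 1 + k) ≠ 0 := fun k h0 ↦ by
    have hk := (div_pos (hpos k) hK).trans_le (hflux k)
    simp [flux, h0] at hk
  set D : ℕ → Set ℂ := fun k ↦ weylDisc g v v' u u' (s₀ + 1 + k)
  have hD_norm : ∀ k, ∀ m ∈ D k, ‖m‖ ≤ K := fun k m hm ↦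
    h.norm_le_of_mem_weylDisc hq hM hs₀ hg hK.le hKa hKb
      (h.weylDisc_subset (hq0.mono fun s hs ↦ (lt_add_one s₀).trans hs.1) (by linarith)
        (by simp) hm)
  obtain ⟨m, hm⟩ := h.exists_forall_mem_weylDisc hq0 hs₀ hu
    (isBounded_iff_forall_norm_le.2 ⟨K, hD_norm 0⟩)
  refine ⟨m, hD_norm 0 m (hm 0), (h.isSolution_add_mul m).decays_of_flux_nonpos hq hs₀ hg ha hb
    hP hp hgrowth fun s hs ↦ ?_, fun k ↦ ⟨hu k, ?_⟩⟩
  · obtain ⟨k, hk⟩ := exists_nat_ge s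
    exact h.weylDisc_subset (hq0.mono fun t ht ↦ hs.trans_lt ht.1) (hs₀.trans hs)
      (by linarith) (hm k)
  · set n := -(v (s₀ + 1 + k) / u (s₀ + 1 + k))
    have hn : n ∈ D k := neg_div_mem_weylDisc g v' u' (hu k)
    have hdisc : ‖n - m‖ ^ 2 * ((1 + 2 * c * k) / K) ≤ 4 * K :=
      (mul_le_mul_of_nonneg_left (hflux k) (sq_nonneg _)).trans
        (h.sq_norm_sub_mul_flux_le hq0 hs₀ hg (by linarith [(Nat.cast_nonneg k : (0 : ℝ) ≤ k)])
          (hD_norm k n hn) (hD_norm k m (hm k)) hn (hm k))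
    rw [← mul_div_assoc, div_le_iff₀ hK] at hdisc
    rw [le_div_iff₀ (Real.sqrt_pos.2 (hpos k))]
    refine le_of_sq_le_sq ?_ (by positivity)
    rw [mul_pow, Real.sq_sqrt (hpos k).le]
    linarith

end IsFundamentalSystem

end

/-! ### Frobenius series at the origin -/

/-- Exponents of the Frobenius series at `0` of the solution `z ^ σ + ⋯` of
`y'' = (i z ^ α - λ) y`. -/
noncomputable def frobExp (α : ℝ) (σ j k : ℕ) : ℝ := σ + (2 + α) * j + 2 * k

/-- Moduli of the coefficients of the Frobenius series: the coefficient of `z ^ frobExp α σ j k` is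
`I ^ j * (-λ) ^ k * frobCoeff α σ j k`. -/
noncomputable def frobCoeff (α : ℝ) (σ : ℕ) : ℕ → ℕ → ℝ
  | 0, 0 => 1
  | j + 1, 0 => frobCoeff α σ j 0 / (frobExp α σ (j + 1) 0 * (frobExp α σ (j + 1) 0 - 1))
  | 0, k + 1 => frobCoeff α σ 0 k / (frobExp α σ 0 (k + 1) * (frobExp α σ 0 (k + 1) - 1))
  | j + 1, k + 1 => (frobCoeff α σ j (k + 1) + frobCoeff α σ (j + 1) k) /
      (frobExp α σ (j + 1) (k + 1) * (frobExp α σ (j + 1) (k + 1) - 1))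
  termination_by j k => j + k

section FrobeniusCoefficients

variable {α : ℝ} {σ : ℕ}

lemma two_mul_le_frobExp (hα : 0 ≤ α) (j k : ℕ) : 2 * ((j : ℝ) + k) ≤ frobExp α σ j k := by
  have : (0 : ℝ) ≤ σ := σ.cast_nonneg
  have : 0 ≤ α * j := by positivity
  unfold frobExp
  linarith

lemma frobExp_le (hα : 0 ≤ α) (hσ : σ ≤ 1) (j k : ℕ) :
    frobExp α σ j k ≤ (2 + α) * 2 ^ j * 2 ^ k := by
  have hσ' : (σ : ℝ) ≤ 1 := by exact_mod_cast hσ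
  have bernoulli : 1 + ((j + k : ℕ) : ℝ) ≤ 2 ^ (j + k) := by
    have := one_add_mul_le_pow (a := (1 : ℝ)) (by norm_num) (j + k)
    norm_num at this ⊢
    linarith
  have hk : 0 ≤ α * k := by positivity
  calc frobExp α σ j k ≤ (2 + α) * (1 + ((j + k : ℕ) : ℝ)) := by
        unfold frobExp; push_cast; linarith
    _ ≤ (2 + α) * 2 ^ (j + k) := by gcongr
    _ = (2 + α) * 2 ^ j * 2 ^ k := by rw [pow_add, mul_assoc]

lemma add_le_frobExp_mul_sub_one (hα : 0 ≤ α) {j k : ℕ} (h : 0 < j + k) :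
    (j : ℝ) + k ≤ frobExp α σ j k * (frobExp α σ j k - 1) := by
  have hexp := two_mul_le_frobExp (σ := σ) hα j k
  have hjk : (1 : ℝ) ≤ (j : ℝ) + k := by exact_mod_cast h
  nlinarith

lemma frobExp_mul_sub_one_pos (hα : 0 ≤ α) {j k : ℕ} (h : 0 < j + k) :
    0 < frobExp α σ j k * (frobExp α σ j k - 1) :=
  lt_of_lt_of_le (by exact_mod_cast h) (add_le_frobExp_mul_sub_one hα h)

lemma div_frobExp_mem_Icc (hα : 0 ≤ α) {j k : ℕ} (h : 0 < j + k) {c : ℝ}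
    (hc : c ∈ Icc 0 (1 / (j.factorial * k.factorial) * ((j : ℝ) + k))) :
    c / (frobExp α σ j k * (frobExp α σ j k - 1)) ∈
      Icc 0 (1 / (j.factorial * k.factorial : ℝ)) := by
  have hpos := frobExp_mul_sub_one_pos (σ := σ) hα h
  refine ⟨div_nonneg hc.1 hpos.le, (div_le_iff₀ hpos).2 (hc.2.trans ?_)⟩
  gcongr
  exact add_le_frobExp_mul_sub_one hα h

lemma frobCoeff_mem_Icc (hα : 0 ≤ α) (j k : ℕ) :
    frobCoeff α σ j k ∈ Icc 0 (1 / (j.factorial * k.factorial : ℝ)) := by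
  fun_induction frobCoeff α σ j k with
  | case1 => simp
  | case2 j ih =>
    refine div_frobExp_mem_Icc hα (by omega) ⟨ih.1, ih.2.trans_eq ?_⟩
    rw [Nat.factorial_succ]; push_cast; field_simp; simp
  | case3 k ih =>
    refine div_frobExp_mem_Icc hα (by omega) ⟨ih.1, ih.2.trans_eq ?_⟩
    rw [Nat.factorial_succ]; push_cast; field_simp; simp
  | case4 j k ih₁ ih₂ =>
    refine div_frobExp_mem_Icc hα (by omega)
      ⟨add_nonneg ih₁.1 ih₂.1, (add_le_add ih₁.2 ih₂.2).trans_eq ?_⟩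
    rw [Nat.factorial_succ, Nat.factorial_succ]; push_cast; field_simp

end FrobeniusCoefficients

/-- Terms of the `d`-th `w`-derivative, `w = log z`, of the Frobenius series with leading
term `z ^ σ`. -/
noncomputable def frobTerm (α : ℝ) (σ d : ℕ) (lam w : ℂ) (p : ℕ × ℕ) : ℂ :=
  ((frobCoeff α σ p.1 p.2 * frobExp α σ p.1 p.2 ^ d : ℝ) : ℂ) *
    (Complex.I ^ p.1 * (-lam) ^ p.2 * Complex.exp (frobExp α σ p.1 p.2 * w))

/-- A summable majorant of `frobTerm α σ d lam w` for `‖lam‖ ≤ r` and `w.re ≤ x`. -/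
noncomputable def frobMajorant (α : ℝ) (σ d : ℕ) (r x : ℝ) (p : ℕ × ℕ) : ℝ :=
  (2 + α) ^ d * Real.exp (σ * x) * ((2 ^ d * Real.exp ((2 + α) * x)) ^ p.1 / p.1.factorial *
    ((2 ^ d * (r * Real.exp (2 * x))) ^ p.2 / p.2.factorial))

/-- The `d`-th `w`-derivative of the Frobenius solution with leading term `z ^ σ`, in the
logarithmic variable `w = log z`, where it is entire. -/
noncomputable def frob (α : ℝ) (σ d : ℕ) (lam w : ℂ) : ℂ := ∑' p, frobTerm α σ d lam w p

section FrobeniusSeries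

variable {α : ℝ} {σ : ℕ}

lemma norm_exp_frobExp_mul (α : ℝ) (σ j k : ℕ) (w : ℂ) :
    ‖Complex.exp (frobExp α σ j k * w)‖ =
      Real.exp (σ * w.re) * Real.exp ((2 + α) * w.re) ^ j * Real.exp (2 * w.re) ^ k := by
  rw [Complex.norm_exp, Complex.re_ofReal_mul, ← Real.exp_nat_mul, ← Real.exp_nat_mul,
    ← Real.exp_add, ← Real.exp_add]
  unfold frobExp
  congr 1
  ring

lemma norm_frobTerm_le (hα : 0 ≤ α) (hσ : σ ≤ 1) {d : ℕ} {lam w : ℂ} {r x : ℝ} (hr : ‖lam‖ ≤ r)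
    (hx : w.re ≤ x) (p : ℕ × ℕ) : ‖frobTerm α σ d lam w p‖ ≤ frobMajorant α σ d r x p := by
  obtain ⟨j, k⟩ := p
  obtain ⟨hcoeff, hcoeff'⟩ := frobCoeff_mem_Icc (σ := σ) hα j k
  have hexp : 0 ≤ frobExp α σ j k := le_trans (by positivity) (two_mul_le_frobExp hα j k)
  have hr0 : 0 ≤ r := (norm_nonneg _).trans hr
  simp only [frobTerm, frobMajorant, norm_mul, norm_pow, Complex.norm_I, norm_neg, one_pow,
    one_mul, Complex.norm_real, Real.norm_eq_abs, abs_of_nonneg hcoeff, abs_of_nonneg hexp,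
    norm_exp_frobExp_mul]
  calc frobCoeff α σ j k * frobExp α σ j k ^ d *
      (‖lam‖ ^ k * (Real.exp (σ * w.re) * Real.exp ((2 + α) * w.re) ^ j * Real.exp (2 * w.re) ^ k))
      ≤ 1 / (j.factorial * k.factorial) * ((2 + α) * 2 ^ j * 2 ^ k) ^ d *
      (r ^ k * (Real.exp (σ * x) * Real.exp ((2 + α) * x) ^ j * Real.exp (2 * x) ^ k)) := by
        gcongr
        exact frobExp_le hα hσ j k
    _ = _ := by
        rw [mul_pow, mul_pow, mul_pow, mul_pow, mul_pow, ← pow_mul, ← pow_mul, ← pow_mul, ← pow_mul,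
          mul_comm j, mul_comm k]
        field_simp

lemma hasSum_frobMajorant (α : ℝ) (σ d : ℕ) {r : ℝ} (hr : 0 ≤ r) (x : ℝ) :
    HasSum (frobMajorant α σ d r x) ((2 + α) ^ d * Real.exp (σ * x) *
      Real.exp (2 ^ d * (Real.exp ((2 + α) * x) + r * Real.exp (2 * x)))) := by
  have hasSum_exp (t : ℝ) : HasSum (fun n : ℕ ↦ t ^ n / n.factorial) (Real.exp t) := by
    rw [Real.exp_eq_exp_ℝ]; exact NormedSpace.expSeries_div_hasSum_exp t
  have nonneg (t : ℝ) (ht : 0 ≤ t) : (0 : ℕ → ℝ) ≤ fun n : ℕ ↦ t ^ n / n.factorial :=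
    fun n ↦ div_nonneg (pow_nonneg ht n) (Nat.cast_nonneg _)
  have hsummable := (hasSum_exp _).summable.mul_of_nonneg (hasSum_exp _).summable
    (nonneg (2 ^ d * Real.exp ((2 + α) * x)) (by positivity))
    (nonneg (2 ^ d * (r * Real.exp (2 * x))) (by positivity))
  rw [mul_add, Real.exp_add]
  exact ((hasSum_exp _).mul (hasSum_exp _) hsummable).mul_left ((2 + α) ^ d * Real.exp (σ * x))

lemma summable_frobTerm (hα : 0 ≤ α) (hσ : σ ≤ 1) (d : ℕ) (lam w : ℂ) :
    Summable (frobTerm α σ d lam w) :=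
  Summable.of_norm_bounded (hasSum_frobMajorant α σ d (norm_nonneg lam) w.re).summable
    (norm_frobTerm_le hα hσ le_rfl le_rfl)

lemma norm_frob_le (hα : 0 ≤ α) (hσ : σ ≤ 1) (d : ℕ) (lam w : ℂ) :
    ‖frob α σ d lam w‖ ≤ (2 + α) ^ d * Real.exp (σ * w.re) *
      Real.exp (2 ^ d * (Real.exp ((2 + α) * w.re) + ‖lam‖ * Real.exp (2 * w.re))) :=
  tsum_of_norm_bounded (hasSum_frobMajorant α σ d (norm_nonneg lam) w.re)
    (norm_frobTerm_le hα hσ le_rfl le_rfl)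

lemma norm_frob_sub_le (hα : 0 ≤ α) (hσ : σ ≤ 1) (d : ℕ) (lam w : ℂ) :
    ‖frob α σ d lam w - (σ : ℂ) ^ d * Complex.exp (σ * w)‖ ≤
      (2 + α) ^ d * Real.exp (σ * w.re) *
        (Real.exp (2 ^ d * (Real.exp ((2 + α) * w.re) + ‖lam‖ * Real.exp (2 * w.re))) - 1) := by
  have leadingTerm : frobTerm α σ d lam w (0, 0) = (σ : ℂ) ^ d * Complex.exp (σ * w) := by
    simp [frobTerm, frobCoeff, frobExp]
  have leadingMajorant :
      frobMajorant α σ d ‖lam‖ w.re (0, 0) = (2 + α) ^ d * Real.exp (σ * w.re) := by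
    simp [frobMajorant]
  have hasSum_tail := (summable_frobTerm hα hσ d lam w).hasSum.sub
    (hasSum_ite_eq (0, 0) (frobTerm α σ d lam w (0, 0)))
  have hasSum_majorant := (hasSum_frobMajorant α σ d (norm_nonneg lam) w.re).sub
    (hasSum_ite_eq (0, 0) (frobMajorant α σ d ‖lam‖ w.re (0, 0)))
  rw [leadingMajorant, ← mul_sub_one] at hasSum_majorant
  rw [← leadingTerm, frob, ← hasSum_tail.tsum_eq]
  refine tsum_of_norm_bounded hasSum_majorant fun p ↦ ?_
  rcases eq_or_ne p (0, 0) with rfl | hp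
  · simp [leadingMajorant]
  · simpa only [hp, if_false, sub_zero] using norm_frobTerm_le hα hσ le_rfl le_rfl p

lemma hasDerivAt_frobTerm (α : ℝ) (σ d : ℕ) (lam w : ℂ) (p : ℕ × ℕ) :
    HasDerivAt (fun w ↦ frobTerm α σ d lam w p) (frobTerm α σ (d + 1) lam w p) w := by
  unfold frobTerm
  have hexp := ((hasDerivAt_id w).const_mul (frobExp α σ p.1 p.2 : ℂ)).cexp
  refine ((hexp.const_mul (Complex.I ^ p.1 * (-lam) ^ p.2)).const_mul
    (((frobCoeff α σ p.1 p.2 * frobExp α σ p.1 p.2 ^ d : ℝ) : ℂ))).congr_deriv ?_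
  simp only [id, pow_succ]
  push_cast
  ring

lemma hasDerivAt_frob (hα : 0 ≤ α) (hσ : σ ≤ 1) (d : ℕ) (lam w : ℂ) :
    HasDerivAt (frob α σ d lam) (frob α σ (d + 1) lam w) w := by
  set U := {v : ℂ | v.re < w.re + 1}
  have hU : IsOpen U := isOpen_lt Complex.continuous_re continuous_const
  have hw : w ∈ U := by simp [U]
  have hsum := (hasSum_frobMajorant α σ d (norm_nonneg lam) (w.re + 1)).summable
  have hdiff (p : ℕ × ℕ) : DifferentiableOn ℂ (fun v ↦ frobTerm α σ d lam v p) U :=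
    fun v _ ↦ (hasDerivAt_frobTerm α σ d lam v p).differentiableAt.differentiableWithinAt
  have hle (p : ℕ × ℕ) (v : ℂ) (hv : v ∈ U) :
      ‖frobTerm α σ d lam v p‖ ≤ frobMajorant α σ d ‖lam‖ (w.re + 1) p :=
    norm_frobTerm_le hα hσ le_rfl (le_of_lt hv) p
  have hderiv : deriv (frob α σ d lam) w = frob α σ (d + 1) lam w := by
    refine (Complex.hasSum_deriv_of_summable_norm hsum hdiff hU hle hw).tsum_eq.symm.trans ?_
    exact tsum_congr fun p ↦ (hasDerivAt_frobTerm α σ d lam w p).deriv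
  rw [← hderiv]
  exact ((Complex.differentiableOn_tsum_of_summable_norm hsum hdiff hU hle).differentiableAt
    (hU.mem_nhds hw)).hasDerivAt

lemma differentiable_frob_parameter (hα : 0 ≤ α) (hσ : σ ≤ 1) (d : ℕ) (w : ℂ) :
    Differentiable ℂ (fun lam ↦ frob α σ d lam w) := by
  intro lam
  have hlam : lam ∈ Metric.ball (0 : ℂ) (‖lam‖ + 1) := by simp
  refine (Complex.differentiableOn_tsum_of_summable_norm
    (hasSum_frobMajorant α σ d (r := ‖lam‖ + 1) (by positivity) w.re).summable (fun p ↦ ?_)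
    Metric.isOpen_ball (fun p v hv ↦ norm_frobTerm_le hα hσ
      (le_of_lt (by simpa using hv)) le_rfl p)).differentiableAt (Metric.isOpen_ball.mem_nhds hlam)
  unfold frobTerm
  fun_prop

lemma exp_frobExp_succ_left (α : ℝ) (σ j k : ℕ) (w : ℂ) :
    Complex.exp (frobExp α σ (j + 1) k * w) =
      Complex.exp ((2 + α) * w) * Complex.exp (frobExp α σ j k * w) := by
  rw [← Complex.exp_add]; unfold frobExp; push_cast; ring_nf

lemma exp_frobExp_succ_right (α : ℝ) (σ j k : ℕ) (w : ℂ) :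
    Complex.exp (frobExp α σ j (k + 1) * w) =
      Complex.exp (2 * w) * Complex.exp (frobExp α σ j k * w) := by
  rw [← Complex.exp_add]; unfold frobExp; push_cast; ring_nf

lemma frobExp_zero_mul_sub_one (hσ : σ ≤ 1) :
    frobExp α σ 0 0 * (frobExp α σ 0 0 - 1) = 0 := by
  unfold frobExp
  interval_cases σ <;> simp

lemma frobTerm_two_sub_frobTerm_one_eq_mul (lam w : ℂ) (j k : ℕ) :
    frobTerm α σ 2 lam w (j, k) - frobTerm α σ 1 lam w (j, k) =
      ((frobCoeff α σ j k * (frobExp α σ j k * (frobExp α σ j k - 1)) : ℝ) : ℂ) *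
        (Complex.I ^ j * (-lam) ^ k * Complex.exp (frobExp α σ j k * w)) := by
  unfold frobTerm
  push_cast
  ring

lemma frobTerm_two_sub_frobTerm_one (hα : 0 ≤ α) (hσ : σ ≤ 1) (lam w : ℂ) (p : ℕ × ℕ) :
    frobTerm α σ 2 lam w p - frobTerm α σ 1 lam w p =
      Function.extend (Prod.map Nat.succ id)
        (fun p ↦ Complex.I * Complex.exp ((2 + α) * w) * frobTerm α σ 0 lam w p) 0 p +
      Function.extend (Prod.map id Nat.succ)
        (fun p ↦ -lam * Complex.exp (2 * w) * frobTerm α σ 0 lam w p) 0 p := by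
  obtain ⟨j, k⟩ := p
  have hinj₁ := Nat.succ_injective.prodMap (Function.injective_id (α := ℕ))
  have hinj₂ := (Function.injective_id (α := ℕ)).prodMap Nat.succ_injective
  have extend₁ (f : ℕ × ℕ → ℂ) (j k : ℕ) :
      Function.extend (Prod.map Nat.succ id) f 0 (j + 1, k) = f (j, k) :=
    hinj₁.extend_apply f 0 (j, k)
  have extend₂ (f : ℕ × ℕ → ℂ) (j k : ℕ) :
      Function.extend (Prod.map id Nat.succ) f 0 (j, k + 1) = f (j, k) :=
    hinj₂.extend_apply f 0 (j, k)
  have extend₁_zero (f : ℕ × ℕ → ℂ) (k : ℕ) :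
      Function.extend (Prod.map Nat.succ id) f 0 (0, k) = 0 :=
    Function.extend_apply' _ _ _ (by simp)
  have extend₂_zero (f : ℕ × ℕ → ℂ) (j : ℕ) :
      Function.extend (Prod.map id Nat.succ) f 0 (j, 0) = 0 :=
    Function.extend_apply' _ _ _ (by simp)
  have cancel (c : ℝ) {j k : ℕ} (h : 0 < j + k) :=
    div_mul_cancel₀ c (frobExp_mul_sub_one_pos (σ := σ) hα h).ne'
  rw [frobTerm_two_sub_frobTerm_one_eq_mul]
  rcases j with _ | j <;> rcases k with _ | k
  · simp [frobExp_zero_mul_sub_one hσ]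
  · rw [frobCoeff, cancel _ (by omega), extend₁_zero, extend₂, exp_frobExp_succ_right, frobTerm]
    push_cast
    ring
  · rw [frobCoeff, cancel _ (by omega), extend₁, extend₂_zero, exp_frobExp_succ_left, frobTerm]
    push_cast
    ring
  · rw [frobCoeff, cancel _ (by omega), extend₁, extend₂, Complex.ofReal_add, add_mul, frobTerm,
      frobTerm]
    congr 1
    · rw [exp_frobExp_succ_left]; push_cast; ring
    · rw [exp_frobExp_succ_right]; push_cast; ring

lemma frob_two_sub_frob_one (hα : 0 ≤ α) (hσ : σ ≤ 1) (lam w : ℂ) :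
    frob α σ 2 lam w - frob α σ 1 lam w =
      (Complex.I * Complex.exp ((2 + α) * w) - lam * Complex.exp (2 * w)) * frob α σ 0 lam w := by
  have hasSum_frob (d : ℕ) : HasSum (frobTerm α σ d lam w) (frob α σ d lam w) :=
    (summable_frobTerm hα hσ d lam w).hasSum
  have hleft := (hasSum_frob 2).sub (hasSum_frob 1)
  have hright := ((hasSum_extend_zero (Nat.succ_injective.prodMap Function.injective_id)).2
    ((hasSum_frob 0).mul_left (Complex.I * Complex.exp ((2 + α) * w)))).add
    ((hasSum_extend_zero (Function.injective_id.prodMap Nat.succ_injective)).2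
    ((hasSum_frob 0).mul_left (-lam * Complex.exp (2 * w))))
  simp only [← frobTerm_two_sub_frobTerm_one hα hσ] at hright
  rw [hleft.unique hright]
  ring

end FrobeniusSeries

/-! ### Solutions on rays -/

/-- The unit complex number `e^{-iχ}`; rays are turned clockwise, into the sector where the
potential makes solutions decay. -/
noncomputable def unitDir (χ : ℝ) : ℂ := Complex.exp (-χ * Complex.I)

/-- The logarithm `log s - iφ` of the point `s e^{-iφ}` of a ray. -/
noncomputable def logRay (φ s : ℝ) : ℂ := Real.log s - φ * Complex.I

/-- The potential of `y'' = (i z ^ α - λ) y` on the ray `z = s e^{-iφ}`, that is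
`e^{-2iφ} (i z ^ α - λ)`. -/
noncomputable def rayPotential (α φ : ℝ) (lam : ℂ) (s : ℝ) : ℂ :=
  Complex.I * unitDir ((2 + α) * φ) * (s ^ α : ℝ) - lam * unitDir (2 * φ)

/-- The Frobenius solution with leading term `z ^ σ`, `σ ∈ {0, 1}`, on the ray `z = s e^{-iφ}`. -/
noncomputable def rayBasis (α : ℝ) (σ : ℕ) (φ : ℝ) (lam : ℂ) (s : ℝ) : ℂ :=
  if 0 < s then frob α σ 0 lam (logRay φ s) else 0 ^ σ

/-- The `s`-derivative of `rayBasis`. -/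
noncomputable def rayBasis' (α : ℝ) (σ : ℕ) (φ : ℝ) (lam : ℂ) (s : ℝ) : ℂ :=
  if 0 < s then frob α σ 1 lam (logRay φ s) / s else σ * unitDir φ

/-- The solution with `y = A` and `dy/dz = B` at `z = 0`, on the ray `z = s e^{-iφ}`. -/
noncomputable def raySol (α φ : ℝ) (lam A B : ℂ) (s : ℝ) : ℂ :=
  A * rayBasis α 0 φ lam s + B * rayBasis α 1 φ lam s

/-- The `s`-derivative of `raySol`. -/
noncomputable def raySol' (α φ : ℝ) (lam A B : ℂ) (s : ℝ) : ℂ :=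
  A * rayBasis' α 0 φ lam s + B * rayBasis' α 1 φ lam s

@[simp]
lemma unitDir_zero : unitDir 0 = 1 := by simp [unitDir]

lemma norm_unitDir (χ : ℝ) : ‖unitDir χ‖ = 1 := by
  rw [unitDir, ← Complex.ofReal_neg, Complex.norm_exp_ofReal_mul_I]

lemma unitDir_re (χ : ℝ) : (unitDir χ).re = Real.cos χ := by
  rw [unitDir, ← Complex.ofReal_neg, Complex.exp_ofReal_mul_I_re, Real.cos_neg]

lemma unitDir_im (χ : ℝ) : (unitDir χ).im = -Real.sin χ := by
  rw [unitDir, ← Complex.ofReal_neg, Complex.exp_ofReal_mul_I_im, Real.sin_neg]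

lemma unitDir_add (χ ψ : ℝ) : unitDir (χ + ψ) = unitDir χ * unitDir ψ := by
  simp only [unitDir, ← Complex.exp_add]
  push_cast
  ring_nf

lemma re_mul_unitDir_le (w : ℂ) (χ : ℝ) : (w * unitDir χ).re ≤ ‖w‖ := by
  simpa only [norm_mul, norm_unitDir, mul_one] using Complex.re_le_norm (w * unitDir χ)

section Rays

variable {α : ℝ} {σ : ℕ}

lemma logRay_re (φ s : ℝ) : (logRay φ s).re = Real.log s := by simp [logRay]

lemma hasDerivAt_logRay (φ : ℝ) {s : ℝ} (hs : 0 < s) :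
    HasDerivAt (logRay φ) ((s : ℂ)⁻¹) s :=
  ((Real.hasDerivAt_log hs.ne').ofReal_comp.sub_const (φ * Complex.I)).congr_deriv (by simp)

lemma hasDerivAt_logRay_angle (φ s : ℝ) :
    HasDerivAt (fun φ ↦ logRay φ s) (-Complex.I) φ :=
  (((hasDerivAt_id φ).ofReal_comp.mul_const Complex.I).const_sub (Real.log s : ℂ)).congr_deriv
    (by simp)

lemma exp_mul_logRay (e φ : ℝ) {s : ℝ} (hs : 0 < s) :
    Complex.exp (e * logRay φ s) = (s ^ e : ℝ) * unitDir (e * φ) := by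
  rw [Real.rpow_def_of_pos hs, unitDir, Complex.ofReal_exp, ← Complex.exp_add, logRay]
  push_cast
  ring_nf

lemma frob_two_sub_frob_one_logRay (hα : 0 ≤ α) (hσ : σ ≤ 1) (φ : ℝ) (lam : ℂ) {s : ℝ}
    (hs : 0 < s) : frob α σ 2 lam (logRay φ s) - frob α σ 1 lam (logRay φ s) =
      s ^ 2 * rayPotential α φ lam s * frob α σ 0 lam (logRay φ s) := by
  have hexpα := exp_mul_logRay (2 + α) φ hs
  have hexp2 := exp_mul_logRay 2 φ hs
  rw [Real.rpow_add hs, Real.rpow_two] at hexpα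
  rw [Real.rpow_two] at hexp2
  push_cast at hexpα hexp2
  rw [frob_two_sub_frob_one hα hσ, hexpα, hexp2, rayPotential]
  ring

lemma hasDerivAt_rayBasis (hα : 0 ≤ α) (hσ : σ ≤ 1) (φ : ℝ) (lam : ℂ) {s : ℝ} (hs : 0 < s) :
    HasDerivAt (rayBasis α σ φ lam) (rayBasis' α σ φ lam s) s := by
  have hfrob := (hasDerivAt_frob hα hσ 0 lam (logRay φ s)).comp_of_eq s (hasDerivAt_logRay φ hs) rfl
  have heq : rayBasis α σ φ lam =ᶠ[𝓝 s] fun s ↦ frob α σ 0 lam (logRay φ s) := by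
    filter_upwards [lt_mem_nhds hs] with t ht using if_pos ht
  refine (hfrob.congr_of_eventuallyEq heq).congr_deriv ?_
  simp [rayBasis', hs, div_eq_mul_inv]

lemma hasDerivAt_rayBasis' (hα : 0 ≤ α) (hσ : σ ≤ 1) (φ : ℝ) (lam : ℂ) {s : ℝ} (hs : 0 < s) :
    HasDerivAt (rayBasis' α σ φ lam) (rayPotential α φ lam s * rayBasis α σ φ lam s) s := by
  have hfrob := (hasDerivAt_frob hα hσ 1 lam (logRay φ s)).comp_of_eq s (hasDerivAt_logRay φ hs) rfl
  have hs' : (s : ℂ) ≠ 0 := by exact_mod_cast hs.ne'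
  have heq : rayBasis' α σ φ lam =ᶠ[𝓝 s] fun s ↦ frob α σ 1 lam (logRay φ s) / s := by
    filter_upwards [lt_mem_nhds hs] with t ht using if_pos ht
  refine ((hfrob.div (hasDerivAt_id s).ofReal_comp hs').congr_of_eventuallyEq heq).congr_deriv ?_
  simp only [rayBasis, hs, if_true, Function.comp, id, one_add_one_eq_two]
  rw [eq_add_of_sub_eq (frob_two_sub_frob_one_logRay hα hσ φ lam hs)]
  field_simp
  simp

/-- The relative error of the leading term in `norm_frob_logRay_sub_le`. -/
noncomputable def rayError (α : ℝ) (d : ℕ) (lam : ℂ) (s : ℝ) : ℝ :=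
  (2 + α) ^ d * (Real.exp (2 ^ d * (s ^ 2 * (s ^ α + ‖lam‖))) - 1)

lemma exp_logRay_growth {s : ℝ} (hs : 0 < s) (α r : ℝ) :
    Real.exp ((2 + α) * Real.log s) + r * Real.exp (2 * Real.log s) = s ^ 2 * (s ^ α + r) := by
  rw [mul_comm (2 + α), mul_comm 2, ← Real.rpow_def_of_pos hs, ← Real.rpow_def_of_pos hs,
    Real.rpow_add hs, Real.rpow_two]
  ring

lemma norm_frob_logRay_sub_le (hα : 0 ≤ α) (hσ : σ ≤ 1) (d : ℕ) (φ : ℝ) (lam : ℂ) {s : ℝ}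
    (hs : 0 < s) : ‖frob α σ d lam (logRay φ s) -
      σ ^ d * (s ^ σ * unitDir (σ * φ))‖ ≤ s ^ σ * rayError α d lam s := by
  have h := norm_frob_sub_le hα hσ d lam (logRay φ s)
  have hexp := exp_mul_logRay σ φ hs
  rw [Complex.ofReal_natCast, Real.rpow_natCast] at hexp
  rw [logRay_re, exp_logRay_growth hs, mul_comm (σ : ℝ), ← Real.rpow_def_of_pos hs,
    Real.rpow_natCast, hexp] at h
  push_cast at h ⊢
  exact h.trans_eq (by rw [rayError]; ring)

lemma tendsto_rayError (hα : 0 < α) (d : ℕ) (lam : ℂ) :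
    Tendsto (rayError α d lam) (𝓝[>] 0) (𝓝 0) := by
  have hcont : Continuous (rayError α d lam) := by
    have := Real.continuous_rpow_const hα.le
    unfold rayError
    fun_prop
  simpa [rayError] using (hcont.tendsto 0).mono_left nhdsWithin_le_nhds

lemma exp_sub_one_le (t : ℝ) : Real.exp t - 1 ≤ t * Real.exp t := by
  have h := mul_le_mul_of_nonneg_right (Real.one_sub_le_exp_neg t) (Real.exp_pos t).le
  rw [← Real.exp_add, neg_add_cancel, Real.exp_zero] at h
  linarith

lemma tendsto_rayError_div (hα : 0 < α) (d : ℕ) (lam : ℂ) :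
    Tendsto (fun s ↦ rayError α d lam s / s) (𝓝[>] 0) (𝓝 0) := by
  set X : ℝ → ℝ := fun s ↦ 2 ^ d * (s ^ 2 * (s ^ α + ‖lam‖))
  set bound : ℝ → ℝ := fun s ↦
    (2 + α) ^ d * (2 ^ d * (s * (s ^ α + ‖lam‖)) * Real.exp (X s))
  have hcont : Continuous bound := by
    have := Real.continuous_rpow_const hα.le
    fun_prop
  have hbound : Tendsto bound (𝓝[>] 0) (𝓝 0) := by
    simpa [bound] using (hcont.tendsto 0).mono_left nhdsWithin_le_nhds
  refine squeeze_zero' ?_ ?_ hbound <;> filter_upwards [self_mem_nhdsWithin] with s hs <;>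
    have hs : 0 < s := hs
  · have : 1 ≤ Real.exp (X s) := Real.one_le_exp (by positivity)
    exact div_nonneg (mul_nonneg (by positivity) (sub_nonneg.2 this)) hs.le
  · rw [div_le_iff₀ hs]
    calc rayError α d lam s ≤ (2 + α) ^ d * (X s * Real.exp (X s)) := by
          unfold rayError
          gcongr
          exact exp_sub_one_le _
      _ = bound s * s := by simp only [bound, X]; ring

lemma tendsto_rayBasis_zero (hα : 0 < α) (hσ : σ ≤ 1) (φ : ℝ) (lam : ℂ) :
    Tendsto (rayBasis α σ φ lam) (𝓝[>] 0) (𝓝 (0 ^ σ)) := by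
  have herror : Tendsto (fun s ↦ rayBasis α σ φ lam s -
      s ^ σ * unitDir (σ * φ)) (𝓝[>] 0) (𝓝 0) := by
    refine squeeze_zero_norm' (a := fun s ↦ s ^ σ * rayError α 0 lam s) ?_ ?_
    · filter_upwards [self_mem_nhdsWithin] with s (hs : 0 < s)
      rw [rayBasis, if_pos hs]
      simpa only [pow_zero, one_mul] using norm_frob_logRay_sub_le hα.le hσ 0 φ lam hs
    · simpa using (((continuous_pow σ).tendsto (0 : ℝ)).mono_left nhdsWithin_le_nhds).mul
        (tendsto_rayError hα 0 lam)
  have hleading : Tendsto (fun s : ℝ ↦ (s : ℂ) ^ σ * unitDir (σ * φ)) (𝓝[>] 0) (𝓝 (0 ^ σ)) := by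
    have hcont : Continuous fun s : ℝ ↦ (s : ℂ) ^ σ * unitDir (σ * φ) := by fun_prop
    refine ((hcont.tendsto 0).mono_left nhdsWithin_le_nhds).trans_eq ?_
    interval_cases σ <;> simp
  simpa using herror.add hleading

lemma tendsto_rayBasis'_zero (hα : 0 < α) (hσ : σ ≤ 1) (φ : ℝ) (lam : ℂ) :
    Tendsto (rayBasis' α σ φ lam) (𝓝[>] 0) (𝓝 (σ * unitDir φ)) := by
  rw [tendsto_iff_norm_sub_tendsto_zero]
  refine squeeze_zero' (.of_forall fun _ ↦ norm_nonneg _)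
    (g := fun s ↦ s ^ σ * (rayError α 1 lam s / s)) ?_ ?_
  · filter_upwards [self_mem_nhdsWithin] with s (hs : 0 < s)
    have hs' : (s : ℂ) ≠ 0 := by exact_mod_cast hs.ne'
    have hleading : rayBasis' α σ φ lam s - σ * unitDir φ =
        (frob α σ 1 lam (logRay φ s) -
          σ ^ 1 * (s ^ σ * unitDir (σ * φ))) / s := by
      rw [rayBasis', if_pos hs]
      interval_cases σ
      · simp
      · simp only [Nat.cast_one, one_mul, pow_one, sub_div, mul_div_cancel_left₀ _ hs']
    rw [hleading, norm_div, Complex.norm_real, Real.norm_of_nonneg hs.le, ← mul_div_assoc]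
    gcongr
    exact norm_frob_logRay_sub_le hα.le hσ 1 φ lam hs
  · simpa using (((continuous_pow σ).tendsto (0 : ℝ)).mono_left nhdsWithin_le_nhds).mul
      (tendsto_rayError_div hα 1 lam)

lemma isSolution_rayBasis (hα : 0 < α) (hσ : σ ≤ 1) (φ : ℝ) (lam : ℂ) :
    IsSolution (rayPotential α φ lam) (rayBasis α σ φ lam) (rayBasis' α σ φ lam) where
  hasDerivAt s hs := hasDerivAt_rayBasis hα.le hσ φ lam hs
  hasDerivAt' s hs := hasDerivAt_rayBasis' hα.le hσ φ lam hs
  continuousOn s hs := by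
    rcases (show (0 : ℝ) ≤ s from hs).eq_or_lt with rfl | h
    · rw [← continuousWithinAt_Ioi_iff_Ici, ContinuousWithinAt]
      simpa only [rayBasis, lt_irrefl, if_false] using tendsto_rayBasis_zero hα hσ φ lam
    · exact (hasDerivAt_rayBasis hα.le hσ φ lam h).continuousAt.continuousWithinAt
  continuousOn' s hs := by
    rcases (show (0 : ℝ) ≤ s from hs).eq_or_lt with rfl | h
    · rw [← continuousWithinAt_Ioi_iff_Ici, ContinuousWithinAt]
      simpa only [rayBasis', lt_irrefl, if_false] using tendsto_rayBasis'_zero hα hσ φ lam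
    · exact (hasDerivAt_rayBasis' hα.le hσ φ lam h).continuousAt.continuousWithinAt

lemma isSolution_raySol (hα : 0 < α) (φ : ℝ) (lam A B : ℂ) :
    IsSolution (rayPotential α φ lam) (raySol α φ lam A B) (raySol' α φ lam A B) :=
  ((isSolution_rayBasis hα zero_le_one φ lam).smul A).add
    ((isSolution_rayBasis hα le_rfl φ lam).smul B)

lemma raySol_zero (α φ : ℝ) (lam A B : ℂ) : raySol α φ lam A B 0 = A := by
  simp [raySol, rayBasis]

lemma raySol'_zero (α φ : ℝ) (lam A B : ℂ) :
    raySol' α φ lam A B 0 = B * unitDir φ := by simp [raySol', rayBasis']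

lemma norm_raySol'_zero (α φ : ℝ) (lam A B : ℂ) : ‖raySol' α φ lam A B 0‖ = ‖B‖ := by
  rw [raySol'_zero, norm_mul, norm_unitDir, mul_one]

lemma norm_rayPotential_le (α φ : ℝ) (lam : ℂ) {s : ℝ} (hs : 0 ≤ s) :
    ‖rayPotential α φ lam s‖ ≤ s ^ α + ‖lam‖ := by
  refine (norm_sub_le _ _).trans_eq ?_
  simp only [norm_mul, Complex.norm_I, norm_unitDir, Complex.norm_real, Real.norm_eq_abs,
    abs_of_nonneg (Real.rpow_nonneg hs α), one_mul, mul_one]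

lemma hasDerivAt_frob_logRay_angle (hα : 0 ≤ α) (hσ : σ ≤ 1) (d : ℕ) (lam : ℂ) (s φ : ℝ) :
    HasDerivAt (fun φ ↦ frob α σ d lam (logRay φ s))
      (frob α σ (d + 1) lam (logRay φ s) * -Complex.I) φ :=
  (hasDerivAt_frob hα hσ d lam (logRay φ s)).comp_of_eq φ (hasDerivAt_logRay_angle φ s) rfl

lemma hasDerivAt_raySol_angle (hα : 0 ≤ α) (lam A B : ℂ) {s : ℝ} (hs : 0 < s) (φ : ℝ) :
    HasDerivAt (fun φ ↦ raySol α φ lam A B s) (-Complex.I * s * raySol' α φ lam A B s) φ := by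
  have hs' : (s : ℂ) ≠ 0 := by exact_mod_cast hs.ne'
  simp only [raySol, raySol', rayBasis, rayBasis', hs, if_true]
  refine (((hasDerivAt_frob_logRay_angle hα zero_le_one 0 lam s φ).const_mul A).add
    ((hasDerivAt_frob_logRay_angle hα le_rfl 0 lam s φ).const_mul B)).congr_deriv ?_
  field_simp
  ring

lemma hasDerivAt_raySol'_angle (hα : 0 ≤ α) (lam A B : ℂ) {s : ℝ} (hs : 0 < s) (φ : ℝ) :
    HasDerivAt (fun φ ↦ raySol' α φ lam A B s)
      (-Complex.I * raySol' α φ lam A B s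
        - Complex.I * s * (rayPotential α φ lam s * raySol α φ lam A B s)) φ := by
  have hs' : (s : ℂ) ≠ 0 := by exact_mod_cast hs.ne'
  simp only [raySol, raySol', rayBasis, rayBasis', hs, if_true]
  refine ((((hasDerivAt_frob_logRay_angle hα zero_le_one 1 lam s φ).div_const (s : ℂ)).const_mul
    A).add (((hasDerivAt_frob_logRay_angle hα le_rfl 1 lam s φ).div_const (s : ℂ)).const_mul
    B)).congr_deriv ?_
  rw [one_add_one_eq_two,
    eq_add_of_sub_eq (frob_two_sub_frob_one_logRay hα zero_le_one φ lam hs),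
    eq_add_of_sub_eq (frob_two_sub_frob_one_logRay hα le_rfl φ lam hs)]
  field_simp
  ring

lemma differentiable_rayBasis_parameter (hα : 0 ≤ α) (hσ : σ ≤ 1) (φ s : ℝ) :
    Differentiable ℂ (fun lam ↦ rayBasis α σ φ lam s) := by
  unfold rayBasis
  split_ifs
  exacts [differentiable_frob_parameter hα hσ 0 _, differentiable_const _]

lemma differentiable_rayBasis'_parameter (hα : 0 ≤ α) (hσ : σ ≤ 1) (φ s : ℝ) :
    Differentiable ℂ (fun lam ↦ rayBasis' α σ φ lam s) := by
  unfold rayBasis'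
  split_ifs
  exacts [(differentiable_frob_parameter hα hσ 1 _).div_const _, differentiable_const _]

lemma norm_rayBasis_le (hα : 0 ≤ α) (hσ : σ ≤ 1) (φ : ℝ) (lam : ℂ) {s x : ℝ}
    (hs : 0 ≤ s) (hsx : s ≤ x) :
    ‖rayBasis α σ φ lam s‖ ≤ (1 + x) * Real.exp (x ^ 2 * (x ^ α + ‖lam‖)) := by
  have hx : 0 ≤ x := hs.trans hsx
  have hpow (t : ℝ) (_ : 0 ≤ t) (htx : t ≤ x) : t ^ σ ≤ 1 + x := by
    interval_cases σ <;> simp <;> linarith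
  rcases hs.eq_or_lt with rfl | hs
  · have hexp : 1 ≤ Real.exp (x ^ 2 * (x ^ α + ‖lam‖)) := Real.one_le_exp (by positivity)
    calc ‖rayBasis α σ φ lam 0‖ = 0 ^ σ := by simp [rayBasis]
      _ ≤ 1 + x := hpow 0 le_rfl hx
      _ ≤ _ := le_mul_of_one_le_right (by positivity) hexp
  · have h := norm_frob_le hα hσ 0 lam (logRay φ s)
    rw [logRay_re, exp_logRay_growth hs, mul_comm (σ : ℝ), ← Real.rpow_def_of_pos hs,
      Real.rpow_natCast, pow_zero, pow_zero, one_mul, one_mul] at h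
    rw [rayBasis, if_pos hs]
    refine h.trans ?_
    gcongr
    exact hpow s hs.le hsx

end Rays

/-! ### Energy estimates and decay on rays -/

lemma image_le_exp_mul_of_deriv_le {f f' : ℝ → ℝ} {κ x z : ℝ} (hxz : x ≤ z)
    (hf : ContinuousOn f (Icc x z)) (hf' : ∀ s ∈ Ioo x z, HasDerivAt f (f' s) s)
    (hle : ∀ s ∈ Ioo x z, f' s ≤ κ * f s) : f z ≤ Real.exp (κ * (z - x)) * f x := by
  have hmono := image_le_of_hasDerivAt_nonneg (f := fun s ↦ -(Real.exp (-κ * s) * f s)) hxz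
    ((Continuous.continuousOn (by fun_prop)).mul hf).neg
    (fun s hs ↦ ((((hasDerivAt_id s).const_mul (-κ)).exp).mul (hf' s hs)).neg)
    (fun s hs ↦ by
      have := mul_nonneg (Real.exp_pos (-κ * s)).le (sub_nonneg.2 (hle s hs))
      simp only [id]
      linarith)
  have hexp : Real.exp (κ * (z - x)) = Real.exp (-κ * x) / Real.exp (-κ * z) := by
    rw [← Real.exp_sub]
    ring_nf
  rw [hexp, div_mul_eq_mul_div, le_div_iff₀ (Real.exp_pos _)]
  linarith

lemma image_le_exp_mul_of_le_deriv {f f' : ℝ → ℝ} {κ x z : ℝ} (hxz : x ≤ z)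
    (hf : ContinuousOn f (Icc x z)) (hf' : ∀ s ∈ Ioo x z, HasDerivAt f (f' s) s)
    (hle : ∀ s ∈ Ioo x z, -(κ * f s) ≤ f' s) : f x ≤ Real.exp (κ * (z - x)) * f z := by
  have hmono := image_le_of_hasDerivAt_nonneg (f := fun s ↦ Real.exp (κ * s) * f s) hxz
    ((Continuous.continuousOn (by fun_prop)).mul hf)
    (fun s hs ↦ (((hasDerivAt_id s).const_mul κ).exp).mul (hf' s hs))
    (fun s hs ↦ by
      have := mul_nonneg (Real.exp_pos (κ * s)).le (neg_le_iff_add_nonneg.1 (hle s hs))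
      simp only [id]
      linarith)
  have hexp : Real.exp (κ * (z - x)) = Real.exp (κ * z) / Real.exp (κ * x) := by
    rw [← Real.exp_sub]
    ring_nf
  rw [hexp, div_mul_eq_mul_div, le_div_iff₀ (Real.exp_pos _)]
  linarith

/-- The energy `μ² |y|² + |y'|²` of Cauchy data `(y, y')` at the frequency scale `μ`. -/
noncomputable def energy (μ : ℝ) (y y' : ℂ) : ℝ := μ ^ 2 * ‖y‖ ^ 2 + ‖y'‖ ^ 2

section Energy

variable {μ κ : ℝ}

lemma energy_nonneg (μ : ℝ) (y y' : ℂ) : 0 ≤ energy μ y y' := by unfold energy; positivity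

lemma sq_mul_norm_sq_le_energy (μ : ℝ) (y y' : ℂ) : μ ^ 2 * ‖y‖ ^ 2 ≤ energy μ y y' :=
  le_add_of_nonneg_right (sq_nonneg _)

lemma norm_sq_le_energy (μ : ℝ) (y y' : ℂ) : ‖y'‖ ^ 2 ≤ energy μ y y' :=
  le_add_of_nonneg_left (by positivity)

lemma two_mul_mul_norm_le_energy (μ : ℝ) (y y' : ℂ) : 2 * (μ * (‖y‖ * ‖y'‖)) ≤ energy μ y y' := by
  unfold energy
  nlinarith [sq_nonneg (μ * ‖y‖ - ‖y'‖)]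

lemma hasDerivAt_energy {y y' : ℝ → ℂ} {d d' : ℂ} {s : ℝ} (h : HasDerivAt y d s)
    (h' : HasDerivAt y' d' s) : HasDerivAt (fun s ↦ energy μ (y s) (y' s))
      (μ ^ 2 * (2 * (d * conj (y s)).re) + 2 * (d' * conj (y' s)).re) s :=
  ((hasDerivAt_norm_sq h).const_mul (μ ^ 2)).add (hasDerivAt_norm_sq h')

lemma abs_energy_deriv_le {y y' d d' : ℂ} (hκμ : 0 ≤ κ * μ)
    (hd : |(d * conj y).re| ≤ κ * (‖y‖ * ‖y'‖))
    (hd' : |(d' * conj y').re| ≤ κ * (μ ^ 2 * (‖y‖ * ‖y'‖))) :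
    |μ ^ 2 * (2 * (d * conj y).re) + 2 * (d' * conj y').re| ≤ 2 * (κ * μ) * energy μ y y' := by
  calc |μ ^ 2 * (2 * (d * conj y).re) + 2 * (d' * conj y').re|
      ≤ |μ ^ 2 * (2 * (d * conj y).re)| + |2 * (d' * conj y').re| := abs_add_le _ _
    _ = μ ^ 2 * (2 * |(d * conj y).re|) + 2 * |(d' * conj y').re| := by
        rw [abs_mul, abs_mul, abs_mul, abs_two, abs_of_nonneg (sq_nonneg μ)]
    _ ≤ μ ^ 2 * (2 * (κ * (‖y‖ * ‖y'‖))) + 2 * (κ * (μ ^ 2 * (‖y‖ * ‖y'‖))) := by gcongr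
    _ = 2 * (κ * μ) * (2 * (μ * (‖y‖ * ‖y'‖))) := by ring
    _ ≤ 2 * (κ * μ) * energy μ y y' := by
        gcongr
        exact two_mul_mul_norm_le_energy μ y y'

lemma IsSolution.energy_le {q y y' : ℝ → ℂ} {x z : ℝ} (h : IsSolution q y y') (hx : 0 ≤ x)
    (hxz : x ≤ z) (hμ : 0 ≤ μ) (hq : ∀ s ∈ Ioo x z, ‖q s‖ ≤ μ ^ 2) :
    energy μ (y z) (y' z) ≤ Real.exp (2 * μ * (z - x)) * energy μ (y x) (y' x) := by
  refine image_le_exp_mul_of_deriv_le (f := fun s ↦ energy μ (y s) (y' s)) hxz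
    (((continuousOn_const.mul (h.continuousOn.norm.pow 2)).add
      (h.continuousOn'.norm.pow 2)).mono fun s hs ↦ hx.trans hs.1)
    (fun s hs ↦ hasDerivAt_energy (h.hasDerivAt s (hx.trans_lt hs.1))
      (h.hasDerivAt' s (hx.trans_lt hs.1))) fun s hs ↦ ?_
  have hd : |(y' s * conj (y s)).re| ≤ 1 * (‖y s‖ * ‖y' s‖) := by
    rw [one_mul, mul_comm ‖y s‖]
    exact abs_re_mul_conj_le (y' s) (y s)
  have hd' : |(q s * y s * conj (y' s)).re| ≤ 1 * (μ ^ 2 * (‖y s‖ * ‖y' s‖)) := by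
    refine (abs_re_mul_conj_le _ _).trans ?_
    rw [norm_mul, one_mul, mul_assoc]
    gcongr
    exact hq s hs
  simpa using (abs_le.1 (abs_energy_deriv_le (by simpa using hμ) hd hd')).2

end Energy

section Rays

variable {α β φ φ₁ φ₂ μ s x : ℝ} {lam A B : ℂ}

lemma exists_hasDerivAt_energy_ray_angle (hα : 0 ≤ α) (A B : ℂ) (hs : 0 < s) (hμ : 0 ≤ μ)
    (hq : s ^ α + ‖lam‖ ≤ μ ^ 2) (φ : ℝ) :
    ∃ d, HasDerivAt (fun φ ↦ energy μ (raySol α φ lam A B s) (raySol' α φ lam A B s)) d φ ∧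
      |d| ≤ 2 * (s * μ) * energy μ (raySol α φ lam A B s) (raySol' α φ lam A B s) := by
  refine ⟨_, hasDerivAt_energy (hasDerivAt_raySol_angle hα lam A B hs φ)
    (hasDerivAt_raySol'_angle hα lam A B hs φ), abs_energy_deriv_le (by positivity) ?_ ?_⟩
  · refine (abs_re_mul_conj_le _ _).trans_eq ?_
    rw [norm_mul, norm_mul, norm_neg, Complex.norm_I, Complex.norm_of_nonneg hs.le]
    ring
  · set y := raySol α φ lam A B s
    set y' := raySol' α φ lam A B s
    set q := rayPotential α φ lam s
    have hq : ‖q‖ ≤ μ ^ 2 := (norm_rayPotential_le α φ lam hs.le).trans hq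
    have hre : ((-Complex.I * y' - Complex.I * s * (q * y)) * conj y').re =
        (-Complex.I * s * (q * y) * conj y').re := by
      have hexpand : (-Complex.I * y' - Complex.I * s * (q * y)) * conj y' =
          -Complex.I * (y' * conj y') + -Complex.I * s * (q * y) * conj y' := by ring
      rw [hexpand, Complex.mul_conj, Complex.add_re]
      simp
    rw [hre]
    refine (abs_re_mul_conj_le _ _).trans ?_
    rw [norm_mul, norm_mul, norm_mul, norm_neg, Complex.norm_I, Complex.norm_of_nonneg hs.le,
      one_mul, mul_assoc, mul_assoc]
    gcongr

lemma energy_ray_le (hα : 0 ≤ α) (A B : ℂ) (hs : 0 < s) (hμ : 0 ≤ μ)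
    (hq : s ^ α + ‖lam‖ ≤ μ ^ 2) (φ₁ φ₂ : ℝ) :
    energy μ (raySol α φ₂ lam A B s) (raySol' α φ₂ lam A B s) ≤
      Real.exp (2 * (s * μ) * |φ₂ - φ₁|) *
        energy μ (raySol α φ₁ lam A B s) (raySol' α φ₁ lam A B s) := by
  choose d hd hle using exists_hasDerivAt_energy_ray_angle hα A B hs hμ hq
  have hcont (I : Set ℝ) : ContinuousOn
      (fun φ ↦ energy μ (raySol α φ lam A B s) (raySol' α φ lam A B s)) I :=
    fun φ _ ↦ (hd φ).continuousAt.continuousWithinAt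
  rcases le_total φ₁ φ₂ with h | h
  · rw [abs_of_nonneg (sub_nonneg.2 h)]
    exact image_le_exp_mul_of_deriv_le h (hcont _) (fun φ _ ↦ hd φ) fun φ _ ↦ (abs_le.1 (hle φ)).2
  · rw [abs_of_nonpos (sub_nonpos.2 h), neg_sub]
    exact image_le_exp_mul_of_le_deriv h (hcont _) (fun φ _ ↦ hd φ) fun φ _ ↦ (abs_le.1 (hle φ)).1

lemma unitDir_mul_rayPotential_re (χ α φ : ℝ) (lam : ℂ) (s : ℝ) :
    (unitDir χ * rayPotential α φ lam s).re =
      Real.sin (χ + (2 + α) * φ) * s ^ α - (lam * unitDir (χ + 2 * φ)).re := by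
  have hadd : unitDir χ * rayPotential α φ lam s =
      Complex.I * unitDir (χ + (2 + α) * φ) * (s ^ α : ℝ) - lam * unitDir (χ + 2 * φ) := by
    rw [unitDir_add, unitDir_add, rayPotential]
    ring
  rw [hadd, Complex.sub_re, Complex.re_mul_ofReal, Complex.I_mul_re, unitDir_im, neg_neg]

lemma seven_tenths_le_cos_pi_div_four : (7 : ℝ) / 10 ≤ Real.cos (Real.pi / 4) := by
  rw [Real.cos_pi_div_four]
  have : (7 : ℝ) / 5 ≤ √2 := Real.le_sqrt_of_sq_le (by norm_num)
  linarith

lemma coerciveOn_rayPotential (hα : 0 < α) (hφ : 0 ≤ φ) (hφ' : φ ≤ Real.pi / (2 * (2 + α)))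
    (lam : ℂ) (hx : 0 ≤ x) :
    CoerciveOn (rayPotential α φ lam) (unitDir (Real.pi / 4)) (7 / 10)
      (7 / 10 * x ^ α - ‖lam‖) (Ici x) where
  le_re := (unitDir_re _).symm ▸ seven_tenths_le_cos_pi_div_four
  le_re_mul s hs := by
    rw [unitDir_mul_rayPotential_re]
    have hsα : x ^ α ≤ s ^ α := Real.rpow_le_rpow hx hs hα.le
    have hangle : (2 + α) * φ ≤ Real.pi / 2 := by
      rw [le_div_iff₀ (by linarith)] at hφ'
      linarith
    have hangle₀ : 0 ≤ (2 + α) * φ := by positivity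
    have hsin : (7 : ℝ) / 10 ≤ Real.sin (Real.pi / 4 + (2 + α) * φ) := by
      rw [← Real.cos_pi_div_two_sub, ← Real.cos_abs]
      refine seven_tenths_le_cos_pi_div_four.trans
        (Real.cos_le_cos_of_nonneg_of_le_pi (abs_nonneg _) (by linarith [Real.pi_pos]) ?_)
      rw [abs_le]
      constructor <;> linarith
    exact sub_le_sub (mul_le_mul hsin hsα (by positivity) (by linarith)) (re_mul_unitDir_le lam _)

lemma coerciveOn_rayPotential_of_norm_le (hα : 0 < α) (hφ : 0 ≤ φ)
    (hφ' : φ ≤ Real.pi / (2 * (2 + α))) (hx : 0 ≤ x) (hlam : 5 * ‖lam‖ ≤ x ^ α) :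
    CoerciveOn (rayPotential α φ lam) (unitDir (Real.pi / 4)) (1 / 2) (x ^ α / 2) (Ici x) :=
  (coerciveOn_rayPotential hα hφ hφ' lam hx).weaken (by norm_num) (by linarith)

lemma norm_rayPotential_le_mul_one_add_rpow (hα : 0 ≤ α) (φ : ℝ) (lam : ℂ) (hs : 0 ≤ s) :
    ‖rayPotential α φ lam s‖ ≤ (1 + ‖lam‖) * (1 + s) ^ α := by
  have hpow : s ^ α ≤ (1 + s) ^ α := Real.rpow_le_rpow hs (by linarith) hα
  have hone : 1 ≤ (1 + s) ^ α := Real.one_le_rpow (by linarith) hα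
  calc ‖rayPotential α φ lam s‖ ≤ s ^ α + ‖lam‖ := norm_rayPotential_le α φ lam hs
    _ ≤ (1 + s) ^ α + ‖lam‖ * (1 + s) ^ α :=
        add_le_add hpow (le_mul_of_one_le_right (norm_nonneg _) hone)
    _ = (1 + ‖lam‖) * (1 + s) ^ α := by ring

lemma rpow_half_sq (hs : 0 ≤ s) : (s ^ (α / 2)) ^ 2 = s ^ α := by
  rw [← Real.rpow_natCast, ← Real.rpow_mul hs]
  simp

/-- The solution with initial data `(A, B)` is recessive, that is decaying, on the ray
`z = s e^{-iφ}`. -/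
def IsRecessive (α φ : ℝ) (lam A B : ℂ) : Prop :=
  Decays (raySol α φ lam A B) (raySol' α φ lam A B)

lemma norm_rayPotential_le_of_mem_Icc (hα : 0 < α) (φ : ℝ) (hs : 1 ≤ s)
    (hlam : 5 * ‖lam‖ ≤ s ^ α) {t : ℝ} (ht : t ∈ Icc s (s + 1)) :
    ‖rayPotential α φ lam t‖ ≤ 2 * 2 ^ α * s ^ α := by
  have hst : s ^ α ≤ t ^ α := Real.rpow_le_rpow (by linarith) ht.1 hα.le
  have htα : t ^ α ≤ 2 ^ α * s ^ α := by
    rw [← Real.mul_rpow zero_le_two (by linarith)]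
    exact Real.rpow_le_rpow (by linarith [ht.1]) (by linarith [ht.2]) hα.le
  linarith [norm_rayPotential_le α φ lam (s := t) (by linarith [ht.1]), norm_nonneg lam]

lemma IsRecessive.energy_le_neg_flux (hd : IsRecessive α φ lam A B) (hα : 0 < α) (hφ : 0 ≤ φ)
    (hφ' : φ ≤ Real.pi / (2 * (2 + α))) (hs : 1 ≤ s) (hlam : 5 * ‖lam‖ ≤ s ^ α) :
    energy (2 * s ^ (α / 2)) (raySol α φ lam A B s) (raySol' α φ lam A B s) ≤
      (26 + 4 * 2 ^ α) * s ^ α *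
        -flux (unitDir (Real.pi / 4)) (raySol α φ lam A B) (raySol' α φ lam A B) s := by
  have hs₀ : 0 ≤ s := by linarith
  have hsα : 1 ≤ s ^ α := Real.one_le_rpow hs hα.le
  have hsol := isSolution_raySol hα φ lam A B
  have hcoercive := (coerciveOn_rayPotential_of_norm_le hα hφ hφ' hs₀ hlam).weaken le_rfl
    (show 1 / 2 ≤ s ^ α / 2 by linarith)
  have hq : CoerciveOn _ _ _ _ (Ioo s (s + 1)) := hcoercive.mono fun t ht ↦ ht.1.le
  have hq' : CoerciveOn _ _ _ _ (Ioi (s + 1)) :=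
    hcoercive.mono fun t ht ↦ ((lt_add_one s).trans ht).le
  have hy := hsol.sq_norm_left_le hq hs₀ (by norm_num) (by norm_num)
  have hy' := hsol.sq_norm_deriv_left_le (ρ := 1) (K := 2 * (1 + 2 * 2 ^ α * s ^ α)) hq
    (fun t ht ↦ norm_rayPotential_le_of_mem_Icc hα φ hs hlam (Ioo_subset_Icc_self ht)) hs₀
    (by linarith) one_pos (by positivity) (by rw [add_sub_cancel_left]; linarith) (by linarith)
  have hflux := hsol.flux_nonpos hd (hq'.nonneg (by norm_num) (by norm_num)) (by linarith)
  set J := -flux (unitDir (Real.pi / 4)) (raySol α φ lam A B) (raySol' α φ lam A B) s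
  set D := flux (unitDir (Real.pi / 4)) (raySol α φ lam A B) (raySol' α φ lam A B) (s + 1) -
    flux (unitDir (Real.pi / 4)) (raySol α φ lam A B) (raySol' α φ lam A B) s
  have hD₀ : 0 ≤ D := by linarith [sq_nonneg ‖raySol α φ lam A B s‖]
  rw [energy, mul_pow, rpow_half_sq hs₀]
  calc 2 ^ 2 * s ^ α * ‖raySol α φ lam A B s‖ ^ 2 + ‖raySol' α φ lam A B s‖ ^ 2
      ≤ 2 ^ 2 * s ^ α * (6 * D) + 2 * (s ^ α + 2 * 2 ^ α * s ^ α) * D := by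
        gcongr
        · linarith
        · exact hy'.trans (by gcongr)
    _ = (26 + 4 * 2 ^ α) * s ^ α * D := by ring
    _ ≤ (26 + 4 * 2 ^ α) * s ^ α * J := by
        gcongr
        linarith

lemma neg_flux_raySol_le (A B : ℂ) (hα : 0 < α) (hφ : 0 ≤ φ) (hφ' : φ ≤ Real.pi / (2 * (2 + α)))
    (hx : 0 ≤ x) (hlam : 5 * ‖lam‖ ≤ x ^ α) (hs : 2 * x ≤ s) :
    -flux (unitDir (Real.pi / 4)) (raySol α φ lam A B) (raySol' α φ lam A B) s ≤
      -flux (unitDir (Real.pi / 4)) (raySol α φ lam A B) (raySol' α φ lam A B) x *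
        Real.exp (-((1 / 2) ^ (α / 2) / 2 * (s * s ^ (α / 2)))) := by
  have hsol := isSolution_raySol hα φ lam A B
  have hx' : x ≤ s / 2 := by linarith
  have hs₀ : 0 ≤ s := by linarith
  have hmono := hsol.flux_mono (((coerciveOn_rayPotential_of_norm_le hα hφ hφ' hx hlam).mono
    fun t ht ↦ ht.1.le : CoerciveOn _ _ _ _ (Ioo x (s / 2))).nonneg (by norm_num) (by positivity))
    hx hx'
  set c := (s / 2) ^ (α / 2) / 2 with hc
  have hdecay := hsol.neg_flux_le (c := c) ((coerciveOn_rayPotential_of_norm_le hα hφ hφ'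
    (hx.trans hx') (hlam.trans (Real.rpow_le_rpow hx hx' hα.le))).mono Ioi_subset_Ici_self)
    (hx.trans hx') (norm_unitDir _).le (by norm_num) (by positivity)
    (by rw [hc, div_pow, rpow_half_sq (by positivity)]; linarith) (by linarith : s / 2 ≤ s)
  have hexponent : 2 * c * (s / 2) + -(2 * c) * s =
      -((1 / 2) ^ (α / 2) / 2 * (s * s ^ (α / 2))) := by
    rw [hc, div_eq_mul_one_div s 2, Real.mul_rpow hs₀ (by norm_num)]
    ring
  rw [mul_right_comm, ← Real.exp_add, hexponent, mul_comm] at hdecay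
  refine hdecay.trans ?_
  gcongr

lemma IsRecessive.exists_energy_le (hd : IsRecessive α φ lam A B) (hα : 0 < α) (hφ : 0 ≤ φ)
    (hφ' : φ ≤ Real.pi / (2 * (2 + α))) :
    ∃ C, 0 ≤ C ∧ ∀ᶠ s in atTop,
      energy (2 * s ^ (α / 2)) (raySol α φ lam A B s) (raySol' α φ lam A B s) ≤
        C * s ^ α * Real.exp (-((1 / 2) ^ (α / 2) / 2 * (s * s ^ (α / 2)))) := by
  obtain ⟨x, hxα, hx⟩ := (((tendsto_rpow_atTop hα).eventually_ge_atTop (5 * ‖lam‖)).and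
    (eventually_ge_atTop 1)).exists
  have hx₀ : 0 ≤ x := by linarith
  set J := -flux (unitDir (Real.pi / 4)) (raySol α φ lam A B) (raySol' α φ lam A B) x
  have hJ : 0 ≤ J := neg_nonneg.2 <| (isSolution_raySol hα φ lam A B).flux_nonpos hd
    (((coerciveOn_rayPotential_of_norm_le hα hφ hφ' hx₀ hxα).mono
      Ioi_subset_Ici_self).nonneg (by norm_num) (by positivity)) hx₀
  refine ⟨(26 + 4 * 2 ^ α) * J, by positivity, ?_⟩
  filter_upwards [eventually_ge_atTop (2 * x)] with s hs
  have hxs : x ≤ s := by linarith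
  have hs₀ : 0 ≤ s := hx₀.trans hxs
  refine (hd.energy_le_neg_flux hα hφ hφ' (hx.trans hxs)
    (hxα.trans (Real.rpow_le_rpow hx₀ hxs hα.le))).trans ?_
  rw [mul_right_comm _ J, mul_assoc _ J]
  gcongr
  exact neg_flux_raySol_le A B hα hφ hφ' hx₀ hxα hs

lemma tendsto_rpow_mul_exp_neg_mul_rpow (hβ : 0 ≤ β) {c : ℝ} (hc : 0 < c) :
    Tendsto (fun s : ℝ ↦ s ^ α * Real.exp (-(c * (s * s ^ β)))) atTop (𝓝 0) := by
  refine squeeze_zero' ?_ ?_ (tendsto_rpow_mul_exp_neg_mul_atTop_nhds_zero α c hc)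
  · filter_upwards [eventually_ge_atTop 0] with s hs using by positivity
  · filter_upwards [eventually_ge_atTop 1] with s hs
    have hs₀ : 0 ≤ s := by linarith
    have : s ≤ s * s ^ β := le_mul_of_one_le_right hs₀ (Real.one_le_rpow hs hβ)
    rw [neg_mul]
    gcongr

lemma isRecessive_of_tendsto_energy (hα : 0 < α)
    (h : Tendsto (fun s ↦ energy (2 * s ^ (α / 2)) (raySol α φ lam A B s) (raySol' α φ lam A B s))
      atTop (𝓝 0)) : IsRecessive α φ lam A B := by
  constructor <;> refine tendsto_zero_of_tendsto_sq_norm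
    (squeeze_zero' (.of_forall fun _ ↦ sq_nonneg _) ?_ h)
  · filter_upwards [eventually_ge_atTop 1] with s hs
    have hscale : 1 ≤ (2 * s ^ (α / 2)) ^ 2 :=
      one_le_pow₀ (by linarith [Real.one_le_rpow hs (half_pos hα).le])
    exact (le_mul_of_one_le_left (sq_nonneg _) hscale).trans (sq_mul_norm_sq_le_energy _ _ _)
  · exact .of_forall fun s ↦ norm_sq_le_energy _ _ _

/-- Turning the ray by `η` costs a factor `exp (4 η s ^ (1 + α / 2))` in the energy, which the decay
`exp (-c s ^ (1 + α / 2))` absorbs as long as `4 η < c`. -/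
lemma IsRecessive.of_abs_sub_le (hd : IsRecessive α φ₁ lam A B) (hα : 0 < α) (hφ : 0 ≤ φ₁)
    (hφ' : φ₁ ≤ Real.pi / (2 * (2 + α))) (hφ₁₂ : |φ₂ - φ₁| ≤ (1 / 2) ^ (α / 2) / 16) :
    IsRecessive α φ₂ lam A B := by
  obtain ⟨C, _, henergy⟩ := hd.exists_energy_le hα hφ hφ'
  set η : ℝ := (1 / 2) ^ (α / 2) / 16 with hη
  have : 0 < η := by positivity
  have hlarge := (tendsto_rpow_atTop hα).eventually_ge_atTop ‖lam‖
  have hbound : ∀ᶠ s in atTop,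
      energy (2 * s ^ (α / 2)) (raySol α φ₂ lam A B s) (raySol' α φ₂ lam A B s) ≤
        C * (s ^ α * Real.exp (-(4 * η * (s * s ^ (α / 2))))) := by
    filter_upwards [henergy, hlarge, eventually_gt_atTop 0] with s hs hsα hs₀
    calc energy (2 * s ^ (α / 2)) (raySol α φ₂ lam A B s) (raySol' α φ₂ lam A B s)
        ≤ Real.exp (2 * (s * (2 * s ^ (α / 2))) * η) *
            (C * s ^ α * Real.exp (-((1 / 2) ^ (α / 2) / 2 * (s * s ^ (α / 2))))) := by
          refine (energy_ray_le hα.le A B hs₀ (by positivity) ?_ φ₁ φ₂).trans ?_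
          · rw [mul_pow, rpow_half_sq hs₀.le]
            linarith [norm_nonneg lam]
          · have := energy_nonneg (2 * s ^ (α / 2)) (raySol α φ₁ lam A B s) (raySol' α φ₁ lam A B s)
            gcongr
      _ = C * (s ^ α * Real.exp (-(4 * η * (s * s ^ (α / 2))))) := by
          rw [mul_left_comm, ← Real.exp_add, mul_assoc, hη]
          ring_nf
  refine isRecessive_of_tendsto_energy hα
    (squeeze_zero' (.of_forall fun _ ↦ energy_nonneg _ _ _) hbound ?_)
  simpa using (tendsto_rpow_mul_exp_neg_mul_rpow (by positivity) (by positivity)).const_mul C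

lemma IsRecessive.rotate (hd : IsRecessive α 0 lam A B) (hα : 0 < α) (hφ : 0 ≤ φ)
    (hφ' : φ ≤ Real.pi / (2 * (2 + α))) : IsRecessive α φ lam A B := by
  set η : ℝ := (1 / 2) ^ (α / 2) / 16
  have hη : 0 < η := by positivity
  have hsteps (n : ℕ) : ∀ ψ, 0 ≤ ψ → ψ ≤ n * η → ψ ≤ Real.pi / (2 * (2 + α)) →
      IsRecessive α ψ lam A B := by
    induction n with
    | zero =>
      intro ψ hψ₀ hψ _
      rwa [hψ₀.antisymm' (by simpa using hψ)]
    | succ n ih =>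
      intro ψ hψ₀ hψ hψ'
      push_cast at hψ
      have hback₀ : 0 ≤ max 0 (ψ - η) := le_max_left _ _
      have hback : max 0 (ψ - η) ≤ ψ := max_le hψ₀ (by linarith)
      refine (ih (max 0 (ψ - η)) hback₀ (max_le (by positivity) (by linarith))
        (hback.trans hψ')).of_abs_sub_le hα hback₀ (hback.trans hψ') ?_
      rw [abs_of_nonneg (sub_nonneg.2 hback), sub_le_comm]
      exact le_max_right 0 (ψ - η)
  obtain ⟨n, hn⟩ := exists_nat_ge (φ / η)
  exact hsteps n φ hφ ((div_le_iff₀ hη).1 hn) hφ'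

end Rays

/-! ### Holomorphic families of recessive solutions -/

/-- The initial value `y(0)` of the solution with Cauchy data `(y, y')(s₀) = (c, d)`. -/
noncomputable def initialValue (α s₀ : ℝ) (c d lam : ℂ) : ℂ :=
  c * rayBasis' α 1 0 lam s₀ - d * rayBasis α 1 0 lam s₀

/-- The initial slope `y'(0)` of the solution with Cauchy data `(y, y')(s₀) = (c, d)`. -/
noncomputable def initialSlope (α s₀ : ℝ) (c d lam : ℂ) : ℂ :=
  d * rayBasis α 0 0 lam s₀ - c * rayBasis' α 0 0 lam s₀

/-- The solution on the positive axis with Cauchy data `(y, y')(s₀) = (c, d)`. -/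
noncomputable def cauchySol (α s₀ : ℝ) (c d lam : ℂ) : ℝ → ℂ :=
  raySol α 0 lam (initialValue α s₀ c d lam) (initialSlope α s₀ c d lam)

/-- The derivative of `cauchySol`. -/
noncomputable def cauchySol' (α s₀ : ℝ) (c d lam : ℂ) : ℝ → ℂ :=
  raySol' α 0 lam (initialValue α s₀ c d lam) (initialSlope α s₀ c d lam)

/-- Initial data `(A, B)`, holomorphic in `λ` on the disc of radius `Λ`, of a nontrivial recessive
solution whose tails in `L²` are uniformly small. -/
structure RecessiveFamily (α Λ : ℝ) (A B : ℂ → ℂ) : Prop where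
  differentiableOn_value : DifferentiableOn ℂ A (Metric.ball 0 Λ)
  differentiableOn_slope : DifferentiableOn ℂ B (Metric.ball 0 Λ)
  ne_zero : ∀ lam ∈ Metric.ball (0 : ℂ) Λ, A lam ≠ 0 ∨ B lam ≠ 0
  isRecessive : ∀ lam ∈ Metric.ball (0 : ℂ) Λ, IsRecessive α 0 lam (A lam) (B lam)
  tail : ∀ ε > 0, ∀ᶠ n : ℕ in atTop, ∀ lam ∈ Metric.ball (0 : ℂ) Λ,
    IntegrableOn (fun s ↦ ‖raySol α 0 lam (A lam) (B lam) s‖ ^ 2) (Ioi (n : ℝ)) ∧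
      ∫ s in Ioi (n : ℝ), ‖raySol α 0 lam (A lam) (B lam) s‖ ^ 2 ≤ ε

section Family

variable {α Λ s₀ : ℝ} {c d lam : ℂ}

lemma rayBasis_wronskian (hα : 0 < α) (lam : ℂ) {x : ℝ} (hx : 0 ≤ x) :
    rayBasis α 0 0 lam x * rayBasis' α 1 0 lam x -
      rayBasis' α 0 0 lam x * rayBasis α 1 0 lam x = 1 := by
  rw [(isSolution_rayBasis hα zero_le_one 0 lam).wronskian_eq
    (isSolution_rayBasis hα le_rfl 0 lam) hx]
  simp [rayBasis', rayBasis]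

lemma isSolution_cauchySol (hα : 0 < α) (s₀ : ℝ) (c d lam : ℂ) :
    IsSolution (rayPotential α 0 lam) (cauchySol α s₀ c d lam) (cauchySol' α s₀ c d lam) :=
  isSolution_raySol hα 0 lam _ _

lemma cauchySol_self (hα : 0 < α) (hs₀ : 0 ≤ s₀) (c d lam : ℂ) :
    cauchySol α s₀ c d lam s₀ = c := by
  simp only [cauchySol, raySol, initialValue, initialSlope]
  linear_combination c * rayBasis_wronskian hα lam hs₀

lemma cauchySol'_self (hα : 0 < α) (hs₀ : 0 ≤ s₀) (c d lam : ℂ) :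
    cauchySol' α s₀ c d lam s₀ = d := by
  simp only [cauchySol', raySol', initialValue, initialSlope]
  linear_combination d * rayBasis_wronskian hα lam hs₀

lemma cauchySol_add_mul (α s₀ : ℝ) (m lam : ℂ) (s : ℝ) :
    cauchySol α s₀ 1 0 lam s + m * cauchySol α s₀ 0 1 lam s = cauchySol α s₀ 1 m lam s := by
  simp only [cauchySol, raySol, initialValue, initialSlope]
  ring

lemma cauchySol'_add_mul (α s₀ : ℝ) (m lam : ℂ) (s : ℝ) :
    cauchySol' α s₀ 1 0 lam s + m * cauchySol' α s₀ 0 1 lam s = cauchySol' α s₀ 1 m lam s := by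
  simp only [cauchySol', raySol', initialValue, initialSlope]
  ring

lemma isFundamentalSystem_cauchySol (hα : 0 < α) (hs₀ : 0 ≤ s₀) (lam : ℂ) :
    IsFundamentalSystem (rayPotential α 0 lam) (cauchySol α s₀ 1 0 lam) (cauchySol' α s₀ 1 0 lam)
      (cauchySol α s₀ 0 1 lam) (cauchySol' α s₀ 0 1 lam) s₀ where
  left := isSolution_cauchySol hα s₀ 1 0 lam
  right := isSolution_cauchySol hα s₀ 0 1 lam
  left_eq_one := cauchySol_self hα hs₀ 1 0 lam
  left_deriv_eq_zero := cauchySol'_self hα hs₀ 1 0 lam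
  right_eq_zero := cauchySol_self hα hs₀ 0 1 lam
  right_deriv_eq_one := cauchySol'_self hα hs₀ 0 1 lam

lemma differentiableOn_initialValue {U : Set ℂ} {m : ℂ → ℂ} (hα : 0 ≤ α) (s₀ : ℝ) (c : ℂ)
    (hm : DifferentiableOn ℂ m U) :
    DifferentiableOn ℂ (fun lam ↦ initialValue α s₀ c (m lam) lam) U :=
  ((differentiable_rayBasis'_parameter hα le_rfl 0 s₀).const_mul c).differentiableOn.sub
    (hm.mul (differentiable_rayBasis_parameter hα le_rfl 0 s₀).differentiableOn)

lemma differentiableOn_initialSlope {U : Set ℂ} {m : ℂ → ℂ} (hα : 0 ≤ α) (s₀ : ℝ) (c : ℂ)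
    (hm : DifferentiableOn ℂ m U) :
    DifferentiableOn ℂ (fun lam ↦ initialSlope α s₀ c (m lam) lam) U :=
  (hm.mul (differentiable_rayBasis_parameter hα zero_le_one 0 s₀).differentiableOn).sub
    ((differentiable_rayBasis'_parameter hα zero_le_one 0 s₀).const_mul c).differentiableOn

lemma differentiable_cauchySol_parameter (hα : 0 ≤ α) (s₀ : ℝ) (c d : ℂ) (s : ℝ) :
    Differentiable ℂ (fun lam ↦ cauchySol α s₀ c d lam s) := by
  have hval := differentiableOn_initialValue hα s₀ c (differentiableOn_const (s := univ) d)
  have hslope := differentiableOn_initialSlope hα s₀ c (differentiableOn_const (s := univ) d)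
  exact ((differentiableOn_univ.1 hval).mul
    (differentiable_rayBasis_parameter hα zero_le_one 0 s)).add
    ((differentiableOn_univ.1 hslope).mul (differentiable_rayBasis_parameter hα le_rfl 0 s))

lemma coerciveOn_rayPotential_of_le (hα : 0 < α) (hs₀ : 0 ≤ s₀) (hΛ : Λ + 1 ≤ 7 / 10 * s₀ ^ α)
    (hlam : ‖lam‖ ≤ Λ) :
    CoerciveOn (rayPotential α 0 lam) (unitDir (Real.pi / 4)) (1 / 2) 1 (Ici s₀) :=
  (coerciveOn_rayPotential hα le_rfl (by positivity) lam hs₀).weaken (by norm_num) (by linarith)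

lemma exists_recessive_slope (hα : 0 < α) (hs₀ : 0 ≤ s₀) (hΛ : Λ + 1 ≤ 7 / 10 * s₀ ^ α)
    (hlam : ‖lam‖ ≤ Λ) :
    ∃ m : ℂ, ‖m‖ ≤ 2 * (1 + ((s₀ + 1) ^ α + Λ)) ∧
      Decays (cauchySol α s₀ 1 m lam) (cauchySol' α s₀ 1 m lam) ∧
      ∀ k : ℕ, cauchySol α s₀ 0 1 lam (s₀ + 1 + k) ≠ 0 ∧
        ‖-(cauchySol α s₀ 1 0 lam (s₀ + 1 + k) / cauchySol α s₀ 0 1 lam (s₀ + 1 + k)) - m‖ ≤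
          2 * (2 * (1 + ((s₀ + 1) ^ α + Λ))) / √(1 + 2 * (1 / 2) * k) := by
  have hΛ₀ : 0 ≤ Λ := (norm_nonneg lam).trans hlam
  have hM (s : ℝ) (hs : s ∈ Ioo s₀ (s₀ + 1)) : ‖rayPotential α 0 lam s‖ ≤ (s₀ + 1) ^ α + Λ := by
    have hs' : 0 ≤ s := hs₀.trans hs.1.le
    exact (norm_rayPotential_le α 0 lam hs').trans
      (add_le_add (Real.rpow_le_rpow hs' hs.2.le hα.le) hlam)
  obtain ⟨m, hm, hd, hlim⟩ := (isFundamentalSystem_cauchySol hα hs₀ lam).exists_decays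
    (K := 2 * (1 + ((s₀ + 1) ^ α + Λ))) (c := 1 / 2)
    ((coerciveOn_rayPotential_of_le hα hs₀ hΛ hlam).mono Ioi_subset_Ici_self) hM hs₀
    (norm_unitDir _).le one_half_pos one_pos one_half_pos.le (by norm_num) (by positivity)
    (by linarith) (by linarith [Real.rpow_nonneg (hs₀.trans (lt_add_one s₀).le) α])
    (by positivity) hα.le
    (fun s hs ↦ norm_rayPotential_le_mul_one_add_rpow hα.le 0 lam (hs₀.trans hs.le))
  simp only [cauchySol_add_mul, cauchySol'_add_mul] at hd
  exact ⟨m, hm, hd, hlim⟩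

/-- The slope is the uniform limit of the centres of the Weyl discs, which are quotients of entire
functions of `λ`. -/
lemma differentiableOn_recessive_slope {U : Set ℂ} {m : ℂ → ℂ} {K : ℝ} (hα : 0 ≤ α)
    (hU : IsOpen U) (hm : ∀ lam ∈ U, ∀ k : ℕ, cauchySol α s₀ 0 1 lam (s₀ + 1 + k) ≠ 0 ∧
      ‖-(cauchySol α s₀ 1 0 lam (s₀ + 1 + k) / cauchySol α s₀ 0 1 lam (s₀ + 1 + k)) - m lam‖ ≤
        K / √(1 + 2 * (1 / 2) * k)) : DifferentiableOn ℂ m U := by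
  have hlim : Tendsto (fun k : ℕ ↦ K / √(1 + 2 * (1 / 2) * (k : ℝ))) atTop (𝓝 0) := by
    refine tendsto_const_nhds.div_atTop (Real.tendsto_sqrt_atTop.comp ?_)
    exact tendsto_atTop_add_const_left _ _
      (tendsto_natCast_atTop_atTop.const_mul_atTop (by norm_num))
  have hunif : TendstoUniformlyOn (fun (k : ℕ) lam ↦
      -(cauchySol α s₀ 1 0 lam (s₀ + 1 + k) / cauchySol α s₀ 0 1 lam (s₀ + 1 + k))) m atTop U := by
    rw [Metric.tendstoUniformlyOn_iff]
    intro ε hε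
    filter_upwards [hlim.eventually_lt_const hε] with k hk lam hlam
    rw [dist_comm, dist_eq_norm]
    exact (hm lam hlam k).2.trans_lt hk
  refine hunif.tendstoLocallyUniformlyOn.differentiableOn (.of_forall fun k ↦ ?_) hU
  exact ((differentiable_cauchySol_parameter hα s₀ 1 0 _).differentiableOn.div
    (differentiable_cauchySol_parameter hα s₀ 0 1 _).differentiableOn fun lam hlam ↦
      (hm lam hlam k).1).neg

lemma integral_norm_sq_cauchySol_le {K x : ℝ} {m : ℂ} (hα : 0 < α) (hs₀ : 0 ≤ s₀)
    (hΛ : Λ + 1 ≤ 7 / 10 * s₀ ^ α) (hlam : ‖lam‖ ≤ Λ) (hm : ‖m‖ ≤ K) (hx : s₀ ≤ x)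
    (hd : Decays (cauchySol α s₀ 1 m lam) (cauchySol' α s₀ 1 m lam)) :
    IntegrableOn (fun s ↦ ‖cauchySol α s₀ 1 m lam s‖ ^ 2) (Ioi x) ∧
      ∫ s in Ioi x, ‖cauchySol α s₀ 1 m lam s‖ ^ 2 ≤ K / (7 / 10 * x ^ α - Λ) := by
  have hsol := isSolution_cauchySol hα s₀ 1 m lam
  have hxα : s₀ ^ α ≤ x ^ α := Real.rpow_le_rpow hs₀ hx hα.le
  have hb : 0 < 7 / 10 * x ^ α - Λ := by linarith
  have hcoercive := (coerciveOn_rayPotential hα le_rfl (by positivity) lam (hs₀.trans hx)).weaken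
    (show (0 : ℝ) ≤ 7 / 10 by norm_num) (sub_le_sub_left hlam _)
  obtain ⟨hint, hle⟩ := hsol.integral_norm_sq_le_of_decays hd
    (hcoercive.mono Ioi_subset_Ici_self) (hs₀.trans hx) hb
  refine ⟨hint, hle.trans ?_⟩
  have hmono := hsol.flux_mono (((coerciveOn_rayPotential_of_le hα hs₀ hΛ hlam).nonneg (by norm_num)
    zero_le_one).mono fun s hs ↦ hs.1.le) hs₀ hx
  have hflux := abs_flux_le (unitDir (Real.pi / 4)) (cauchySol α s₀ 1 m lam)
    (cauchySol' α s₀ 1 m lam) s₀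
  rw [cauchySol_self hα hs₀, cauchySol'_self hα hs₀, norm_unitDir, norm_one, one_mul,
    mul_one] at hflux
  gcongr
  linarith [(abs_le.1 hflux).1]

lemma exists_recessiveFamily (hα : 0 < α) (Λ : ℝ) : ∃ A B, RecessiveFamily α Λ A B := by
  have hlarge := (tendsto_rpow_atTop hα).const_mul_atTop (show (0 : ℝ) < 7 / 10 by norm_num)
  obtain ⟨s₀, hΛ, hs₀⟩ :=
    ((hlarge.eventually_ge_atTop (Λ + 1)).and (eventually_ge_atTop 0)).exists
  have hball {lam : ℂ} (h : lam ∈ Metric.ball (0 : ℂ) Λ) : ‖lam‖ ≤ Λ := (mem_ball_zero_iff.1 h).le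
  choose! m hm hd hlim using fun lam (hlam : lam ∈ Metric.ball (0 : ℂ) Λ) ↦
    exists_recessive_slope hα hs₀ hΛ (hball hlam)
  have hmdiff := differentiableOn_recessive_slope hα.le Metric.isOpen_ball hlim
  refine ⟨fun lam ↦ initialValue α s₀ 1 (m lam) lam, fun lam ↦ initialSlope α s₀ 1 (m lam) lam,
    differentiableOn_initialValue hα.le s₀ 1 hmdiff,
    differentiableOn_initialSlope hα.le s₀ 1 hmdiff, fun lam _ ↦ ?_, hd, fun ε hε ↦ ?_⟩
  · by_contra! h
    have hone := cauchySol_self hα hs₀ 1 (m lam) lam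
    simp [cauchySol, raySol, h.1, h.2] at hone
  · have htail : Tendsto (fun n : ℕ ↦ 2 * (1 + ((s₀ + 1) ^ α + Λ)) / (7 / 10 * (n : ℝ) ^ α - Λ))
        atTop (𝓝 0) :=
      tendsto_const_nhds.div_atTop
        (tendsto_atTop_add_const_right _ _ (hlarge.comp tendsto_natCast_atTop_atTop))
    filter_upwards [eventually_ge_atTop ⌈s₀⌉₊, htail.eventually_le_const hε] with n hn hnε lam hlam
    obtain ⟨hint, hle⟩ := integral_norm_sq_cauchySol_le hα hs₀ hΛ (hball hlam) (hm lam hlam)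
      (Nat.ceil_le.1 hn) (hd lam hlam)
    exact ⟨hint, hle.trans hnε⟩

end Family

/-! ### Quantitative bounds for recessive solutions -/

lemma inv_sqrt_le_one {r : ℝ} (hr : 1 ≤ r) : 1 / √r ≤ 1 :=
  div_le_one_of_le₀ (Real.one_le_sqrt.2 hr) (Real.sqrt_nonneg r)

lemma rpow_one_div_rpow {α R : ℝ} (hα : 0 < α) (hR : 0 ≤ R) : (R ^ (1 / α)) ^ α = R := by
  rw [one_div, Real.rpow_inv_rpow hR hα.ne']

lemma norm_polar {r : ℝ} (hr : 0 ≤ r) (θ : ℝ) : ‖(r : ℂ) * unitDir θ‖ = r := by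
  rw [norm_mul, norm_unitDir, mul_one, Complex.norm_of_nonneg hr]

lemma polar_mul_unitDir_re (r θ χ : ℝ) :
    ((r : ℂ) * unitDir (-θ) * unitDir χ).re = r * Real.cos (χ - θ) := by
  rw [mul_assoc, ← unitDir_add, Complex.re_ofReal_mul, unitDir_re, neg_add_eq_sub]

namespace IsSolution

variable {q y y' : ℝ → ℂ} {g : ℂ} {b κ r x K P : ℝ}

lemma norm_deriv_le_sqrt_mul (h : IsSolution q y y') (hd : Decays y y')
    (hq : CoerciveOn q g κ (κ * r) (Ioi x)) (hM : ∀ s ∈ Ioo x (x + 1), ‖q s‖ ≤ P * r) (hx : 0 ≤ x)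
    (hr : 1 ≤ r) (hκ : 0 < κ) (hP : 0 ≤ P) :
    ‖y' x‖ ≤ (1 + P) / κ * √r * ‖g‖ * ‖y x‖ := by
  have hr₀ : 0 < √r := Real.sqrt_pos.2 (by linarith)
  have : √r * √r = r := Real.mul_self_sqrt (by linarith)
  refine h.norm_deriv_le_of_decays (ℓ := 1 / √r) (ρ := √r) hd hq
    (fun s hs ↦ hM s ⟨hs.1, hs.2.trans_le (by linarith [inv_sqrt_le_one hr])⟩) hx (by positivity)
    hr₀ hκ.le (by positivity) (by positivity) (le_of_eq ?_) ?_
  · rw [one_div_one_div, mul_div_assoc, Real.div_sqrt]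
    field_simp
  · calc P * r * √r ≤ (1 + P) * r * √r := by gcongr; linarith
      _ = (1 + P) / κ * √r * (κ * r) := by field_simp

lemma integral_norm_sq_le_mul_sq (h : IsSolution q y y') (hd : Decays y y')
    (hq : CoerciveOn q g 0 b (Ioi 0)) (hb : 0 < b) (hg : ‖g‖ ≤ 1) (hK : ‖y' 0‖ ≤ K * ‖y 0‖) :
    IntegrableOn (fun s ↦ ‖y s‖ ^ 2) (Ioi 0) ∧
      ∫ s in Ioi (0 : ℝ), ‖y s‖ ^ 2 ≤ K / b * ‖y 0‖ ^ 2 := by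
  have hint := h.integral_norm_sq_le_of_decays hd hq le_rfl hb
  refine ⟨hint.1, hint.2.trans ?_⟩
  have hflux : -flux g y y' 0 ≤ K * ‖y 0‖ ^ 2 := calc
    -flux g y y' 0 ≤ ‖g‖ * ‖y' 0‖ * ‖y 0‖ := (neg_le_abs _).trans (abs_flux_le g y y' 0)
    _ ≤ 1 * (K * ‖y 0‖) * ‖y 0‖ := by gcongr
    _ = K * ‖y 0‖ ^ 2 := by ring
  rw [div_mul_eq_mul_div]
  gcongr

end IsSolution

section Bounds

variable {α φ χ κ r s x S μ : ℝ} {lam A B : ℂ}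

lemma norm_rayPotential_le_two_mul (hα : 0 ≤ α) (hr : 1 ≤ r) (hlam : ‖lam‖ ≤ r)
    (hs : s ∈ Icc 0 1) : ‖rayPotential α φ lam s‖ ≤ 2 * r := by
  have := norm_rayPotential_le α φ lam hs.1
  have := Real.rpow_le_one hs.1 hs.2 hα
  linarith

lemma coerciveOn_rayPotential_of_le_neg_re (α : ℝ) (hcos : κ ≤ Real.cos χ) (hsin : 0 ≤ Real.sin χ)
    (hsep : κ * ‖lam‖ ≤ -(lam * unitDir χ).re) :
    CoerciveOn (rayPotential α 0 lam) (unitDir χ) κ (κ * ‖lam‖) (Ioi 0) where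
  le_re := by rwa [unitDir_re]
  le_re_mul s hs := by
    have : 0 ≤ Real.sin χ * s ^ α := mul_nonneg hsin (Real.rpow_nonneg (le_of_lt hs) α)
    rw [unitDir_mul_rayPotential_re, mul_zero, mul_zero, add_zero]
    linarith

lemma IsRecessive.norm_slope_le_and_integral_le_of_le_neg_re (hd : IsRecessive α 0 lam A B)
    (hα : 0 < α) (hr : 1 ≤ ‖lam‖) (hκ : 0 < κ) (hcos : κ ≤ Real.cos χ) (hsin : 0 ≤ Real.sin χ)
    (hsep : κ * ‖lam‖ ≤ -(lam * unitDir χ).re) :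
    ‖B‖ ≤ 3 / κ * √‖lam‖ * ‖A‖ ∧ IntegrableOn (fun s ↦ ‖raySol α 0 lam A B s‖ ^ 2) (Ioi 0) ∧
      ∫ s in Ioi (0 : ℝ), ‖raySol α 0 lam A B s‖ ^ 2 ≤
        3 / κ * √‖lam‖ / (κ * ‖lam‖) * ‖A‖ ^ 2 := by
  have hsol := isSolution_raySol hα 0 lam A B
  have hq := coerciveOn_rayPotential_of_le_neg_re α hcos hsin hsep
  have hslope := hsol.norm_deriv_le_sqrt_mul hd hq (fun s hs ↦ norm_rayPotential_le_two_mul hα.le hr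
    le_rfl ⟨hs.1.le, by linarith [hs.2]⟩) le_rfl hr hκ zero_le_two
  rw [norm_unitDir, mul_one, show (1 : ℝ) + 2 = 3 by norm_num] at hslope
  have hint := hsol.integral_norm_sq_le_mul_sq hd (hq.weaken hκ.le le_rfl) (by positivity)
    (norm_unitDir _).le hslope
  rw [norm_raySol'_zero, raySol_zero] at hslope
  rw [raySol_zero] at hint
  exact ⟨hslope, hint⟩

/-- Beyond the turning point `S` the solution is controlled by its energy at `S`, so that only a
bound on `(0, S]` is needed. -/
lemma IsRecessive.integral_norm_sq_le (hd : IsRecessive α 0 lam A B) (hα : 0 < α) (hr : 1 ≤ ‖lam‖)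
    (hμ : 0 ≤ μ) (hlam : ‖lam‖ ≤ μ ^ 2) (hS : 0 < S) (hSα : S ^ α = 2 * ‖lam‖) {h : ℝ → ℝ}
    (hh : IntegrableOn h (Ioc 0 S))
    (hle : ∀ s ∈ Ioc 0 S, energy μ (raySol α 0 lam A B s) (raySol' α 0 lam A B s) ≤ ‖lam‖ * h s) :
    IntegrableOn (fun s ↦ ‖raySol α 0 lam A B s‖ ^ 2) (Ioi 0) ∧
      ∫ s in Ioi (0 : ℝ), ‖raySol α 0 lam A B s‖ ^ 2 ≤ (∫ s in Ioc 0 S, h s) + 2 * h S := by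
  have hsol := isSolution_raySol hα 0 lam A B
  have hr₀ : 0 < ‖lam‖ := by linarith
  have hhead (s) (hs : s ∈ Ioc 0 S) : ‖raySol α 0 lam A B s‖ ^ 2 ≤ h s := by
    refine le_of_mul_le_mul_left ?_ hr₀
    calc ‖lam‖ * ‖raySol α 0 lam A B s‖ ^ 2 ≤ μ ^ 2 * ‖raySol α 0 lam A B s‖ ^ 2 := by gcongr
      _ ≤ ‖lam‖ * h s := (sq_mul_norm_sq_le_energy _ _ _).trans (hle s hs)
  have hhead_int : IntegrableOn (fun s ↦ ‖raySol α 0 lam A B s‖ ^ 2) (Ioc 0 S) :=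
    (((hsol.continuousOn.norm.pow 2).mono Icc_subset_Ici_self).integrableOn_Icc).mono_set
      Ioc_subset_Icc_self
  have htail := hsol.integral_norm_sq_le_of_decays hd (b := 2 / 5 * ‖lam‖)
    (((coerciveOn_rayPotential hα le_rfl (by positivity) lam hS.le).weaken (by norm_num)
      (by linarith)).mono Ioi_subset_Ici_self) hS.le (by positivity)
  have hflux : -flux (unitDir (Real.pi / 4)) (raySol α 0 lam A B) (raySol' α 0 lam A B) S /
      (2 / 5 * ‖lam‖) ≤ 2 * h S := by
    have hprod := (two_mul_mul_norm_le_energy μ _ _).trans (hle S ⟨hS, le_rfl⟩)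
    have habs := (neg_le_abs _).trans
      (abs_flux_le (unitDir (Real.pi / 4)) (raySol α 0 lam A B) (raySol' α 0 lam A B) S)
    set a := ‖raySol α 0 lam A B S‖
    set b := ‖raySol' α 0 lam A B S‖
    have hμ₁ : 1 ≤ μ := (one_le_sq_iff₀ hμ).1 (hr.trans hlam)
    have hab : a * b ≤ μ * (a * b) := le_mul_of_one_le_left (by positivity) hμ₁
    rw [norm_unitDir, one_mul, mul_comm b] at habs
    have hab₀ : 0 ≤ a * b := by positivity
    rw [div_le_iff₀ (by positivity)]
    linarith
  rw [← Ioc_union_Ioi_eq_Ioi hS.le]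
  refine ⟨hhead_int.union htail.1, ?_⟩
  rw [setIntegral_union (Ioc_disjoint_Ioi le_rfl) measurableSet_Ioi hhead_int htail.1]
  exact add_le_add (setIntegral_mono_on hhead_int hh measurableSet_Ioc hhead)
    (htail.2.trans hflux)

end Bounds

lemma IsSolution.norm_sq_le_mul_exp {q y y' : ℝ → ℂ} {g : ℂ} {a b c s K : ℝ}
    (h : IsSolution q y y') (hd : Decays y y') (hq : CoerciveOn q g a b (Ioi 0)) (hs : 0 ≤ s)
    (hg : ‖g‖ ≤ 1) (ha : 0 ≤ a) (hb : 0 ≤ b) (hc₀ : 0 < c) (hc : c ^ 2 ≤ a * b)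
    (hK : ‖y' 0‖ ≤ K * ‖y 0‖) :
    ‖y s‖ ^ 2 ≤ K / c * ‖y 0‖ ^ 2 * Real.exp (-(2 * c) * s) := by
  have hflux₀ : -flux g y y' 0 ≤ K * ‖y 0‖ ^ 2 := calc
    -flux g y y' 0 ≤ ‖g‖ * ‖y' 0‖ * ‖y 0‖ := (neg_le_abs _).trans (abs_flux_le g y y' 0)
    _ ≤ 1 * (K * ‖y 0‖) * ‖y 0‖ := by gcongr
    _ = K * ‖y 0‖ ^ 2 := by ring
  have hdecay := h.neg_flux_le hq le_rfl hg ha hb hc hs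
  have hsq := h.flux_add_sq_nonpos hd (hq.mono (Ioi_subset_Ioi hs)) hs ha hb hc
  rw [mul_zero, Real.exp_zero, one_mul] at hdecay
  refine le_of_mul_le_mul_left ?_ hc₀
  calc c * ‖y s‖ ^ 2 ≤ -flux g y y' s := by linarith
    _ ≤ K * ‖y 0‖ ^ 2 * Real.exp (-(2 * c) * s) := hdecay.trans (by gcongr)
    _ = c * (K / c * ‖y 0‖ ^ 2 * Real.exp (-(2 * c) * s)) := by field_simp

section Slant

variable {α φ r s S K : ℝ} {A B : ℂ}

/-- The argument of a ray just inside the first quadrant, the numerical range of the operator.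
There a recessive solution is still controlled, by turning the ray of the independent variable. -/
noncomputable def slantAngle : ℝ := Real.pi / 2 - 1 / 80

lemma one_div_fifty_le_sin_sub (hα : 133 / 200 < α) (hφ : (2 + α) * φ = 1 / 7) :
    1 / 50 ≤ Real.sin (α * φ - 1 / 80) := by
  have hφ₀ : 0 < φ := pos_of_mul_pos_right (by rw [hφ]; norm_num) (by linarith : 0 ≤ 2 + α)
  have hlower : 1063 / 46000 ≤ α * φ - 1 / 80 := by nlinarith
  have hupper : α * φ - 1 / 80 ≤ 1 / 7 := by linarith
  set x := α * φ - 1 / 80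
  have hcube := Real.sin_gt_sub_cube (x := x) (by linarith)
  nlinarith [mul_nonneg (sub_nonneg.2 hlower) (sub_nonneg.2 hupper), sq_nonneg x]

lemma coerciveOn_rayPotential_slant (hα : 133 / 200 < α) (hφ : (2 + α) * φ = 1 / 7)
    (hr : 0 ≤ r) :
    CoerciveOn (rayPotential α φ (r * unitDir (-slantAngle))) (unitDir (-(1 / 7))) (9 / 10)
      (r / 50) univ where
  le_re := by
    rw [unitDir_re, Real.cos_neg]
    have := Real.one_sub_sq_div_two_le_cos (x := 1 / 7)
    norm_num at this ⊢
    linarith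
  le_re_mul s _ := by
    have hcos : Real.cos (-(1 / 7) + 2 * φ - slantAngle) = -Real.sin (α * φ - 1 / 80) := by
      rw [← Real.cos_add_pi_div_two, ← Real.cos_neg, ← hφ, slantAngle]
      ring_nf
    rw [unitDir_mul_rayPotential_re, hφ, neg_add_cancel, Real.sin_zero, zero_mul,
      polar_mul_unitDir_re, hcos, zero_sub, mul_neg, neg_neg, div_eq_mul_one_div]
    gcongr
    exact one_div_fifty_le_sin_sub hα hφ

lemma norm_rayPotential_le_of_rpow_le {lam : ℂ} (hα : 0 ≤ α) (φ : ℝ) (hr : 1 ≤ ‖lam‖)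
    (hs : 0 ≤ s) (hsα : s ^ α ≤ 2 * ‖lam‖) {t : ℝ} (ht : t ∈ Ioo s (s + 1)) :
    ‖rayPotential α φ lam t‖ ≤ (1 + 2 * 2 ^ α) * ‖lam‖ := by
  have htα : t ^ α ≤ 2 ^ α * (2 * ‖lam‖) := by
    rcases le_total s 1 with hs₁ | hs₁
    · calc t ^ α ≤ 2 ^ α := Real.rpow_le_rpow (hs.trans ht.1.le) (by linarith [ht.2]) hα
        _ ≤ 2 ^ α * (2 * ‖lam‖) := le_mul_of_one_le_right (by positivity) (by linarith)
    · calc t ^ α ≤ (2 * s) ^ α := Real.rpow_le_rpow (hs.trans ht.1.le) (by linarith [ht.2]) hα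
        _ = 2 ^ α * s ^ α := Real.mul_rpow zero_le_two hs
        _ ≤ 2 ^ α * (2 * ‖lam‖) := by gcongr
  linarith [norm_rayPotential_le α φ lam (hs.trans ht.1.le)]

lemma IsRecessive.norm_raySol'_le_slant (hd : IsRecessive α φ (r * unitDir (-slantAngle)) A B)
    (hα : 133 / 200 < α) (hφ : (2 + α) * φ = 1 / 7) (hr : 1 ≤ r) (hs : 0 ≤ s)
    (hsα : s ^ α ≤ 2 * r) :
    ‖raySol' α φ (r * unitDir (-slantAngle)) A B s‖ ≤
      100 * (1 + 2 ^ α) * √r * ‖raySol α φ (r * unitDir (-slantAngle)) A B s‖ := by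
  have hnorm := norm_polar (zero_le_one.trans hr) (-slantAngle)
  have hq := ((coerciveOn_rayPotential_slant hα hφ (zero_le_one.trans hr)).mono
    (subset_univ (Ioi s))).weaken (a' := 1 / 50) (b' := 1 / 50 * r) (by norm_num) (by linarith)
  have hslope := (isSolution_raySol (by linarith) φ _ A B).norm_deriv_le_sqrt_mul hd hq
    (P := 1 + 2 * 2 ^ α) (fun t ht ↦ by
      simpa only [hnorm] using norm_rayPotential_le_of_rpow_le (α := α) (by linarith) φ
        (hnorm.ge.trans' hr) hs (by rwa [hnorm]) ht) hs hr (by norm_num) (by positivity)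
  rw [norm_unitDir, mul_one] at hslope
  exact hslope.trans_eq (by ring)

lemma IsRecessive.energy_le_slant (hd : IsRecessive α φ (r * unitDir (-slantAngle)) A B)
    (hα : 133 / 200 < α) (hφ : (2 + α) * φ = 1 / 7) (hr : 1 ≤ r) (hs : 0 ≤ s)
    (hsα : s ^ α ≤ 2 * r) (hK : 100 * (1 + 2 ^ α) ≤ K) :
    energy (7 / 4 * √r) (raySol α φ (r * unitDir (-slantAngle)) A B s)
        (raySol' α φ (r * unitDir (-slantAngle)) A B s) ≤
      8 * K * (4 + K ^ 2) * r * ‖A‖ ^ 2 * Real.exp (-(√r / 4) * s) := by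
  have hr₀ : 0 < r := by linarith
  have hsqrt : √r ^ 2 = r := Real.sq_sqrt hr₀.le
  have hslope {t : ℝ} (ht : 0 ≤ t) (htα : t ^ α ≤ 2 * r) :
      ‖raySol' α φ (r * unitDir (-slantAngle)) A B t‖ ≤
        K * √r * ‖raySol α φ (r * unitDir (-slantAngle)) A B t‖ :=
    (hd.norm_raySol'_le_slant hα hφ hr ht htα).trans (by gcongr)
  have hsq := (isSolution_raySol (by linarith) φ _ A B).norm_sq_le_mul_exp (c := √r / 8) hd
    ((coerciveOn_rayPotential_slant hα hφ hr₀.le).mono (subset_univ _)) hs (norm_unitDir _).le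
    (by norm_num) (by positivity) (by positivity) (by rw [div_pow, hsqrt]; linarith)
    (hslope le_rfl (by rw [Real.zero_rpow (by linarith)]; positivity))
  rw [raySol_zero, show 2 * (√r / 8) = √r / 4 by ring,
    show K * √r / (√r / 8) = 8 * K by field_simp] at hsq
  have hslope_s := hslope hs hsα
  set y := raySol α φ (r * unitDir (-slantAngle)) A B s
  set y' := raySol' α φ (r * unitDir (-slantAngle)) A B s
  calc energy (7 / 4 * √r) y y' ≤ (7 / 4 * √r) ^ 2 * ‖y‖ ^ 2 + (K * √r * ‖y‖) ^ 2 := by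
        unfold energy
        gcongr
    _ = ((7 / 4) ^ 2 + K ^ 2) * r * ‖y‖ ^ 2 := by
        rw [mul_pow, mul_pow, mul_pow, hsqrt]
        ring
    _ ≤ (4 + K ^ 2) * r * (8 * K * ‖A‖ ^ 2 * Real.exp (-(√r / 4) * s)) := by
        gcongr
        norm_num
    _ = 8 * K * (4 + K ^ 2) * r * ‖A‖ ^ 2 * Real.exp (-(√r / 4) * s) := by ring

lemma slant_le_pi_div (hα : 0 < α) (hφ : (2 + α) * φ = 1 / 7) :
    φ ≤ Real.pi / (2 * (2 + α)) := by
  rw [le_div_iff₀ (by linarith)]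
  linarith [Real.pi_gt_three]

/-- Turning the ray back to the real axis costs less than the decay gained on the slanted ray. -/
lemma IsRecessive.energy_zero_le_slant (hd : IsRecessive α 0 (r * unitDir (-slantAngle)) A B)
    (hα : 133 / 200 < α) (hr : 1 ≤ r) (hs : 0 < s) (hsα : s ^ α ≤ 2 * r)
    (hK : 100 * (1 + 2 ^ α) ≤ K) :
    energy (7 / 4 * √r) (raySol α 0 (r * unitDir (-slantAngle)) A B s)
        (raySol' α 0 (r * unitDir (-slantAngle)) A B s) ≤
      8 * K * (4 + K ^ 2) * r * ‖A‖ ^ 2 * Real.exp (-s / 20) := by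
  have hα₀ : 0 < α := by linarith
  have hφ : (2 + α) * (1 / (7 * (2 + α))) = 1 / 7 := by field_simp
  set φ := 1 / (7 * (2 + α))
  have hφ₀ : 0 ≤ φ := by positivity
  have hφ_le : φ ≤ 2 / 35 := by nlinarith
  have hslant := (hd.rotate hα₀ hφ₀ (slant_le_pi_div hα₀ hφ)).energy_le_slant hα hφ hr hs.le hsα hK
  have hsqrt : 1 ≤ √r := Real.one_le_sqrt.2 hr
  have hK₀ : 0 ≤ K := hK.trans' (by positivity)
  have hq : s ^ α + ‖(r : ℂ) * unitDir (-slantAngle)‖ ≤ (7 / 4 * √r) ^ 2 := by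
    rw [norm_polar (by linarith), mul_pow, Real.sq_sqrt (by linarith)]
    linarith
  have hexp : 2 * (s * (7 / 4 * √r)) * |0 - φ| + -(√r / 4) * s ≤ -s / 20 := by
    rw [zero_sub, abs_neg, abs_of_nonneg hφ₀]
    have hsr : s ≤ s * √r := le_mul_of_one_le_right hs.le hsqrt
    have := mul_le_mul_of_nonneg_left hφ_le (hs.le.trans hsr)
    linarith
  calc _ ≤ Real.exp (2 * (s * (7 / 4 * √r)) * |0 - φ|) *
          (8 * K * (4 + K ^ 2) * r * ‖A‖ ^ 2 * Real.exp (-(√r / 4) * s)) :=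
        (energy_ray_le hα₀.le A B hs (by positivity) hq φ 0).trans (by gcongr)
    _ = 8 * K * (4 + K ^ 2) * r * ‖A‖ ^ 2 *
          Real.exp (2 * (s * (7 / 4 * √r)) * |0 - φ| + -(√r / 4) * s) := by
        rw [Real.exp_add]
        ring
    _ ≤ _ := by gcongr

lemma IsRecessive.norm_slope_le_slant (hd : IsRecessive α 0 (r * unitDir (-slantAngle)) A B)
    (hα : 133 / 200 < α) (hr : 1 ≤ r) : ‖B‖ ≤ 100 * (1 + 2 ^ α) * √r * ‖A‖ := by
  have hα₀ : 0 < α := by linarith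
  have hφ : (2 + α) * (1 / (7 * (2 + α))) = 1 / 7 := by field_simp
  have hslope := (hd.rotate hα₀ (by positivity) (slant_le_pi_div hα₀ hφ)).norm_raySol'_le_slant
    hα hφ hr le_rfl (by rw [Real.zero_rpow hα₀.ne']; linarith)
  rwa [norm_raySol'_zero, raySol_zero] at hslope

lemma IsRecessive.integral_norm_sq_le_slant
    (hd : IsRecessive α 0 (r * unitDir (-slantAngle)) A B) (hα : 133 / 200 < α) (hr : 1 ≤ r)
    (hK : 100 * (1 + 2 ^ α) ≤ K) :
    IntegrableOn (fun s ↦ ‖raySol α 0 (r * unitDir (-slantAngle)) A B s‖ ^ 2) (Ioi 0) ∧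
      ∫ s in Ioi (0 : ℝ), ‖raySol α 0 (r * unitDir (-slantAngle)) A B s‖ ^ 2 ≤
        176 * K * (4 + K ^ 2) * ‖A‖ ^ 2 := by
  have hα₀ : 0 < α := by linarith
  have hK₀ : 0 ≤ K := hK.trans' (by positivity)
  have hnorm := norm_polar (zero_le_one.trans hr) (-slantAngle)
  set S := (2 * r) ^ (1 / α)
  have hS : 0 < S := by positivity
  have hSα : S ^ α = 2 * r := rpow_one_div_rpow hα₀ (by positivity)
  set C := 8 * K * (4 + K ^ 2) * ‖A‖ ^ 2 with hC
  have : 0 ≤ C := by positivity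
  have hexp : IntegrableOn (fun s : ℝ ↦ Real.exp (-1 / 20 * s)) (Ioi 0) :=
    integrableOn_exp_mul_Ioi (by norm_num) 0
  have hint := hd.integral_norm_sq_le (μ := 7 / 4 * √r) (h := fun s ↦ C * Real.exp (-1 / 20 * s))
    hα₀ (hnorm.ge.trans' hr) (by positivity)
    (by rw [hnorm, mul_pow, Real.sq_sqrt (by linarith)]; linarith) hS (by rw [hnorm, hSα])
    ((hexp.mono_set Ioc_subset_Ioi_self).const_mul _) fun s hs ↦ by
      refine (hd.energy_zero_le_slant hα hr hs.1 ?_ hK).trans_eq ?_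
      · exact (Real.rpow_le_rpow hs.1.le hs.2 hα₀.le).trans_eq hSα
      · rw [hnorm, hC]
        ring_nf
  refine ⟨hint.1, hint.2.trans ?_⟩
  have hhead : ∫ s in Ioc 0 S, Real.exp (-1 / 20 * s) ≤ 20 := calc
    _ ≤ ∫ s in Ioi (0 : ℝ), Real.exp (-1 / 20 * s) :=
        setIntegral_mono_set hexp (ae_of_all _ fun s ↦ (Real.exp_pos _).le)
          Ioc_subset_Ioi_self.eventuallyLE
    _ = 20 := by
        rw [integral_exp_mul_Ioi (by norm_num), mul_zero, Real.exp_zero]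
        norm_num
  have htail : Real.exp (-1 / 20 * S) ≤ 1 := Real.exp_le_one_iff.2 (by linarith)
  calc (∫ s in Ioc 0 S, C * Real.exp (-1 / 20 * s)) + 2 * (C * Real.exp (-1 / 20 * S))
      ≤ C * 20 + 2 * (C * 1) := by
        rw [integral_const_mul]
        gcongr
    _ = 176 * K * (4 + K ^ 2) * ‖A‖ ^ 2 := by ring

end Slant

section Growth

variable {α r s S μ : ℝ} {lam A B : ℂ}

/-- The spectral parameter turned so that the eigenvalues become real: along the ray
`z = s e^{-iπ/(2(2+α))}` the equation has the potential `s^α - rotatedParameter α lam`. -/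
noncomputable def rotatedParameter (α : ℝ) (lam : ℂ) : ℂ := lam * unitDir (Real.pi / (2 + α))

lemma norm_rotatedParameter (α : ℝ) (lam : ℂ) : ‖rotatedParameter α lam‖ = ‖lam‖ := by
  rw [rotatedParameter, norm_mul, norm_unitDir, mul_one]

lemma abs_im_rotatedParameter_le (α : ℝ) (lam : ℂ) : |(rotatedParameter α lam).im| ≤ ‖lam‖ :=
  (Complex.abs_im_le_norm _).trans_eq (norm_rotatedParameter α lam)

lemma rayPotential_eq_sub_rotatedParameter (hα : 0 < α) (lam : ℂ) (s : ℝ) :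
    rayPotential α (Real.pi / (2 * (2 + α))) lam s = (s ^ α : ℝ) - rotatedParameter α lam := by
  have hquarter : (2 + α) * (Real.pi / (2 * (2 + α))) = Real.pi / 2 := by field_simp
  have hdouble : 2 * (Real.pi / (2 * (2 + α))) = Real.pi / (2 + α) := by field_simp
  have hunit : unitDir (Real.pi / 2) = -Complex.I := by
    apply Complex.ext <;> simp [unitDir_re, unitDir_im]
  rw [rayPotential, hquarter, hdouble, hunit, rotatedParameter]
  simp

lemma coerciveOn_rayPotential_rotatedParameter (hα : 0 < α) (hr : 0 < r) (hlam : ‖lam‖ ≤ r) :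
    CoerciveOn (rayPotential α (Real.pi / (2 * (2 + α))) lam)
      ⟨|(rotatedParameter α lam).im| / (2 * r), SignType.sign (rotatedParameter α lam).im⟩
      (|(rotatedParameter α lam).im| / (2 * r)) (|(rotatedParameter α lam).im| / 2)
      (Ioi 0) where
  le_re := le_rfl
  le_re_mul s hs := by
    set τ := (rotatedParameter α lam).im with hτ
    have hre : (rotatedParameter α lam).re ≤ r :=
      (Complex.re_le_norm _).trans ((norm_rotatedParameter α lam).trans_le hlam)
    have hsα : 0 ≤ s ^ α := Real.rpow_nonneg (le_of_lt hs) α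
    rw [rayPotential_eq_sub_rotatedParameter hα, Complex.mul_re, Complex.sub_re, Complex.sub_im,
      Complex.ofReal_re, Complex.ofReal_im, ← hτ, zero_sub, mul_neg, sub_neg_eq_add, sign_mul_self]
    calc |τ| / 2 = |τ| / (2 * r) * -r + |τ| := by
          field_simp
          ring
      _ ≤ |τ| / (2 * r) * (s ^ α - (rotatedParameter α lam).re) + |τ| := by
          gcongr
          linarith

lemma IsRecessive.abs_im_rotatedParameter_mul_norm_slope_le (hd : IsRecessive α 0 lam A B)
    (hα : 0 < α) (hr : 1 ≤ r) (hlam : ‖lam‖ ≤ r) :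
    |(rotatedParameter α lam).im| * ‖B‖ ≤ 12 * r ^ 2 * ‖A‖ := by
  have hq := coerciveOn_rayPotential_rotatedParameter hα (zero_lt_one.trans_le hr) hlam
  have hτ_le := (abs_im_rotatedParameter_le α lam).trans hlam
  set τ := (rotatedParameter α lam).im
  rcases eq_or_ne τ 0 with hτ | hτ
  · rw [hτ, abs_zero, zero_mul]
    positivity
  have : 0 < |τ| := abs_pos.2 hτ
  have hg : ‖(⟨|τ| / (2 * r), SignType.sign τ⟩ : ℂ)‖ ≤ 2 := by
    refine (Complex.norm_le_abs_re_add_abs_im _).trans ?_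
    have hre : |τ| / (2 * r) ≤ 1 := div_le_one_of_le₀ (by linarith) (by positivity)
    have him : |((SignType.sign τ : ℤ) : ℝ)| ≤ 1 := by
      rcases lt_or_gt_of_ne hτ with h | h <;> simp [h]
    rw [abs_of_nonneg (by positivity)]
    push_cast at him
    linarith
  have hslope := (isSolution_raySol hα _ lam A B).norm_deriv_le_of_decays (ℓ := 1) (ρ := 1)
    (M := 2 * r) (K := 6 * r ^ 2 / |τ|) (hd.rotate hα (by positivity) le_rfl) hq
    (fun s hs ↦ norm_rayPotential_le_two_mul hα.le hr hlam ⟨hs.1.le, by linarith [hs.2]⟩) le_rfl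
    one_pos one_pos (by positivity) (by positivity) (by positivity)
    (by
      rw [show 6 * r ^ 2 / |τ| * (|τ| / (2 * r)) = 3 * r by field_simp; norm_num]
      linarith)
    (by
      rw [show 6 * r ^ 2 / |τ| * (|τ| / 2) = 3 * r ^ 2 by field_simp; norm_num]
      nlinarith)
  rw [norm_raySol'_zero, raySol_zero] at hslope
  calc |τ| * ‖B‖ ≤ |τ| * (6 * r ^ 2 / |τ| * 2 * ‖A‖) := by
        gcongr
        exact hslope.trans (by gcongr)
    _ = 12 * r ^ 2 * ‖A‖ := by
        field_simp
        ring

lemma IsRecessive.integral_norm_sq_le_exp (hd : IsRecessive α 0 lam A B) (hα : 0 < α)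
    (hr : 1 ≤ ‖lam‖) (hS : 0 < S) (hSα : S ^ α = 2 * ‖lam‖) :
    IntegrableOn (fun s ↦ ‖raySol α 0 lam A B s‖ ^ 2) (Ioi 0) ∧
      ∫ s in Ioi (0 : ℝ), ‖raySol α 0 lam A B s‖ ^ 2 ≤
        (S + 2) * (Real.exp (4 * √‖lam‖ * S) * (4 * ‖lam‖ * ‖A‖ ^ 2 + ‖B‖ ^ 2)) := by
  set r := ‖lam‖
  set D := Real.exp (4 * √r * S) * (4 * r * ‖A‖ ^ 2 + ‖B‖ ^ 2)
  have hμ : (2 * √r) ^ 2 = 4 * r := by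
    rw [mul_pow, Real.sq_sqrt (by linarith)]
    norm_num
  have henergy (s) (hs : s ∈ Ioc 0 S) :
      energy (2 * √r) (raySol α 0 lam A B s) (raySol' α 0 lam A B s) ≤ r * D := by
    have hgrowth := (isSolution_raySol hα 0 lam A B).energy_le (μ := 2 * √r) le_rfl hs.1.le
      (by positivity) fun t ht ↦ by
        have := Real.rpow_le_rpow ht.1.le (ht.2.le.trans hs.2) hα.le
        linarith [norm_rayPotential_le α 0 lam ht.1.le]
    rw [energy, energy, norm_raySol'_zero, raySol_zero, hμ, sub_zero,
      show 2 * (2 * √r) = 4 * √r by ring] at hgrowth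
    rw [energy, hμ]
    calc _ ≤ Real.exp (4 * √r * s) * (4 * r * ‖A‖ ^ 2 + ‖B‖ ^ 2) := hgrowth
      _ ≤ D := by
          refine mul_le_mul_of_nonneg_right (Real.exp_le_exp.2 ?_) (by positivity)
          exact mul_le_mul_of_nonneg_left hs.2 (by positivity)
      _ ≤ r * D := le_mul_of_one_le_left (by positivity) hr
  have hint := hd.integral_norm_sq_le (h := fun _ ↦ D) hα hr (by positivity)
    (by rw [hμ]; linarith) hS hSα (by simp) henergy
  refine ⟨hint.1, hint.2.trans_eq ?_⟩
  rw [setIntegral_const, measureReal_def, Real.volume_Ioc, sub_zero,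
    ENNReal.toReal_ofReal hS.le, smul_eq_mul]
  ring

lemma sqrt_mul_two_mul_rpow (α : ℝ) {r : ℝ} (hr : 0 < r) :
    √r * (2 * r) ^ (1 / α) = 2 ^ (1 / α) * r ^ (1 / 2 + 1 / α) := by
  rw [Real.mul_rpow zero_le_two hr.le, Real.rpow_add hr, Real.sqrt_eq_rpow]
  ring

lemma IsRecessive.sq_mul_energy_zero_le (hd : IsRecessive α 0 lam A B) (hα : 0 < α)
    (hr : 1 ≤ ‖lam‖) :
    (rotatedParameter α lam).im ^ 2 * (4 * ‖lam‖ * ‖A‖ ^ 2 + ‖B‖ ^ 2) ≤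
      148 * ‖lam‖ ^ 4 * ‖A‖ ^ 2 := by
  have hτ := abs_im_rotatedParameter_le α lam
  have hB := hd.abs_im_rotatedParameter_mul_norm_slope_le hα hr le_rfl
  set r := ‖lam‖
  rw [← sq_abs]
  set τ := |(rotatedParameter α lam).im|
  have : 0 ≤ τ := abs_nonneg _
  calc τ ^ 2 * (4 * r * ‖A‖ ^ 2 + ‖B‖ ^ 2)
      = 4 * (τ ^ 2 * r) * ‖A‖ ^ 2 + (τ * ‖B‖) ^ 2 := by ring
    _ ≤ 4 * (r ^ 2 * r) * ‖A‖ ^ 2 + (12 * r ^ 2 * ‖A‖) ^ 2 := by gcongr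
    _ = 4 * r ^ 3 * ‖A‖ ^ 2 + 144 * r ^ 4 * ‖A‖ ^ 2 := by ring
    _ ≤ 4 * r ^ 4 * ‖A‖ ^ 2 + 144 * r ^ 4 * ‖A‖ ^ 2 := by
        gcongr
        norm_num
    _ = 148 * r ^ 4 * ‖A‖ ^ 2 := by ring

lemma le_rpow_half_add_one_div_sq {r : ℝ} (hα : 0 < α) (hr : 1 ≤ r) :
    r ≤ (r ^ (1 / 2 + 1 / α)) ^ 2 := by
  have hα' : 0 < 1 / α := by positivity
  calc r = r ^ (1 : ℝ) := (Real.rpow_one r).symm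
    _ ≤ r ^ ((1 / 2 + 1 / α) * (2 : ℕ)) :=
        Real.rpow_le_rpow_of_exponent_le hr (by push_cast; linarith)
    _ = (r ^ (1 / 2 + 1 / α)) ^ 2 := Real.rpow_mul_natCast (by linarith) _ 2

lemma exists_sq_mul_integral_norm_sq_le_exp (hα : 0 < α) :
    ∃ C, 0 ≤ C ∧ ∀ lam A B : ℂ, IsRecessive α 0 lam A B → 1 ≤ ‖lam‖ →
      IntegrableOn (fun s ↦ ‖raySol α 0 lam A B s‖ ^ 2) (Ioi 0) ∧
      (rotatedParameter α lam).im ^ 2 * ∫ s in Ioi (0 : ℝ), ‖raySol α 0 lam A B s‖ ^ 2 ≤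
        Real.exp (C * ‖lam‖ ^ (1 / 2 + 1 / α)) * ‖A‖ ^ 2 := by
  set c : ℝ := 2 ^ (1 / α)
  refine ⟨5 * c + 158, by positivity, fun lam A B hd hr ↦ ?_⟩
  have hr₀ : 0 < ‖lam‖ := by linarith
  have hrN := le_rpow_half_add_one_div_sq hα hr
  set S := (2 * ‖lam‖) ^ (1 / α)
  have hint := hd.integral_norm_sq_le_exp hα hr (S := S) (by positivity)
    (rpow_one_div_rpow hα (by positivity))
  have henergy := hd.sq_mul_energy_zero_le hα hr
  have hSN := sqrt_mul_two_mul_rpow α hr₀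
  set r := ‖lam‖
  set N := r ^ (1 / 2 + 1 / α)
  set τ := (rotatedParameter α lam).im
  refine ⟨hint.1, (mul_le_mul_of_nonneg_left hint.2 (sq_nonneg τ)).trans ?_⟩
  have hN : 1 ≤ N := Real.one_le_rpow hr (by positivity)
  have hS_le : S + 2 ≤ (c + 2) * N := by
    have : S ≤ √r * S := le_mul_of_one_le_left (by positivity) (Real.one_le_sqrt.2 hr)
    linarith
  have hle_exp (x : ℝ) : x ≤ Real.exp x := by linarith [Real.add_one_le_exp x]
  calc τ ^ 2 * ((S + 2) * (Real.exp (4 * √r * S) * (4 * r * ‖A‖ ^ 2 + ‖B‖ ^ 2)))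
      = (S + 2) * (Real.exp (4 * (√r * S)) * (τ ^ 2 * (4 * r * ‖A‖ ^ 2 + ‖B‖ ^ 2))) := by
        rw [← mul_assoc 4]
        ring
    _ ≤ (c + 2) * N * (Real.exp (4 * (c * N)) * (148 * (N ^ 2) ^ 4 * ‖A‖ ^ 2)) := by
        rw [← hSN]
        gcongr ?_ * (_ * ?_)
        exact henergy.trans (by gcongr)
    _ = (c + 2) * N * Real.exp (4 * (c * N)) * (148 * N ^ 8) * ‖A‖ ^ 2 := by ring
    _ ≤ Real.exp ((c + 2) * N) * Real.exp (4 * (c * N)) * (Real.exp (148 * N) * Real.exp N ^ 8) *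
          ‖A‖ ^ 2 := by
        gcongr
        · exact hle_exp _
        · exact (hle_exp 148).trans (Real.exp_le_exp.2 (by linarith))
        · exact hle_exp N
    _ = Real.exp ((5 * c + 158) * N) * ‖A‖ ^ 2 := by
        rw [← Real.exp_nat_mul, ← Real.exp_add, ← Real.exp_add, ← Real.exp_add]
        push_cast
        ring_nf

end Growth

/-! ### Entire functions bounded in sectors -/

lemma exp_log_add_angle {r : ℝ} (hr : 0 < r) (θ : ℝ) :
    Complex.exp (Real.log r + θ * Complex.I) = r * unitDir (-θ) := by
  rw [Complex.exp_add, ← Complex.ofReal_exp, Real.exp_log hr, unitDir, Complex.ofReal_neg, neg_neg]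

lemma exists_norm_le_of_norm_le {F : ℂ → ℂ} (hF : Continuous F) (R : ℝ) :
    ∃ M, 0 ≤ M ∧ ∀ z, ‖z‖ ≤ R → ‖F z‖ ≤ M := by
  obtain ⟨M, hM⟩ := (isCompact_closedBall (0 : ℂ) R).exists_bound_of_continuousOn hF.continuousOn
  exact ⟨max M 0, le_max_right _ _, fun z hz ↦
    (hM z (mem_closedBall_zero_iff.2 hz)).trans (le_max_left _ _)⟩

lemma exists_norm_le_exp_strip {F : ℂ → ℂ} (hF : Continuous F) {p C : ℝ} (hC : 0 ≤ C)
    (hgrow : ∀ z, 1 ≤ ‖z‖ → ‖F z‖ ≤ Real.exp (C * ‖z‖ ^ p)) :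
    ∃ M, ∀ w, ‖F (Complex.exp w)‖ ≤ M * Real.exp (C * Real.exp (p * |w.re|)) := by
  obtain ⟨M, -, hM⟩ := exists_norm_le_of_norm_le hF 1
  refine ⟨max 1 M, fun w ↦ ?_⟩
  have hone : 1 ≤ max 1 M := le_max_left 1 M
  rcases le_total 0 w.re with hw | hw
  · have hnorm : ‖Complex.exp w‖ ^ p = Real.exp (p * |w.re|) := by
      rw [Complex.norm_exp, ← Real.exp_mul, abs_of_nonneg hw, mul_comm]
    rw [← hnorm]
    exact (hgrow _ (by rw [Complex.norm_exp]; exact Real.one_le_exp hw)).trans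
      (le_mul_of_one_le_left (Real.exp_pos _).le hone)
  · calc ‖F (Complex.exp w)‖ ≤ M :=
          hM _ (by rw [Complex.norm_exp]; exact Real.exp_le_one_iff.2 hw)
      _ ≤ max 1 M * 1 := by
          rw [mul_one]
          exact le_max_right 1 M
      _ ≤ max 1 M * Real.exp (C * Real.exp (p * |w.re|)) := by
          gcongr
          exact Real.one_le_exp (by positivity)

lemma exists_norm_le_of_sector {F : ℂ → ℂ} (hF : Differentiable ℂ F) {a b p C M : ℝ}
    (hp : p < Real.pi / (b - a)) (hC : 0 ≤ C)
    (hgrow : ∀ z, 1 ≤ ‖z‖ → ‖F z‖ ≤ Real.exp (C * ‖z‖ ^ p))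
    (ha : ∀ r : ℝ, 1 ≤ r → ‖F (r * unitDir (-a))‖ ≤ M)
    (hb : ∀ r : ℝ, 1 ≤ r → ‖F (r * unitDir (-b))‖ ≤ M) :
    ∃ M', ∀ r : ℝ, 1 ≤ r → ∀ θ ∈ Icc a b, ‖F (r * unitDir (-θ))‖ ≤ M' := by
  obtain ⟨M₀, -, hM₀⟩ := exists_norm_le_of_norm_le hF.continuous 1
  obtain ⟨M₁, hM₁⟩ := exists_norm_le_exp_strip hF.continuous hC hgrow
  have hboundary (θ) (hθ : ∀ r : ℝ, 1 ≤ r → ‖F (r * unitDir (-θ))‖ ≤ M) (z : ℂ)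
      (hz : z.im = θ) : ‖F (Complex.exp z)‖ ≤ max M M₀ := by
    have hexp : Complex.exp z = (Real.exp z.re : ℝ) * unitDir (-θ) := by
      rw [← exp_log_add_angle (Real.exp_pos _), Real.log_exp, ← hz, Complex.re_add_im]
    rcases le_total 1 (Real.exp z.re) with h | h
    · rw [hexp]
      exact (hθ _ h).trans (le_max_left _ _)
    · exact (hM₀ _ (by rwa [Complex.norm_exp])).trans (le_max_right _ _)
  refine ⟨max M M₀, fun r hr θ hθ ↦ ?_⟩
  rw [← exp_log_add_angle (by linarith : 0 < r)]
  refine PhragmenLindelof.horizontal_strip (f := fun w ↦ F (Complex.exp w)) (a := a) (b := b)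
    (hF.comp Complex.differentiable_exp).diffContOnCl ⟨p, hp, C, ?_⟩ (hboundary a ha)
    (hboundary b hb) (by simpa using hθ.1) (by simpa using hθ.2)
  refine Asymptotics.IsBigO.of_bound M₁ (.of_forall fun w ↦ ?_)
  rw [Real.norm_of_nonneg (Real.exp_pos _).le]
  exact hM₁ w

lemma exists_angle_mem_Ico (a : ℝ) (z : ℂ) :
    ∃ θ ∈ Ico a (a + 2 * Real.pi), z = (‖z‖ : ℝ) * unitDir (-θ) := by
  obtain ⟨n, hn, -⟩ := existsUnique_add_zsmul_mem_Ico Real.two_pi_pos z.arg a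
  refine ⟨_, hn, ?_⟩
  conv_lhs => rw [← Complex.norm_mul_exp_arg_mul_I z]
  congr 1
  rw [unitDir, Complex.exp_eq_exp_iff_exists_int]
  refine ⟨-n, ?_⟩
  push_cast [zsmul_eq_mul]
  ring

lemma unitDir_neg_add_two_pi (θ : ℝ) : unitDir (-(θ + 2 * Real.pi)) = unitDir (-θ) := by
  simp only [unitDir]
  rw [Complex.exp_eq_exp_iff_exists_int]
  exact ⟨1, by push_cast; ring⟩

lemma norm_le_of_norm_le_rpow_neg {F : ℂ → ℂ} {c d δ M : ℝ} (hδ : 0 ≤ δ)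
    (hcone : ∀ r : ℝ, 1 ≤ r → ∀ θ ∈ Icc c d, ‖F (r * unitDir (-θ))‖ ≤ M * r ^ (-δ))
    {r : ℝ} (hr : 1 ≤ r) {θ : ℝ} (hθ : θ ∈ Icc c d) : ‖F (r * unitDir (-θ))‖ ≤ M := by
  have hM : 0 ≤ M := by simpa using (norm_nonneg _).trans (hcone 1 le_rfl θ hθ)
  exact (hcone r hr θ hθ).trans (mul_le_of_le_one_right hM
    (Real.rpow_le_one_of_one_le_of_nonpos hr (neg_nonpos.2 hδ)))

lemma eq_zero_of_norm_le_sector {F : ℂ → ℂ} (hF : Differentiable ℂ F) {a b δ M M' : ℝ}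
    (hb : b ≤ a + 2 * Real.pi) (hδ : 0 < δ)
    (hcone : ∀ r : ℝ, 1 ≤ r → ∀ θ ∈ Icc b (a + 2 * Real.pi),
      ‖F (r * unitDir (-θ))‖ ≤ M * r ^ (-δ))
    (hsector : ∀ r : ℝ, 1 ≤ r → ∀ θ ∈ Icc a b, ‖F (r * unitDir (-θ))‖ ≤ M') (z : ℂ) :
    F z = 0 := by
  obtain ⟨M₀, -, hM₀⟩ := exists_norm_le_of_norm_le hF.continuous 1
  have hbounded : Bornology.IsBounded (range F) := by
    rw [isBounded_iff_forall_norm_le]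
    refine ⟨max M₀ (max M M'), ?_⟩
    rintro _ ⟨w, rfl⟩
    rcases le_total ‖w‖ 1 with hw | hw
    · exact (hM₀ w hw).trans (le_max_left _ _)
    refine le_trans ?_ (le_max_right _ _)
    obtain ⟨θ, hθ, hpolar⟩ := exists_angle_mem_Ico a w
    rw [hpolar]
    rcases le_total θ b with hθb | hθb
    · exact (hsector _ hw θ ⟨hθ.1, hθb⟩).trans (le_max_right _ _)
    · exact (norm_le_of_norm_le_rpow_neg hδ.le hcone hw ⟨hθb, hθ.2.le⟩).trans (le_max_left _ _)
  have hlim : Tendsto (fun r : ℝ ↦ M * r ^ (-δ)) atTop (𝓝 0) := by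
    simpa using (tendsto_rpow_neg_atTop hδ).const_mul M
  refine norm_le_zero_iff.1 (ge_of_tendsto hlim ?_)
  filter_upwards [eventually_ge_atTop 1] with r hr
  rw [hF.apply_eq_apply_of_bounded hbounded z (r * unitDir (-b))]
  exact hcone r hr b ⟨le_rfl, hb⟩

lemma eq_zero_of_growth_of_cone {F : ℂ → ℂ} (hF : Differentiable ℂ F) {a b p C δ M : ℝ}
    (hb : b ≤ a + 2 * Real.pi) (hp : p < Real.pi / (b - a)) (hC : 0 ≤ C)
    (hgrow : ∀ z, 1 ≤ ‖z‖ → ‖F z‖ ≤ Real.exp (C * ‖z‖ ^ p)) (hδ : 0 < δ)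
    (hcone : ∀ r : ℝ, 1 ≤ r → ∀ θ ∈ Icc b (a + 2 * Real.pi),
      ‖F (r * unitDir (-θ))‖ ≤ M * r ^ (-δ)) (z : ℂ) :
    F z = 0 := by
  have hbound {r} (hr : 1 ≤ r) {θ} := norm_le_of_norm_le_rpow_neg hδ.le hcone hr (θ := θ)
  obtain ⟨M', hM'⟩ := exists_norm_le_of_sector hF hp hC hgrow
    (fun r hr ↦ by simpa only [unitDir_neg_add_two_pi] using hbound hr ⟨hb, le_rfl⟩)
    (fun r hr ↦ hbound hr ⟨le_rfl, hb⟩)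
  exact eq_zero_of_norm_le_sector hF hb hδ hcone hM' z

/-- A ray on which the function is bounded splits the complementary sector, so that only the two
smaller openings restrict the order. -/
lemma eq_zero_of_growth_of_cone_of_ray {F : ℂ → ℂ} (hF : Differentiable ℂ F)
    {a b γ p C δ M N : ℝ} (hb : b ≤ a + 2 * Real.pi) (hpa : p < Real.pi / (γ - a))
    (hpb : p < Real.pi / (b - γ)) (hC : 0 ≤ C)
    (hgrow : ∀ z, 1 ≤ ‖z‖ → ‖F z‖ ≤ Real.exp (C * ‖z‖ ^ p)) (hδ : 0 < δ)
    (hcone : ∀ r : ℝ, 1 ≤ r → ∀ θ ∈ Icc b (a + 2 * Real.pi),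
      ‖F (r * unitDir (-θ))‖ ≤ M * r ^ (-δ))
    (hray : ∀ r : ℝ, 1 ≤ r → ‖F (r * unitDir (-γ))‖ ≤ N) (z : ℂ) :
    F z = 0 := by
  have hbound {r} (hr : 1 ≤ r) {θ} (hθ : θ ∈ Icc b (a + 2 * Real.pi)) :=
    (norm_le_of_norm_le_rpow_neg hδ.le hcone hr hθ).trans (le_max_left M N)
  have hmid (r : ℝ) (hr : 1 ≤ r) := (hray r hr).trans (le_max_right M N)
  obtain ⟨M₁, hM₁⟩ := exists_norm_le_of_sector hF hpa hC hgrow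
    (fun r hr ↦ by simpa only [unitDir_neg_add_two_pi] using hbound hr ⟨hb, le_rfl⟩) hmid
  obtain ⟨M₂, hM₂⟩ := exists_norm_le_of_sector hF hpb hC hgrow hmid
    (fun r hr ↦ hbound hr ⟨le_rfl, hb⟩)
  refine eq_zero_of_norm_le_sector hF hb hδ hcone (M' := max M₁ M₂) (fun r hr θ hθ ↦ ?_) z
  rcases le_total θ γ with h | h
  · exact (hM₁ r hr θ ⟨hθ.1, h⟩).trans (le_max_left _ _)
  · exact (hM₂ r hr θ ⟨h, hθ.2⟩).trans (le_max_right _ _)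

lemma norm_sq_sub_one_of_norm_eq_one {w : ℂ} (hw : ‖w‖ = 1) : ‖w ^ 2 - 1‖ = 2 * |w.im| := by
  have hconj : w * conj w = 1 := by simp [Complex.mul_conj, Complex.normSq_eq_norm_sq, hw]
  have hfactor : w ^ 2 - 1 = w * (w - conj w) := by rw [← hconj]; ring
  rw [hfactor, norm_mul, hw, one_mul, Complex.sub_conj]
  simp

lemma one_le_norm_sub_re_sq_sub_one (t : ℂ) : 1 ≤ ‖(t - t.re) ^ 2 - 1‖ := by
  have hreal : (t - t.re) ^ 2 - 1 = ((-(t.im ^ 2 + 1) : ℝ) : ℂ) := by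
    apply Complex.ext <;> simp [sq]
    ring
  rw [hreal, Complex.norm_real, Real.norm_eq_abs, abs_neg, abs_of_nonneg (by positivity)]
  linarith [sq_nonneg t.im]

/-- The maximum principle on the unit disc around `t.re`, applied to `((z - t.re) ^ 2 - 1) * H z`:
on the unit circle the first factor has modulus `2 |z.im|`. -/
lemma norm_le_two_mul_of_abs_im_mul_norm_le {H : ℂ → ℂ} (hH : Differentiable ℂ H) {t : ℂ} {E : ℝ}
    (ht : |t.im| < 1) (hE : ∀ z : ℂ, ‖z - t.re‖ = 1 → |z.im| * ‖H z‖ ≤ E) : ‖H t‖ ≤ 2 * E := by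
  have hmem : t ∈ closure (Metric.ball (t.re : ℂ) 1) := by
    refine subset_closure ?_
    have him : t - t.re = t.im * Complex.I := by apply Complex.ext <;> simp
    rwa [Metric.mem_ball, dist_eq_norm, him, norm_mul, Complex.norm_I, mul_one, Complex.norm_real]
  have hmax := Complex.norm_le_of_forall_mem_frontier_norm_le
    (f := fun z ↦ ((z - t.re) ^ 2 - 1) * H z) (C := 2 * E) Metric.isBounded_ball
    ((((differentiable_id.sub_const _).pow 2).sub_const 1).mul hH).diffContOnCl
    (fun z hz ↦ by
      rw [frontier_ball _ one_ne_zero, mem_sphere_iff_norm] at hz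
      rw [norm_mul, norm_sq_sub_one_of_norm_eq_one hz, mul_assoc, Complex.sub_im,
        Complex.ofReal_im, sub_zero]
      gcongr
      exact hE z hz) hmem
  rw [norm_mul] at hmax
  exact (le_mul_of_one_le_left (norm_nonneg _) (one_le_norm_sub_re_sq_sub_one t)).trans hmax

lemma norm_le_two_mul_exp_of_abs_im_mul_norm_le {H : ℂ → ℂ} (hH : Differentiable ℂ H) {C p : ℝ}
    (hC : 0 ≤ C) (hp : 0 ≤ p)
    (hbound : ∀ t, 1 ≤ ‖t‖ → |t.im| * ‖H t‖ ≤ Real.exp (C * ‖t‖ ^ p)) {t : ℂ} (ht : 3 ≤ ‖t‖) :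
    ‖H t‖ ≤ 2 * Real.exp (C * (3 * ‖t‖) ^ p) := by
  rcases le_or_gt 1 |t.im| with him | him
  · calc ‖H t‖ ≤ |t.im| * ‖H t‖ := le_mul_of_one_le_left (norm_nonneg _) him
      _ ≤ Real.exp (C * ‖t‖ ^ p) := hbound t (by linarith)
      _ ≤ Real.exp (C * (3 * ‖t‖) ^ p) := by
          gcongr
          linarith
      _ ≤ 2 * Real.exp (C * (3 * ‖t‖) ^ p) := by linarith [Real.exp_pos (C * (3 * ‖t‖) ^ p)]
  · refine norm_le_two_mul_of_abs_im_mul_norm_le hH him fun z hz ↦ ?_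
    have hre : |t.re| ≤ ‖t‖ := Complex.abs_re_le_norm t
    have hre₂ : 2 ≤ |t.re| := by linarith [Complex.norm_le_abs_re_add_abs_im t]
    have hdist := abs_le.1 (abs_norm_sub_norm_le z t.re)
    rw [hz, Complex.norm_real, Real.norm_eq_abs] at hdist
    refine (hbound z (by linarith)).trans ?_
    gcongr
    linarith

lemma exists_norm_le_exp_of_abs_im_mul_norm_le {H : ℂ → ℂ} (hH : Differentiable ℂ H) {C p : ℝ}
    (hC : 0 ≤ C) (hp : 0 ≤ p)
    (hbound : ∀ t, 1 ≤ ‖t‖ → |t.im| * ‖H t‖ ≤ Real.exp (C * ‖t‖ ^ p)) :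
    ∃ C', 0 ≤ C' ∧ ∀ t, 1 ≤ ‖t‖ → ‖H t‖ ≤ Real.exp (C' * ‖t‖ ^ p) := by
  obtain ⟨M, hM, hM_le⟩ := exists_norm_le_of_norm_le hH.continuous 3
  refine ⟨C * 3 ^ p + 1 + M, by positivity, fun t ht ↦ ?_⟩
  have htp : 1 ≤ ‖t‖ ^ p := Real.one_le_rpow ht hp
  rcases le_total ‖t‖ 3 with ht₃ | ht₃
  · calc ‖H t‖ ≤ M := hM_le t ht₃
      _ ≤ Real.exp M := by linarith [Real.add_one_le_exp M]
      _ ≤ Real.exp ((C * 3 ^ p + 1 + M) * ‖t‖ ^ p) := by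
        refine Real.exp_le_exp.2 ((le_mul_of_one_le_right hM htp).trans ?_)
        gcongr
        exact le_add_of_nonneg_left (by positivity)
  · calc ‖H t‖ ≤ 2 * Real.exp (C * (3 * ‖t‖) ^ p) :=
          norm_le_two_mul_exp_of_abs_im_mul_norm_le hH hC hp hbound ht₃
      _ ≤ Real.exp 1 * Real.exp (C * (3 * ‖t‖) ^ p) := by
        gcongr
        linarith [Real.add_one_le_exp 1]
      _ = Real.exp (1 + C * 3 ^ p * ‖t‖ ^ p) := by
        rw [← Real.exp_add, Real.mul_rpow (by norm_num) (norm_nonneg _), mul_assoc]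
      _ ≤ Real.exp ((C * 3 ^ p + 1 + M) * ‖t‖ ^ p) := by
        refine Real.exp_le_exp.2 ?_
        rw [add_mul, add_mul, one_mul, add_comm (1 : ℝ)]
        have : 0 ≤ M * ‖t‖ ^ p := by positivity
        linarith

/-! ### Pairing with recessive solutions -/

lemma integrableOn_mul_and_norm_setIntegral_mul_le {f y : ℝ → ℂ} {s t : Set ℝ} (hst : s ⊆ t)
    (hf : MemLp f 2 (volume.restrict t)) (hy : AEStronglyMeasurable y (volume.restrict s))
    (hy2 : IntegrableOn (fun x ↦ ‖y x‖ ^ 2) s) :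
    IntegrableOn (fun x ↦ y x * f x) s ∧
      ‖∫ x in s, y x * f x‖ ≤ √(∫ x in s, ‖y x‖ ^ 2) * √(∫ x in t, ‖f x‖ ^ 2) := by
  have hfs : MemLp f 2 (volume.restrict s) := hf.mono_measure (Measure.restrict_mono hst le_rfl)
  have hys : MemLp y 2 (volume.restrict s) := (memLp_two_iff_integrable_sq_norm hy).2 hy2
  have hf2 : IntegrableOn (fun x ↦ ‖f x‖ ^ 2) t := (memLp_two_iff_integrable_sq_norm hf.1).1 hf
  have holder := integral_mul_norm_le_Lp_mul_Lq (μ := volume.restrict s) (f := y) (g := f)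
    Real.HolderConjugate.two_two (by simpa using hys) (by simpa using hfs)
  simp only [Real.rpow_two, ← Real.sqrt_eq_rpow] at holder
  refine ⟨hys.integrable_mul hfs, ?_⟩
  calc ‖∫ x in s, y x * f x‖ ≤ ∫ x in s, ‖y x * f x‖ := norm_integral_le_integral_norm _
    _ = ∫ x in s, ‖y x‖ * ‖f x‖ := by simp only [norm_mul]
    _ ≤ √(∫ x in s, ‖y x‖ ^ 2) * √(∫ x in s, ‖f x‖ ^ 2) := holder
    _ ≤ √(∫ x in s, ‖y x‖ ^ 2) * √(∫ x in t, ‖f x‖ ^ 2) := by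
        gcongr ?_ * √?_
        exact setIntegral_mono_set hf2 (ae_of_all _ fun x ↦ by positivity) hst.eventuallyLE

section ParametricIntegral

variable {μ : Measure ℝ} {K : ℂ → ℝ → ℂ} {f : ℝ → ℂ}

lemma aestronglyMeasurable_deriv_parameter (hK : ∀ s, Differentiable ℂ fun lam ↦ K lam s)
    (hm : ∀ lam, AEStronglyMeasurable (K lam) μ) (lam₀ : ℂ) :
    AEStronglyMeasurable (fun s ↦ deriv (fun lam ↦ K lam s) lam₀) μ := by
  refine aestronglyMeasurable_of_tendsto_ae atTop
    (f := fun (n : ℕ) s ↦ ((n : ℂ) + 1) * (K (lam₀ + ((n : ℂ) + 1)⁻¹) s - K lam₀ s))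
    (fun n ↦ ((hm _).sub (hm _)).const_mul _) (ae_of_all _ fun s ↦ ?_)
  have hinv : Tendsto (fun n : ℕ ↦ ((n : ℂ) + 1)⁻¹) atTop (𝓝[≠] 0) := by
    refine tendsto_nhdsWithin_iff.2 ⟨?_, .of_forall fun n ↦ ?_⟩
    · simpa only [one_div] using tendsto_one_div_add_atTop_nhds_zero_nat (𝕜 := ℂ)
    · exact inv_ne_zero (Nat.cast_add_one_ne_zero n)
  simpa [Function.comp_def] using ((hK s) lam₀).hasDerivAt.tendsto_slope_zero.comp hinv

lemma differentiable_integral_mul (hK : ∀ s, Differentiable ℂ fun lam ↦ K lam s)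
    (hm : ∀ lam, AEStronglyMeasurable (K lam) μ)
    (hb : ∀ R : ℝ, ∃ M, ∀ᵐ s ∂μ, ∀ lam, ‖lam‖ ≤ R → ‖K lam s‖ ≤ M) (hf : Integrable f μ) :
    Differentiable ℂ fun lam ↦ ∫ s, K lam s * f s ∂μ := by
  intro lam₀
  obtain ⟨M, hM⟩ := hb (‖lam₀‖ + 2)
  have hderiv : ∀ᵐ s ∂μ, ∀ lam ∈ Metric.ball lam₀ 1, ‖deriv (fun z ↦ K z s) lam‖ ≤ M := by
    filter_upwards [hM] with s hs lam hlam
    have hlam₀ := norm_lt_of_mem_ball hlam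
    have hcauchy := Complex.norm_deriv_le_of_forall_mem_sphere_norm_le (c := lam) one_pos
      (hK s).diffContOnCl fun z hz ↦ hs z <| by
        linarith [norm_le_norm_add_norm_sub' z lam, mem_sphere_iff_norm.1 hz]
    rwa [div_one] at hcauchy
  refine (hasDerivAt_integral_of_dominated_loc_of_deriv_le (μ := μ) (𝕜 := ℂ)
    (F := fun lam s ↦ K lam s * f s) (F' := fun lam s ↦ deriv (fun z ↦ K z s) lam * f s)
    (bound := fun s ↦ M * ‖f s‖) (Metric.ball_mem_nhds lam₀ one_pos)
    (.of_forall fun lam ↦ (hm lam).mul hf.1) (hf.bdd_mul (c := M) (hm lam₀) ?_)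
    ((aestronglyMeasurable_deriv_parameter hK hm lam₀).mul hf.1) ?_ (hf.norm.const_mul M)
    (ae_of_all _ fun s lam _ ↦ ((hK s) lam).hasDerivAt.mul_const (f s))).2.differentiableAt
  · filter_upwards [hM] with s hs using hs lam₀ (by linarith)
  · filter_upwards [hderiv] with s hs lam hlam
    rw [norm_mul]
    exact mul_le_mul_of_nonneg_right (hs lam hlam) (norm_nonneg _)

end ParametricIntegral

/-- The integral over `(0, x]` of `f` against the basic solution of index `σ`. -/
noncomputable def partialPairing (α : ℝ) (f : ℝ → ℂ) (σ : ℕ) (x : ℝ) (lam : ℂ) : ℂ :=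
  ∫ s in Ioc 0 x, rayBasis α σ 0 lam s * f s

/-- The bilinear pairing of `f` with the solution with initial data `(A, B)`; it is meaningful when
that solution is square integrable. -/
noncomputable def pairing (α : ℝ) (f : ℝ → ℂ) (lam A B : ℂ) : ℂ :=
  ∫ s in Ioi (0 : ℝ), raySol α 0 lam A B s * f s

section Pairing

variable {α x T : ℝ} {σ : ℕ} {f : ℝ → ℂ} {lam A B A₁ B₁ A₂ B₂ : ℂ}

lemma integrableOn_Ioc_of_memLp (hf : MemLp f 2 (volume.restrict (Ioi 0))) (x : ℝ) :
    IntegrableOn f (Ioc 0 x) :=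
  (hf.mono_measure (Measure.restrict_mono Ioc_subset_Ioi_self le_rfl)).integrable one_le_two

lemma aestronglyMeasurable_rayBasis (hα : 0 < α) (hσ : σ ≤ 1) (lam : ℂ) (x : ℝ) :
    AEStronglyMeasurable (rayBasis α σ 0 lam) (volume.restrict (Ioc 0 x)) :=
  ((isSolution_rayBasis hα hσ 0 lam).continuousOn.mono fun _ hs ↦ hs.1.le).aestronglyMeasurable
    measurableSet_Ioc

lemma aestronglyMeasurable_raySol (hα : 0 < α) (lam A B : ℂ) (hx : 0 ≤ x) :
    AEStronglyMeasurable (raySol α 0 lam A B) (volume.restrict (Ioi x)) :=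
  ((isSolution_raySol hα 0 lam A B).continuousOn.mono
    fun _ hs ↦ hx.trans (le_of_lt hs)).aestronglyMeasurable measurableSet_Ioi

lemma ae_norm_rayBasis_le (hα : 0 ≤ α) (hσ : σ ≤ 1) (x : ℝ) (lam : ℂ) :
    ∀ᵐ s ∂volume.restrict (Ioc 0 x),
      ‖rayBasis α σ 0 lam s‖ ≤ (1 + x) * Real.exp (x ^ 2 * (x ^ α + ‖lam‖)) := by
  filter_upwards [ae_restrict_mem measurableSet_Ioc] with s hs
    using norm_rayBasis_le hα hσ 0 lam hs.1.le hs.2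

lemma integrableOn_rayBasis_mul (hα : 0 < α) (hσ : σ ≤ 1)
    (hf : MemLp f 2 (volume.restrict (Ioi 0))) (lam : ℂ) (x : ℝ) :
    IntegrableOn (fun s ↦ rayBasis α σ 0 lam s * f s) (Ioc 0 x) :=
  (integrableOn_Ioc_of_memLp hf x).bdd_mul (aestronglyMeasurable_rayBasis hα hσ lam x)
    (ae_norm_rayBasis_le hα.le hσ x lam)

lemma differentiable_partialPairing (hα : 0 < α) (hσ : σ ≤ 1)
    (hf : MemLp f 2 (volume.restrict (Ioi 0))) (x : ℝ) :
    Differentiable ℂ (partialPairing α f σ x) := by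
  refine differentiable_integral_mul (fun s ↦ differentiable_rayBasis_parameter hα.le hσ 0 s)
    (fun lam ↦ aestronglyMeasurable_rayBasis hα hσ lam x)
    (fun R ↦ ⟨(1 + x) * Real.exp (x ^ 2 * (x ^ α + R)), ?_⟩) (integrableOn_Ioc_of_memLp hf x)
  filter_upwards [ae_restrict_mem measurableSet_Ioc] with s hs lam hlam
  have hx : 0 < x := hs.1.trans_le hs.2
  exact (norm_rayBasis_le hα.le hσ 0 lam hs.1.le hs.2).trans (by gcongr)

lemma pairing_mul (α : ℝ) (f : ℝ → ℂ) (lam A B m : ℂ) :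
    pairing α f lam (m * A) (m * B) = m * pairing α f lam A B := by
  rw [pairing, pairing, ← integral_const_mul]
  congr 1 with s
  simp only [raySol]
  ring

lemma integrableOn_and_setIntegral_Ioc_raySol_mul (hα : 0 < α)
    (hf : MemLp f 2 (volume.restrict (Ioi 0))) (lam A B : ℂ) (x : ℝ) :
    IntegrableOn (fun s ↦ raySol α 0 lam A B s * f s) (Ioc 0 x) ∧
      ∫ s in Ioc 0 x, raySol α 0 lam A B s * f s =
        A * partialPairing α f 0 x lam + B * partialPairing α f 1 x lam := by
  have hleft := (integrableOn_rayBasis_mul hα zero_le_one hf lam x).const_mul A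
  have hright := (integrableOn_rayBasis_mul hα le_rfl hf lam x).const_mul B
  have hsum : (fun s ↦ raySol α 0 lam A B s * f s) =
      fun s ↦ A * (rayBasis α 0 0 lam s * f s) + B * (rayBasis α 1 0 lam s * f s) := by
    funext s
    simp only [raySol]
    ring
  rw [hsum]
  refine ⟨hleft.add hright, ?_⟩
  rw [integral_add hleft hright, integral_const_mul, integral_const_mul, partialPairing,
    partialPairing]

lemma pairing_eq_add_setIntegral_Ioi (hα : 0 < α) (hf : MemLp f 2 (volume.restrict (Ioi 0)))
    (hx : 0 ≤ x) (hint : IntegrableOn (fun s ↦ ‖raySol α 0 lam A B s‖ ^ 2) (Ioi x)) :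
    pairing α f lam A B = A * partialPairing α f 0 x lam + B * partialPairing α f 1 x lam +
      ∫ s in Ioi x, raySol α 0 lam A B s * f s := by
  obtain ⟨hint_Ioc, heq⟩ := integrableOn_and_setIntegral_Ioc_raySol_mul hα hf lam A B x
  rw [← heq, pairing, ← Ioc_union_Ioi_eq_Ioi hx,
    setIntegral_union (Ioc_disjoint_Ioi le_rfl) measurableSet_Ioi hint_Ioc
      (integrableOn_mul_and_norm_setIntegral_mul_le (Ioi_subset_Ioi hx) hf
        (aestronglyMeasurable_raySol hα lam A B hx) hint).1]

lemma norm_pairing_sub_le (hα : 0 < α) (hf : MemLp f 2 (volume.restrict (Ioi 0))) (hx : 0 ≤ x)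
    (hint : IntegrableOn (fun s ↦ ‖raySol α 0 lam A B s‖ ^ 2) (Ioi x))
    (hT : ∫ s in Ioi x, ‖raySol α 0 lam A B s‖ ^ 2 ≤ T) :
    ‖pairing α f lam A B - (A * partialPairing α f 0 x lam + B * partialPairing α f 1 x lam)‖ ≤
      √T * √(∫ s in Ioi (0 : ℝ), ‖f s‖ ^ 2) := by
  rw [pairing_eq_add_setIntegral_Ioi hα hf hx hint, add_sub_cancel_left]
  exact (integrableOn_mul_and_norm_setIntegral_mul_le (Ioi_subset_Ioi hx) hf
    (aestronglyMeasurable_raySol hα lam A B hx) hint).2.trans (by gcongr)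

lemma norm_pairing_le (hα : 0 < α) (hf : MemLp f 2 (volume.restrict (Ioi 0)))
    (hint : IntegrableOn (fun s ↦ ‖raySol α 0 lam A B s‖ ^ 2) (Ioi 0))
    (hT : ∫ s in Ioi (0 : ℝ), ‖raySol α 0 lam A B s‖ ^ 2 ≤ T) :
    ‖pairing α f lam A B‖ ≤ √T * √(∫ s in Ioi (0 : ℝ), ‖f s‖ ^ 2) := by
  simpa [partialPairing] using norm_pairing_sub_le hα hf le_rfl hint hT

lemma IsRecessive.mul_pairing_comm (h₁ : IsRecessive α 0 lam A₁ B₁)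
    (h₂ : IsRecessive α 0 lam A₂ B₂) (hα : 0 < α) (f : ℝ → ℂ) :
    A₂ * pairing α f lam A₁ B₁ = A₁ * pairing α f lam A₂ B₂ := by
  have hwronskian := (isSolution_raySol hα 0 lam A₁ B₁).wronskian_eq_zero_of_decays
    (isSolution_raySol hα 0 lam A₂ B₂) h₁ h₂ le_rfl
  simp only [raySol_zero, raySol'_zero, unitDir_zero, mul_one] at hwronskian
  rw [← pairing_mul, ← pairing_mul, mul_comm A₂ A₁, mul_comm A₂ B₁]
  congr 1
  linear_combination -hwronskian

lemma RecessiveFamily.differentiableOn_pairing {Λ : ℝ} {A B : ℂ → ℂ} (h : RecessiveFamily α Λ A B)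
    (hα : 0 < α) (hf : MemLp f 2 (volume.restrict (Ioi 0))) :
    DifferentiableOn ℂ (fun lam ↦ pairing α f lam (A lam) (B lam)) (Metric.ball 0 Λ) := by
  set Φ := √(∫ s in Ioi (0 : ℝ), ‖f s‖ ^ 2)
  have hunif : TendstoUniformlyOn (fun (n : ℕ) lam ↦
      A lam * partialPairing α f 0 n lam + B lam * partialPairing α f 1 n lam)
      (fun lam ↦ pairing α f lam (A lam) (B lam)) atTop (Metric.ball 0 Λ) := by
    rw [Metric.tendstoUniformlyOn_iff]
    intro ε hε
    have hδ : 0 < ε / (Φ + 1) := by positivity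
    filter_upwards [h.tail ((ε / (Φ + 1)) ^ 2) (by positivity)] with n htail lam hlam
    rw [dist_eq_norm]
    refine (norm_pairing_sub_le hα hf n.cast_nonneg (htail lam hlam).1 (htail lam hlam).2).trans_lt
      ?_
    rw [Real.sqrt_sq hδ.le]
    calc ε / (Φ + 1) * Φ < ε / (Φ + 1) * (Φ + 1) := by gcongr; exact lt_add_one Φ
      _ = ε := div_mul_cancel₀ ε (by positivity)
  refine hunif.tendstoLocallyUniformlyOn.differentiableOn (.of_forall fun n ↦ ?_) Metric.isOpen_ball
  exact (h.differentiableOn_value.mul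
      (differentiable_partialPairing hα zero_le_one hf n).differentiableOn).add
    (h.differentiableOn_slope.mul (differentiable_partialPairing hα le_rfl hf n).differentiableOn)

lemma RecessiveFamily.integrableOn {Λ : ℝ} {A B : ℂ → ℂ} (h : RecessiveFamily α Λ A B)
    (hα : 0 < α) (hlam : lam ∈ Metric.ball (0 : ℂ) Λ) :
    IntegrableOn (fun s ↦ ‖raySol α 0 lam (A lam) (B lam) s‖ ^ 2) (Ioi 0) := by
  obtain ⟨n, hn⟩ := (h.tail 1 one_pos).exists
  rw [← Ioc_union_Ioi_eq_Ioi (Nat.cast_nonneg n : (0 : ℝ) ≤ n)]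
  refine IntegrableOn.union ?_ (hn lam hlam).1
  exact (((isSolution_raySol hα 0 lam _ _).continuousOn.norm.pow 2).mono
    Icc_subset_Ici_self).integrableOn_Icc.mono_set Ioc_subset_Icc_self

end Pairing

/-! ### The quotient of the pairing by the characteristic function -/

section HolomorphicQuotient

variable {U : Set ℂ} {A B G : ℂ → ℂ} {z u : ℂ} {C : ℝ}

lemma eq_sub_mul_dslope (hA : A z = 0) (w : ℂ) : A w = (w - z) * dslope A z w := by
  simpa [hA] using (sub_smul_dslope A z w).symm

lemma differentiableAt_quotient_of_simple_zero (hU : U ∈ 𝓝 z) (hA : DifferentiableOn ℂ A U)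
    (hG : DifferentiableOn ℂ G U) (hAz : A z = 0) (hGz : G z = 0) (hderiv : deriv A z ≠ 0) :
    DifferentiableAt ℂ (fun w ↦ if A w = 0 then deriv G w / deriv A w else G w / A w) z := by
  have hdslope {H : ℂ → ℂ} (hH : DifferentiableOn ℂ H U) : DifferentiableAt ℂ (dslope H z) z :=
    ((Complex.differentiableOn_dslope hU).2 hH).differentiableAt hU
  have hz : dslope A z z ≠ 0 := by rwa [dslope_same]
  refine ((hdslope hG).div (hdslope hA) hz).congr_of_eventuallyEq ?_
  filter_upwards [(hdslope hA).continuousAt.eventually_ne hz] with w hw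
  rw [Pi.div_apply]
  rcases eq_or_ne w z with rfl | hwz
  · rw [if_pos hAz, dslope_same, dslope_same]
  · have hsub : w - z ≠ 0 := sub_ne_zero.2 hwz
    have hAw := eq_sub_mul_dslope hAz w
    rw [if_neg (hAw ▸ mul_ne_zero hsub hw), hAw, eq_sub_mul_dslope hGz w,
      mul_div_mul_left _ _ hsub]

lemma exists_differentiableOn_quotient (hU : IsOpen U) (hA : DifferentiableOn ℂ A U)
    (hG : DifferentiableOn ℂ G U) (hzero : ∀ z ∈ U, A z = 0 → G z = 0 ∧ deriv A z ≠ 0) :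
    ∃ F : ℂ → ℂ, DifferentiableOn ℂ F U ∧ ∀ z ∈ U, G z = F z * A z := by
  classical
  refine ⟨fun w ↦ if A w = 0 then deriv G w / deriv A w else G w / A w, fun z hz ↦ ?_,
    fun z hz ↦ ?_⟩
  · have hzU := hU.mem_nhds hz
    refine DifferentiableAt.differentiableWithinAt ?_
    by_cases hAz : A z = 0
    · exact differentiableAt_quotient_of_simple_zero hzU hA hG hAz (hzero z hz hAz).1
        (hzero z hz hAz).2
    · refine ((hG.differentiableAt hzU).div (hA.differentiableAt hzU) hAz).congr_of_eventuallyEq ?_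
      filter_upwards [(hA.differentiableAt hzU).continuousAt.eventually_ne hAz] with w hw
      rw [if_neg hw, Pi.div_apply]
  · by_cases hAz : A z = 0
    · rw [(hzero z hz hAz).1, hAz, mul_zero]
    · simp only [if_neg hAz, div_mul_cancel₀ _ hAz]

lemma eventually_ne_zero_of_simple_zeros (hA : DifferentiableAt ℂ A z)
    (hderiv : A z = 0 → deriv A z ≠ 0) : ∀ᶠ w in 𝓝[≠] z, A w ≠ 0 := by
  by_cases hAz : A z = 0
  · exact hA.hasDerivAt.eventually_ne (hderiv hAz)
  · exact (hA.continuousAt.eventually_ne hAz).filter_mono nhdsWithin_le_nhds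

lemma deriv_ne_zero_of_mul_norm_le (hA : DifferentiableAt ℂ A z) (hB : ContinuousAt B z)
    (hAz : A z = 0) (hBz : B z ≠ 0)
    (hle : ∀ᶠ ε : ℝ in 𝓝[>] 0, ε * ‖B (z + ε * u)‖ ≤ C * ‖A (z + ε * u)‖) : deriv A z ≠ 0 := by
  intro hderiv
  have hline : HasDerivAt (fun ε : ℝ ↦ z + ε * u) u 0 := by
    simpa using ((Complex.ofRealCLM.hasDerivAt (x := 0)).mul_const u).const_add z
  have hline₀ : z + ((0 : ℝ) : ℂ) * u = z := by simp
  have hAline : HasDerivAt (fun ε : ℝ ↦ A (z + ε * u)) 0 0 := by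
    have hcomp := hA.hasDerivAt.comp_of_eq (h := fun ε : ℝ ↦ z + ε * u) 0 hline hline₀.symm
    rwa [hderiv, zero_mul] at hcomp
  have hAlim : Tendsto (fun ε : ℝ ↦ C * ‖ε⁻¹ • A (z + ε * u)‖) (𝓝[>] 0) (𝓝 0) := by
    simpa [hAz] using hAline.tendsto_slope_zero_right.norm.const_mul C
  have hBlim : Tendsto (fun ε : ℝ ↦ ‖B (z + ε * u)‖) (𝓝[>] 0) (𝓝 ‖B z‖) := by
    have hcont : ContinuousAt (fun ε : ℝ ↦ B (z + ε * u)) 0 :=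
      hB.comp_of_eq hline.continuousAt hline₀
    simpa using hcont.tendsto.norm.mono_left nhdsWithin_le_nhds
  refine hBz (norm_le_zero_iff.1 (le_of_tendsto_of_tendsto hBlim hAlim ?_))
  filter_upwards [hle, self_mem_nhdsWithin] with ε hε hpos
  rw [norm_smul, norm_inv, Real.norm_of_nonneg (le_of_lt hpos), mul_left_comm,
    le_inv_mul_iff₀ hpos]
  exact hε

lemma exists_differentiable_eqOn_ball {F : ℕ → ℂ → ℂ}
    (hF : ∀ n : ℕ, DifferentiableOn ℂ (F n) (Metric.ball 0 n))
    (hagree : ∀ m n : ℕ, EqOn (F m) (F n) (Metric.ball 0 m ∩ Metric.ball 0 n)) :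
    ∃ G : ℂ → ℂ, Differentiable ℂ G ∧ ∀ n : ℕ, EqOn G (F n) (Metric.ball 0 n) := by
  have hcover (z : ℂ) : ∃ n : ℕ, z ∈ Metric.ball (0 : ℂ) n := by simpa using exists_nat_gt ‖z‖
  choose N hN using hcover
  have hglue (n : ℕ) : EqOn (fun z ↦ F (N z) z) (F n) (Metric.ball 0 n) :=
    fun z hz ↦ hagree (N z) n ⟨hN z, hz⟩
  refine ⟨fun z ↦ F (N z) z, fun z ↦ ?_, hglue⟩
  have hnhds := Metric.isOpen_ball.mem_nhds (hN z)
  exact ((hF (N z)).differentiableAt hnhds).congr_of_eventuallyEq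
    ((hglue (N z)).eventuallyEq_of_mem hnhds)

end HolomorphicQuotient

/-- `F` is the quotient `λ ↦ (∫ ψ f) / ψ(0)`, where `ψ` is a recessive solution with parameter `λ`;
the quotient does not depend on the normalization of `ψ`. It is written without division because
`ψ(0)` vanishes at the eigenvalues. -/
def IsPairingQuotient (α : ℝ) (f : ℝ → ℂ) (F : ℂ → ℂ) : Prop :=
  ∀ lam, ∃ A B : ℂ, (A ≠ 0 ∨ B ≠ 0) ∧ IsRecessive α 0 lam A B ∧ pairing α f lam A B = F lam * A

section EntireQuotient

variable {α Λ : ℝ} {f : ℝ → ℂ} {A B : ℂ → ℂ} {lam : ℂ}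

lemma raySol'_eq_zero_of_eqOn_zero (hα : 0 < α) {φ : ℝ} {a b : ℂ}
    (hzero : EqOn (raySol α φ lam a b) 0 (Ici 0)) : raySol' α φ lam a b 0 = 0 := by
  have hsol := isSolution_raySol hα φ lam a b
  have hderiv : EqOn (raySol' α φ lam a b) 0 (Ioi 0) := fun x hx ↦
    (hsol.hasDerivAt x hx).unique <| (hasDerivAt_const x (0 : ℂ)).congr_of_eventuallyEq <|
      (hzero.mono Ioi_subset_Ici_self).eventuallyEq_of_mem (Ioi_mem_nhds hx)
  have hlim := (hsol.continuousOn' 0 self_mem_Ici).mono Ioi_subset_Ici_self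
  exact tendsto_nhds_unique hlim <| tendsto_const_nhds.congr' <|
    hderiv.symm.eventuallyEq_of_mem self_mem_nhdsWithin

lemma isEigenfunction_raySol (hα : 0 < α) {b : ℂ} (hb : b ≠ 0)
    (hint : IntegrableOn (fun s ↦ ‖raySol α 0 lam 0 b s‖ ^ 2) (Ioi 0)) :
    IsEigenfunction α Complex.I lam (raySol α 0 lam 0 b) := by
  have hsol := isSolution_raySol hα 0 lam 0 b
  refine ⟨hsol.continuousOn, raySol_zero _ _ _ _ _, ?_, ⟨raySol' α 0 lam 0 b,
    hsol.hasDerivAt, fun x hx ↦ ?_⟩, hint⟩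
  · by_contra! hzero
    have hslope := norm_raySol'_zero α 0 lam 0 b
    rw [raySol'_eq_zero_of_eqOn_zero hα hzero, norm_zero] at hslope
    exact hb (norm_eq_zero.1 hslope.symm)
  · simpa [rayPotential] using hsol.hasDerivAt' x hx

lemma rotatedParameter_add_mul_im (α ε : ℝ) (lam : ℂ) :
    (rotatedParameter α (lam + ε * (Complex.I * unitDir (-(Real.pi / (2 + α)))))).im =
      (rotatedParameter α lam).im + ε := by
  have hunit : unitDir (-(Real.pi / (2 + α))) * unitDir (Real.pi / (2 + α)) = 1 := by
    rw [← unitDir_add, neg_add_cancel, unitDir_zero]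
  have hshift : rotatedParameter α (lam + ε * (Complex.I * unitDir (-(Real.pi / (2 + α))))) =
      rotatedParameter α lam + ε * Complex.I := by
    simp only [rotatedParameter]
    linear_combination (ε * Complex.I) * hunit
  simp [hshift]

/-- After rotation the problem is self-adjoint, so its Weyl function is `O(1 / |Im|)` off the real
axis: it has only simple poles. -/
lemma RecessiveFamily.deriv_ne_zero (h : RecessiveFamily α Λ A B) (hα : 0 < α)
    (hlam : lam ∈ Metric.ball (0 : ℂ) Λ) (hA : A lam = 0) : deriv A lam ≠ 0 := by
  have hnhds : Metric.ball (0 : ℂ) Λ ∈ 𝓝 lam := Metric.isOpen_ball.mem_nhds hlam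
  have hB : B lam ≠ 0 := (h.ne_zero lam hlam).resolve_left (not_not_intro hA)
  have hΛ : 0 < Λ := Metric.nonempty_ball.1 ⟨lam, hlam⟩
  have hweyl : ∀ w ∈ Metric.ball (0 : ℂ) Λ,
      |(rotatedParameter α w).im| * ‖B w‖ ≤ 12 * (1 + Λ) ^ 2 * ‖A w‖ := fun w hw ↦
    (h.isRecessive w hw).abs_im_rotatedParameter_mul_norm_slope_le hα (by linarith)
      (by linarith [mem_ball_zero_iff.1 hw])
  have hreal : (rotatedParameter α lam).im = 0 := by
    have hle := hweyl lam hlam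
    rw [hA, norm_zero, mul_zero] at hle
    exact abs_nonpos_iff.1 (nonpos_of_mul_nonpos_left hle (norm_pos_iff.2 hB))
  refine deriv_ne_zero_of_mul_norm_le (u := Complex.I * unitDir (-(Real.pi / (2 + α))))
    (C := 12 * (1 + Λ) ^ 2) (h.differentiableOn_value.differentiableAt hnhds)
    (h.differentiableOn_slope.differentiableAt hnhds).continuousAt hA hB ?_
  have hline : ContinuousAt
      (fun ε : ℝ ↦ lam + ε * (Complex.I * unitDir (-(Real.pi / (2 + α))))) 0 := by fun_prop
  filter_upwards [(hline.eventually_mem (by simpa using hnhds)).filter_mono nhdsWithin_le_nhds,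
    self_mem_nhdsWithin] with ε hball hε
  simpa [rotatedParameter_add_mul_im, hreal, abs_of_pos (mem_Ioi.1 hε)] using hweyl _ hball

lemma RecessiveFamily.exists_quotient (h : RecessiveFamily α Λ A B) (hα : 0 < α)
    (hf : MemLp f 2 (volume.restrict (Ioi 0)))
    (horth : ∀ lam y, IsEigenfunction α Complex.I lam y → ∫ s in Ioi (0 : ℝ), y s * f s = 0) :
    ∃ F : ℂ → ℂ, DifferentiableOn ℂ F (Metric.ball 0 Λ) ∧
      ∀ lam ∈ Metric.ball (0 : ℂ) Λ, pairing α f lam (A lam) (B lam) = F lam * A lam := by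
  refine exists_differentiableOn_quotient Metric.isOpen_ball h.differentiableOn_value
    (h.differentiableOn_pairing hα hf) fun lam hlam hA ↦ ⟨?_, h.deriv_ne_zero hα hlam hA⟩
  have hB : B lam ≠ 0 := (h.ne_zero lam hlam).resolve_left (not_not_intro hA)
  have hint := h.integrableOn hα hlam
  rw [hA] at hint ⊢
  exact horth lam _ (isEigenfunction_raySol hα hB hint)

lemma RecessiveFamily.quotient_eqOn {Λ' : ℝ} {A' B' F F' : ℂ → ℂ} (h : RecessiveFamily α Λ A B)
    (h' : RecessiveFamily α Λ' A' B') (hα : 0 < α) (hF : DifferentiableOn ℂ F (Metric.ball 0 Λ))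
    (hF' : DifferentiableOn ℂ F' (Metric.ball 0 Λ'))
    (hquot : ∀ lam ∈ Metric.ball (0 : ℂ) Λ, pairing α f lam (A lam) (B lam) = F lam * A lam)
    (hquot' : ∀ lam ∈ Metric.ball (0 : ℂ) Λ',
      pairing α f lam (A' lam) (B' lam) = F' lam * A' lam) :
    EqOn F F' (Metric.ball 0 Λ ∩ Metric.ball 0 Λ') := by
  rintro lam ⟨hlam, hlam'⟩
  have hnhds := Metric.isOpen_ball.mem_nhds hlam
  have hnhds' := Metric.isOpen_ball.mem_nhds hlam'
  have hev : F =ᶠ[𝓝[≠] lam] F' := by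
    filter_upwards [eventually_ne_zero_of_simple_zeros
        (h.differentiableOn_value.differentiableAt hnhds) (h.deriv_ne_zero hα hlam),
      eventually_ne_zero_of_simple_zeros (h'.differentiableOn_value.differentiableAt hnhds')
        (h'.deriv_ne_zero hα hlam'),
      mem_nhdsWithin_of_mem_nhds hnhds, mem_nhdsWithin_of_mem_nhds hnhds'] with w hA hA' hw hw'
    have hcomm := (h.isRecessive w hw).mul_pairing_comm (h'.isRecessive w hw') hα f
    rw [hquot w hw, hquot' w hw'] at hcomm
    exact mul_right_cancel₀ (mul_ne_zero hA hA') (by linear_combination hcomm)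
  exact tendsto_nhds_unique
    (((hF.differentiableAt hnhds).continuousAt.tendsto.mono_left nhdsWithin_le_nhds).congr' hev)
    ((hF'.differentiableAt hnhds').continuousAt.tendsto.mono_left nhdsWithin_le_nhds)

lemma exists_differentiable_isPairingQuotient (hα : 0 < α)
    (hf : MemLp f 2 (volume.restrict (Ioi 0)))
    (horth : ∀ lam y, IsEigenfunction α Complex.I lam y → ∫ s in Ioi (0 : ℝ), y s * f s = 0) :
    ∃ F : ℂ → ℂ, Differentiable ℂ F ∧ IsPairingQuotient α f F := by
  choose A B hfamily using fun n : ℕ ↦ exists_recessiveFamily hα n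
  choose F hF hquot using fun n ↦ (hfamily n).exists_quotient hα hf horth
  obtain ⟨G, hG, hGF⟩ := exists_differentiable_eqOn_ball hF fun m n ↦
    (hfamily m).quotient_eqOn (hfamily n) hα (hF m) (hF n) (hquot m) (hquot n)
  refine ⟨G, hG, fun lam ↦ ?_⟩
  obtain ⟨n, hn⟩ := exists_nat_gt ‖lam‖
  have hlam : lam ∈ Metric.ball (0 : ℂ) n := mem_ball_zero_iff.2 hn
  exact ⟨A n lam, B n lam, (hfamily n).ne_zero lam hlam, (hfamily n).isRecessive lam hlam,
    by rw [hquot n lam hlam, hGF n hlam]⟩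

end EntireQuotient

/-! ### Vanishing of the quotient -/

section Vanishing

variable {α : ℝ} {f : ℝ → ℂ} {F : ℂ → ℂ} {lam A B : ℂ}

lemma sin_le_sin_of_mem_Icc {δ x : ℝ} (hδ : 0 ≤ δ) (hx : x ∈ Icc δ (Real.pi - δ)) :
    Real.sin δ ≤ Real.sin x := by
  rcases le_total x (Real.pi / 2) with h | h
  · exact Real.sin_le_sin_of_le_of_le_pi_div_two (by linarith [Real.pi_pos]) h hx.1
  · rw [← Real.sin_pi_sub x]
    exact Real.sin_le_sin_of_le_of_le_pi_div_two (by linarith [Real.pi_pos]) (by linarith)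
      (by linarith [hx.2])

/-- The closed cone `3π/4 ≤ θ ≤ 2π - 1/160` of parameters `r e^{iθ}` avoids the numerical range, the
sector `0 ≤ θ ≤ π/2`; the direction `χ` witnesses it. -/
lemma exists_pos_separation :
    ∃ κ : ℝ, 0 < κ ∧ ∀ θ ∈ Icc (3 * Real.pi / 4) (-(1 / 160) + 2 * Real.pi),
      ∃ χ, κ ≤ Real.cos χ ∧ 0 ≤ Real.sin χ ∧
        ∀ r : ℝ, 0 ≤ r → κ * r ≤ -((r : ℂ) * unitDir (-θ) * unitDir χ).re := by
  have hpi := Real.pi_gt_three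
  refine ⟨Real.sin (1 / 320), Real.sin_pos_of_pos_of_lt_pi (by norm_num) (by linarith),
    fun θ hθ ↦ ?_⟩
  obtain ⟨hθ₁, hθ₂⟩ := hθ
  have hseparated (χ : ℝ) (hχ : θ - χ - Real.pi / 2 ∈ Icc (1 / 320) (Real.pi - 1 / 320)) (r : ℝ)
      (hr : 0 ≤ r) :
      Real.sin (1 / 320) * r ≤ -((r : ℂ) * unitDir (-θ) * unitDir χ).re := by
    have hsin := sin_le_sin_of_mem_Icc (by norm_num) hχ
    rw [Real.sin_sub_pi_div_two, ← Real.cos_neg, neg_sub] at hsin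
    rw [polar_mul_unitDir_re, mul_comm, ← mul_neg]
    gcongr
  rcases le_total θ Real.pi with h | h
  · refine ⟨Real.pi / 8, ?_, ?_, hseparated _ ⟨by linarith, by linarith⟩⟩
    · rw [← Real.sin_pi_div_two_sub]
      exact sin_le_sin_of_mem_Icc (by norm_num) ⟨by linarith, by linarith⟩
    · exact Real.sin_nonneg_of_nonneg_of_le_pi (by linarith) (by linarith)
  · refine ⟨Real.pi / 2 - 1 / 320, ?_, ?_, hseparated _ ⟨by linarith, by linarith⟩⟩
    · rw [Real.cos_pi_div_two_sub]
    · exact Real.sin_nonneg_of_nonneg_of_le_pi (by linarith) (by linarith)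

lemma ne_zero_of_norm_le_mul {K : ℝ} (hne : A ≠ 0 ∨ B ≠ 0) (hle : ‖B‖ ≤ K * ‖A‖) : A ≠ 0 := by
  rintro rfl
  rw [norm_zero, mul_zero, norm_le_zero_iff] at hle
  simp [hle] at hne

lemma IsPairingQuotient.norm_le (hF : IsPairingQuotient α f F) (hα : 0 < α)
    (hf : MemLp f 2 (volume.restrict (Ioi 0))) {K D : ℝ}
    (hbound : ∀ A B, IsRecessive α 0 lam A B → ‖B‖ ≤ K * ‖A‖ ∧
      IntegrableOn (fun s ↦ ‖raySol α 0 lam A B s‖ ^ 2) (Ioi 0) ∧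
      ∫ s in Ioi (0 : ℝ), ‖raySol α 0 lam A B s‖ ^ 2 ≤ D * ‖A‖ ^ 2) :
    ‖F lam‖ ≤ √D * √(∫ s in Ioi (0 : ℝ), ‖f s‖ ^ 2) := by
  obtain ⟨A, B, hne, hd, hpair⟩ := hF lam
  obtain ⟨hslope, hint, hle⟩ := hbound A B hd
  have hA : 0 < ‖A‖ := norm_pos_iff.2 (ne_zero_of_norm_le_mul hne hslope)
  refine le_of_mul_le_mul_right ?_ hA
  calc ‖F lam‖ * ‖A‖ = ‖pairing α f lam A B‖ := by rw [hpair, norm_mul]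
    _ ≤ √(D * ‖A‖ ^ 2) * √(∫ s in Ioi (0 : ℝ), ‖f s‖ ^ 2) := norm_pairing_le hα hf hint hle
    _ = √D * √(∫ s in Ioi (0 : ℝ), ‖f s‖ ^ 2) * ‖A‖ := by
      rw [Real.sqrt_mul' _ (by positivity), Real.sqrt_sq hA.le]
      ring

lemma sqrt_sqrt_div_self {r : ℝ} (hr : 0 ≤ r) : √(√r / r) = r ^ (-(1 / 4) : ℝ) := by
  rw [Real.sqrt_div_self', Real.sqrt_eq_rpow, Real.sqrt_eq_rpow, one_div, ← Real.rpow_neg hr,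
    ← Real.rpow_mul hr]
  norm_num

lemma IsPairingQuotient.exists_norm_le_cone (hF : IsPairingQuotient α f F) (hα : 0 < α)
    (hf : MemLp f 2 (volume.restrict (Ioi 0))) :
    ∃ M, ∀ r : ℝ, 1 ≤ r → ∀ θ ∈ Icc (3 * Real.pi / 4) (-(1 / 160) + 2 * Real.pi),
      ‖F (r * unitDir (-θ))‖ ≤ M * r ^ (-(1 / 4) : ℝ) := by
  obtain ⟨κ, hκ, hseparation⟩ := exists_pos_separation
  refine ⟨√(3 / κ / κ) * √(∫ s in Ioi (0 : ℝ), ‖f s‖ ^ 2), fun r hr θ hθ ↦ ?_⟩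
  have hr₀ : 0 ≤ r := by linarith
  obtain ⟨χ, hcos, hsin, hsep⟩ := hseparation θ hθ
  have hnorm := norm_polar hr₀ (-θ)
  have hbound (A B : ℂ) (hd : IsRecessive α 0 (r * unitDir (-θ)) A B) :=
    hd.norm_slope_le_and_integral_le_of_le_neg_re hα (hr.trans_eq hnorm.symm) hκ hcos hsin
      (by rw [hnorm]; exact hsep r hr₀)
  rw [hnorm] at hbound
  have hfactor : 3 / κ * √r / (κ * r) = 3 / κ / κ * (√r / r) := by
    rw [mul_div_mul_comm]
  refine (hF.norm_le hα hf hbound).trans_eq ?_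
  rw [hfactor, Real.sqrt_mul (by positivity), sqrt_sqrt_div_self hr₀]
  ring

lemma IsPairingQuotient.exists_norm_le_slant (hF : IsPairingQuotient α f F) (hα : 133 / 200 < α)
    (hf : MemLp f 2 (volume.restrict (Ioi 0))) :
    ∃ M, ∀ r : ℝ, 1 ≤ r → ‖F (r * unitDir (-slantAngle))‖ ≤ M :=
  ⟨_, fun _ hr ↦ hF.norm_le (by linarith) hf fun _ _ hd ↦
    ⟨hd.norm_slope_le_slant hα hr, hd.integral_norm_sq_le_slant hα hr le_rfl⟩⟩

lemma IsPairingQuotient.exists_abs_im_mul_norm_le (hF : IsPairingQuotient α f F) (hα : 0 < α)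
    (hf : MemLp f 2 (volume.restrict (Ioi 0))) :
    ∃ C, 0 ≤ C ∧ ∀ lam, 1 ≤ ‖lam‖ →
      |(rotatedParameter α lam).im| * ‖F lam‖ ≤ Real.exp (C * ‖lam‖ ^ (1 / 2 + 1 / α)) := by
  obtain ⟨C, hC, hbound⟩ := exists_sq_mul_integral_norm_sq_le_exp hα
  set Φ := √(∫ s in Ioi (0 : ℝ), ‖f s‖ ^ 2)
  have hΦ : 0 ≤ Φ := Real.sqrt_nonneg _
  refine ⟨C / 2 + Φ, by positivity, fun lam hlam ↦ ?_⟩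
  set P := ‖lam‖ ^ (1 / 2 + 1 / α)
  have hP : 1 ≤ P := Real.one_le_rpow hlam (by positivity)
  rcases (abs_nonneg (rotatedParameter α lam).im).eq_or_lt with him | him
  · rw [← him, zero_mul]
    positivity
  set μ := |(rotatedParameter α lam).im|
  have hquot : ‖F lam‖ ≤ √(Real.exp (C * P) / μ ^ 2) * Φ := by
    refine hF.norm_le hα hf (K := 12 * ‖lam‖ ^ 2 / μ) fun A B hd ↦ ?_
    have hslope := hd.abs_im_rotatedParameter_mul_norm_slope_le hα hlam le_rfl
    obtain ⟨hint, hle⟩ := hbound lam A B hd hlam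
    refine ⟨?_, hint, ?_⟩
    · rwa [div_mul_eq_mul_div, le_div_iff₀' him]
    · rwa [div_mul_eq_mul_div, le_div_iff₀' (by positivity), sq_abs]
  calc μ * ‖F lam‖ ≤ μ * (√(Real.exp (C * P) / μ ^ 2) * Φ) := by gcongr
    _ = Real.exp (C * P / 2) * Φ := by
      rw [Real.sqrt_div (Real.exp_pos _).le, Real.sqrt_sq him.le, ← Real.exp_half]
      field_simp
    _ ≤ Real.exp (C * P / 2) * Real.exp (Φ * P) := by
      gcongr
      linarith [Real.add_one_le_exp (Φ * P), le_mul_of_one_le_right hΦ hP]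
    _ = Real.exp ((C / 2 + Φ) * P) := by
      rw [← Real.exp_add]
      ring_nf

lemma rotatedParameter_mul_unitDir (α : ℝ) (t : ℂ) :
    rotatedParameter α (t * unitDir (-(Real.pi / (2 + α)))) = t := by
  rw [rotatedParameter, mul_assoc, ← unitDir_add, neg_add_cancel, unitDir_zero, mul_one]

lemma rotatedParameter_mul_unitDir_neg (α : ℝ) (lam : ℂ) :
    rotatedParameter α lam * unitDir (-(Real.pi / (2 + α))) = lam := by
  rw [rotatedParameter, mul_assoc, ← unitDir_add, add_neg_cancel, unitDir_zero, mul_one]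

lemma IsPairingQuotient.exists_norm_le_exp (hF : IsPairingQuotient α f F)
    (hdiff : Differentiable ℂ F) (hα : 0 < α) (hf : MemLp f 2 (volume.restrict (Ioi 0))) :
    ∃ C, 0 ≤ C ∧ ∀ lam, 1 ≤ ‖lam‖ → ‖F lam‖ ≤ Real.exp (C * ‖lam‖ ^ (1 / 2 + 1 / α)) := by
  obtain ⟨C, hC, hbound⟩ := hF.exists_abs_im_mul_norm_le hα hf
  have hnorm (t : ℂ) : ‖t * unitDir (-(Real.pi / (2 + α)))‖ = ‖t‖ := by
    rw [norm_mul, norm_unitDir, mul_one]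
  obtain ⟨C', hC', hgrow⟩ := exists_norm_le_exp_of_abs_im_mul_norm_le
    (H := fun t ↦ F (t * unitDir (-(Real.pi / (2 + α)))))
    (hdiff.comp (differentiable_id.mul_const _)) hC (p := 1 / 2 + 1 / α) (by positivity)
    fun t ht ↦ by
      simpa only [rotatedParameter_mul_unitDir, hnorm] using hbound _ (ht.trans_eq (hnorm t).symm)
  refine ⟨C', hC', fun lam hlam ↦ ?_⟩
  simpa only [rotatedParameter_mul_unitDir_neg, norm_rotatedParameter] using
    hgrow (rotatedParameter α lam) (hlam.trans_eq (norm_rotatedParameter α lam).symm)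

/-- The slanted ray leaves sectors of opening at most `π/2 - 1/160`, so orders a little above `2`,
that is exponents `α` a little below `2/3`, are admissible. -/
lemma IsPairingQuotient.eq_zero (hF : IsPairingQuotient α f F) (hdiff : Differentiable ℂ F)
    (hα : 133 / 200 < α) (hf : MemLp f 2 (volume.restrict (Ioi 0))) (lam : ℂ) : F lam = 0 := by
  have hα₀ : 0 < α := by linarith
  have hpi := Real.pi_gt_three
  have hpi' := Real.pi_lt_d2
  obtain ⟨M, hcone⟩ := hF.exists_norm_le_cone hα₀ hf
  obtain ⟨N, hray⟩ := hF.exists_norm_le_slant hα hf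
  obtain ⟨C, hC, hgrow⟩ := hF.exists_norm_le_exp hdiff hα₀ hf
  have horder : 1 / 2 + 1 / α < 1 / 2 + 200 / 133 := by
    rw [add_lt_add_iff_left, one_div_lt hα₀ (by norm_num)]
    linarith
  refine eq_zero_of_growth_of_cone_of_ray hdiff (by linarith)
    (horder.trans_le ?_) (horder.trans_le ?_) hC hgrow (by norm_num) hcone hray lam
  all_goals
    rw [slantAngle, le_div_iff₀ (by linarith)]
    linarith

end Vanishing

/-! ### The Green function bound -/

lemma flux_mul_norm_sq_sub (g : ℂ) (u u' v v' : ℝ → ℂ) (x : ℝ) :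
    flux g v v' x * ‖u x‖ ^ 2 - flux g u u' x * ‖v x‖ ^ 2 =
      (g * (u x * v' x - u' x * v x) * conj (u x * v x)).re := by
  have hexpand : g * (u x * v' x - u' x * v x) * conj (u x * v x) =
      (g * v' x * conj (v x)) * (u x * conj (u x)) -
        (g * u' x * conj (u x)) * (v x * conj (v x)) := by
    rw [map_mul]
    ring
  rw [hexpand, Complex.mul_conj', Complex.mul_conj', Complex.sub_re, ← Complex.ofReal_pow,
    ← Complex.ofReal_pow, Complex.re_mul_ofReal, Complex.re_mul_ofReal]
  rfl

lemma flux_mul_norm_sq_sub_le {g : ℂ} (hg : ‖g‖ ≤ 1) (u u' v v' : ℝ → ℂ) (x : ℝ) :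
    flux g v v' x * ‖u x‖ ^ 2 - flux g u u' x * ‖v x‖ ^ 2 ≤
      ‖u x * v' x - u' x * v x‖ * (‖u x‖ * ‖v x‖) := by
  rw [flux_mul_norm_sq_sub]
  refine (Complex.re_le_norm _).trans ?_
  rw [norm_mul, norm_mul, RCLike.norm_conj, norm_mul]
  gcongr
  exact mul_le_of_le_one_left (norm_nonneg _) hg

lemma mul_sqrt_add_mul_sqrt_le {s t p q w c : ℝ} (hs : 0 ≤ s) (ht : 0 ≤ t) (hw : 0 ≤ w)
    (hc : 0 < c) (hp : c * s ^ 2 ≤ p) (hq : c * t ^ 2 ≤ q)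
    (hle : p * t ^ 2 + q * s ^ 2 ≤ w * (t * s)) : t * √p + s * √q ≤ w / √c := by
  have hp₀ : 0 ≤ p := (by positivity : 0 ≤ c * s ^ 2).trans hp
  have hq₀ : 0 ≤ q := (by positivity : 0 ≤ c * t ^ 2).trans hq
  set X := t * √p + s * √q
  have hX₀ : 0 ≤ X := by positivity
  have hsq : X ^ 2 ≤ 2 * (w * (t * s)) := by
    refine add_sq_le.trans ?_
    rw [mul_pow, mul_pow, Real.sq_sqrt hp₀, Real.sq_sqrt hq₀]
    linarith
  have hlower : 2 * √c * (t * s) ≤ X := by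
    have hps : √c * s ≤ √p := Real.le_sqrt_of_sq_le (by rwa [mul_pow, Real.sq_sqrt hc.le])
    have hqt : √c * t ≤ √q := Real.le_sqrt_of_sq_le (by rwa [mul_pow, Real.sq_sqrt hc.le])
    linarith [mul_le_mul_of_nonneg_left hps ht, mul_le_mul_of_nonneg_left hqt hs]
  have hc' : 0 < √c := Real.sqrt_pos.2 hc
  rw [le_div_iff₀ hc']
  rcases hX₀.eq_or_lt with h | h
  · rwa [← h, zero_mul]
  refine le_of_mul_le_mul_right ?_ h
  calc X * √c * X = √c * X ^ 2 := by ring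
    _ ≤ √c * (2 * (w * (t * s))) := by gcongr
    _ = w * (2 * √c * (t * s)) := by ring
    _ ≤ w * X := by gcongr

/-- Up to a factor, the left side bounds the `L²` norm of `s ↦ S (min s x) * ψ (max s x)`, a row of
the Green function times the Wronskian. -/
lemma IsSolution.norm_mul_sqrt_integral_add_le {q ψ ψ' S S' : ℝ → ℂ} {g : ℂ} {a b c x : ℝ}
    (hψ : IsSolution q ψ ψ') (hS : IsSolution q S S') (hd : Decays ψ ψ') (hS₀ : S 0 = 0)
    (hq : CoerciveOn q g a b (Ioi 0)) (hg : ‖g‖ ≤ 1) (ha : 0 ≤ a) (hb : 0 < b) (hc : 0 < c)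
    (hcab : c ^ 2 ≤ a * b) (hx : 0 ≤ x) :
    ‖S x‖ * √(∫ s in Ioi x, ‖ψ s‖ ^ 2) + ‖ψ x‖ * √(∫ s in Ioc 0 x, ‖S s‖ ^ 2) ≤
      ‖ψ x * S' x - ψ' x * S x‖ / √(b * c) := by
  have hIoi := hq.mono (Ioi_subset_Ioi hx)
  have hIoo := hq.mono (fun _ hs ↦ hs.1 : Ioo 0 x ⊆ Ioi 0)
  have hflux₀ : flux g S S' 0 = 0 := by simp [flux, hS₀]
  have hfluxψ : c * ‖ψ x‖ ^ 2 ≤ -flux g ψ ψ' x := by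
    linarith [hψ.flux_add_sq_nonpos hd hIoi hx ha hb.le hcab]
  have hfluxS : c * ‖S x‖ ^ 2 ≤ flux g S S' x := by
    have hmono := hS.flux_add_sq_mono (c := -c) hIoo le_rfl hx ha hb.le (by rwa [neg_sq])
    rw [hflux₀, hS₀, norm_zero] at hmono
    linarith
  have hψint : ∫ s in Ioi x, ‖ψ s‖ ^ 2 ≤ -flux g ψ ψ' x / b :=
    (hψ.integral_norm_sq_le_of_decays hd (hIoi.weaken ha le_rfl) hx hb).2
  have hSint : ∫ s in Ioc 0 x, ‖S s‖ ^ 2 ≤ flux g S S' x / b := by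
    rw [le_div_iff₀' hb, ← intervalIntegral.integral_of_le hx]
    simpa only [hflux₀, sub_zero] using
      hS.mul_integral_norm_sq_le (hIoo.weaken ha le_rfl) le_rfl hx
  have hwronskian := flux_mul_norm_sq_sub_le hg ψ ψ' S S' x
  calc ‖S x‖ * √(∫ s in Ioi x, ‖ψ s‖ ^ 2) + ‖ψ x‖ * √(∫ s in Ioc 0 x, ‖S s‖ ^ 2)
      ≤ ‖S x‖ * √(-flux g ψ ψ' x / b) + ‖ψ x‖ * √(flux g S S' x / b) := by gcongr
    _ = (‖ψ x‖ * √(flux g S S' x) + ‖S x‖ * √(-flux g ψ ψ' x)) / √b := by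
      rw [Real.sqrt_div' _ hb.le, Real.sqrt_div' _ hb.le]
      ring
    _ ≤ ‖ψ x * S' x - ψ' x * S x‖ / √c / √b := by
      gcongr
      exact mul_sqrt_add_mul_sqrt_le (norm_nonneg _) (norm_nonneg _) (norm_nonneg _) hc hfluxS
        hfluxψ (by linarith)
    _ = ‖ψ x * S' x - ψ' x * S x‖ / √(b * c) := by
      rw [div_div, Real.sqrt_mul hb.le, mul_comm √b]

/-! ### Vanishing of the Duhamel solution -/

/-- The solution of `u'' = (i x^α - λ) u + f` with zero initial data, by variation of constants. -/
noncomputable def duhamel (α : ℝ) (f : ℝ → ℂ) (x : ℝ) (lam : ℂ) : ℂ :=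
  rayBasis α 1 0 lam x * partialPairing α f 0 x lam -
    rayBasis α 0 0 lam x * partialPairing α f 1 x lam

section Duhamel

variable {α x : ℝ} {f : ℝ → ℂ} {lam A B : ℂ} {σ : ℕ}

lemma differentiable_duhamel (hα : 0 < α) (hf : MemLp f 2 (volume.restrict (Ioi 0))) (x : ℝ) :
    Differentiable ℂ (duhamel α f x) :=
  ((differentiable_rayBasis_parameter hα.le le_rfl 0 x).mul
      (differentiable_partialPairing hα zero_le_one hf x)).sub
    ((differentiable_rayBasis_parameter hα.le zero_le_one 0 x).mul
      (differentiable_partialPairing hα le_rfl hf x))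

lemma mul_duhamel_eq_of_pairing_eq_zero (hα : 0 < α) (hf : MemLp f 2 (volume.restrict (Ioi 0)))
    (hx : 0 ≤ x) (hint : IntegrableOn (fun s ↦ ‖raySol α 0 lam A B s‖ ^ 2) (Ioi x))
    (hpair : pairing α f lam A B = 0) :
    A * duhamel α f x lam =
      -(rayBasis α 1 0 lam x * ∫ s in Ioi x, raySol α 0 lam A B s * f s) -
        raySol α 0 lam A B x * partialPairing α f 1 x lam := by
  rw [pairing_eq_add_setIntegral_Ioi hα hf hx hint] at hpair
  rw [duhamel, raySol]
  linear_combination rayBasis α 1 0 lam x * hpair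

lemma raySol_wronskian_rayBasis_one (hα : 0 < α) (lam A B : ℂ) (hx : 0 ≤ x) :
    raySol α 0 lam A B x * rayBasis' α 1 0 lam x - raySol' α 0 lam A B x * rayBasis α 1 0 lam x =
      A := by
  rw [raySol, raySol']
  linear_combination A * rayBasis_wronskian hα lam hx

lemma norm_partialPairing_le_sqrt (hα : 0 < α) (hσ : σ ≤ 1)
    (hf : MemLp f 2 (volume.restrict (Ioi 0))) (x : ℝ) (lam : ℂ) :
    ‖partialPairing α f σ x lam‖ ≤
      √(∫ s in Ioc 0 x, ‖rayBasis α σ 0 lam s‖ ^ 2) * √(∫ s in Ioi (0 : ℝ), ‖f s‖ ^ 2) := by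
  have hcont := (isSolution_rayBasis hα hσ 0 lam).continuousOn.norm.pow 2
  exact (integrableOn_mul_and_norm_setIntegral_mul_le Ioc_subset_Ioi_self hf
    (aestronglyMeasurable_rayBasis hα hσ lam x)
    ((hcont.mono Icc_subset_Ici_self).integrableOn_Icc.mono_set Ioc_subset_Icc_self)).2

lemma norm_duhamel_le (hd : IsRecessive α 0 lam A B) (hne : A ≠ 0 ∨ B ≠ 0) (hα : 0 < α)
    (hf : MemLp f 2 (volume.restrict (Ioi 0))) (hpair : pairing α f lam A B = 0)
    (hr : 1 ≤ ‖lam‖) {κ χ : ℝ} (hκ : 0 < κ) (hcos : κ ≤ Real.cos χ) (hsin : 0 ≤ Real.sin χ)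
    (hsep : κ * ‖lam‖ ≤ -(lam * unitDir χ).re) (hx : 0 ≤ x) :
    ‖duhamel α f x lam‖ ≤
      √(∫ s in Ioi (0 : ℝ), ‖f s‖ ^ 2) / √(κ * ‖lam‖ * (κ * √‖lam‖)) := by
  obtain ⟨hslope, hint, -⟩ :=
    hd.norm_slope_le_and_integral_le_of_le_neg_re hα hr hκ hcos hsin hsep
  have hA : 0 < ‖A‖ := norm_pos_iff.2 (ne_zero_of_norm_le_mul hne hslope)
  have hr₀ : 0 < ‖lam‖ := by linarith
  have hint_Ioi := hint.mono_set (Ioi_subset_Ioi hx)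
  have hgreen := (isSolution_raySol hα 0 lam A B).norm_mul_sqrt_integral_add_le
    (isSolution_rayBasis hα le_rfl 0 lam) hd (by simp [rayBasis])
    (coerciveOn_rayPotential_of_le_neg_re α hcos hsin hsep) (norm_unitDir χ).le hκ.le
    (mul_pos hκ hr₀) (mul_pos hκ (Real.sqrt_pos.2 hr₀))
    (by rw [mul_pow, Real.sq_sqrt hr₀.le]; linarith) hx
  rw [raySol_wronskian_rayBasis_one hα lam A B hx] at hgreen
  have hduhamel := mul_duhamel_eq_of_pairing_eq_zero hα hf hx hint_Ioi hpair
  have hhead := norm_partialPairing_le_sqrt hα le_rfl hf x lam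
  have htail := (integrableOn_mul_and_norm_setIntegral_mul_le (Ioi_subset_Ioi hx) hf
    (aestronglyMeasurable_raySol hα lam A B hx) hint_Ioi).2
  set Φ := √(∫ s in Ioi (0 : ℝ), ‖f s‖ ^ 2)
  set ψ := raySol α 0 lam A B
  set S := rayBasis α 1 0 lam
  refine le_of_mul_le_mul_left ?_ hA
  calc ‖A‖ * ‖duhamel α f x lam‖
      = ‖-(S x * ∫ s in Ioi x, ψ s * f s) - ψ x * partialPairing α f 1 x lam‖ := by
        rw [← norm_mul, hduhamel]
    _ ≤ ‖S x‖ * (√(∫ s in Ioi x, ‖ψ s‖ ^ 2) * Φ) +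
        ‖ψ x‖ * (√(∫ s in Ioc 0 x, ‖S s‖ ^ 2) * Φ) := by
      refine (norm_sub_le _ _).trans ?_
      rw [norm_neg, norm_mul, norm_mul]
      gcongr
    _ = (‖S x‖ * √(∫ s in Ioi x, ‖ψ s‖ ^ 2) + ‖ψ x‖ * √(∫ s in Ioc 0 x, ‖S s‖ ^ 2)) * Φ := by
      ring
    _ ≤ ‖A‖ / √(κ * ‖lam‖ * (κ * √‖lam‖)) * Φ := by gcongr
    _ = ‖A‖ * (Φ / √(κ * ‖lam‖ * (κ * √‖lam‖))) := by ring

lemma norm_partialPairing_le (hα : 0 ≤ α) (hσ : σ ≤ 1) (hf : MemLp f 2 (volume.restrict (Ioi 0)))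
    (x : ℝ) (lam : ℂ) :
    ‖partialPairing α f σ x lam‖ ≤
      (1 + x) * Real.exp (x ^ 2 * (x ^ α + ‖lam‖)) * ∫ s in Ioc 0 x, ‖f s‖ := by
  rw [partialPairing, ← integral_const_mul]
  refine norm_integral_le_of_norm_le ((integrableOn_Ioc_of_memLp hf x).norm.const_mul _) ?_
  filter_upwards [ae_norm_rayBasis_le hα hσ x lam] with s hs
  rw [norm_mul]
  gcongr

lemma exists_norm_duhamel_le_exp (hα : 0 < α) (hf : MemLp f 2 (volume.restrict (Ioi 0)))
    (hx : 0 ≤ x) :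
    ∃ C, 0 ≤ C ∧ ∀ lam, 1 ≤ ‖lam‖ → ‖duhamel α f x lam‖ ≤ Real.exp (C * ‖lam‖ ^ (1 : ℝ)) := by
  set J := ∫ s in Ioc 0 x, ‖f s‖
  have : 0 ≤ J := integral_nonneg fun s ↦ norm_nonneg _
  set D := 2 * (1 + x) ^ 2 * J with hD
  have hD₀ : 0 ≤ D := by positivity
  refine ⟨D + 2 * x ^ 2 * (x ^ α + 1), by positivity, fun lam hlam ↦ ?_⟩
  rw [Real.rpow_one]
  set E := Real.exp (x ^ 2 * (x ^ α + ‖lam‖)) with hE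
  have hterm {σ τ : ℕ} (hσ : σ ≤ 1) (hτ : τ ≤ 1) :
      ‖rayBasis α σ 0 lam x * partialPairing α f τ x lam‖ ≤ ((1 + x) * E) * ((1 + x) * E * J) := by
    rw [norm_mul]
    gcongr
    · exact norm_rayBasis_le hα.le hσ 0 lam hx le_rfl
    · exact norm_partialPairing_le hα.le hτ hf x lam
  calc ‖duhamel α f x lam‖
      ≤ ((1 + x) * E) * ((1 + x) * E * J) + ((1 + x) * E) * ((1 + x) * E * J) :=
        (norm_sub_le _ _).trans (add_le_add (hterm le_rfl zero_le_one) (hterm zero_le_one le_rfl))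
    _ = D * (E * E) := by rw [hD]; ring
    _ ≤ Real.exp D * (E * E) := by
      gcongr
      linarith [Real.add_one_le_exp D]
    _ = Real.exp (D + 2 * x ^ 2 * (x ^ α + ‖lam‖)) := by
      rw [hE, ← Real.exp_add, ← Real.exp_add]
      ring_nf
    _ ≤ Real.exp ((D + 2 * x ^ 2 * (x ^ α + 1)) * ‖lam‖) := by
      rw [add_mul, mul_assoc (2 * x ^ 2), add_mul (x ^ α), one_mul]
      gcongr
      · exact le_mul_of_one_le_right hD₀ hlam
      · exact le_mul_of_one_le_right (by positivity) hlam

lemma sqrt_mul_mul_sqrt {κ r : ℝ} (hκ : 0 ≤ κ) (hr : 0 < r) :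
    √(κ * r * (κ * √r)) = κ * r ^ (3 / 4 : ℝ) := by
  have hpow : r ^ (3 / 4 : ℝ) * r ^ (3 / 4 : ℝ) = r * √r := by
    rw [← Real.rpow_add hr, Real.sqrt_eq_rpow, ← Real.rpow_one_add' hr.le (by norm_num)]
    norm_num
  rw [Real.sqrt_eq_iff_mul_self_eq (by positivity) (by positivity)]
  linear_combination -κ ^ 2 * hpow

lemma duhamel_eq_zero (hα : 0 < α) (hf : MemLp f 2 (volume.restrict (Ioi 0)))
    (hpair : ∀ lam : ℂ, ∃ A B : ℂ, (A ≠ 0 ∨ B ≠ 0) ∧ IsRecessive α 0 lam A B ∧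
      pairing α f lam A B = 0) (hx : 0 ≤ x) (lam : ℂ) : duhamel α f x lam = 0 := by
  have hpi := Real.pi_gt_three
  obtain ⟨κ, hκ, hseparation⟩ := exists_pos_separation
  obtain ⟨C, hC, hgrow⟩ := exists_norm_duhamel_le_exp hα hf hx
  have hcone (r : ℝ) (hr : 1 ≤ r) (θ : ℝ)
      (hθ : θ ∈ Icc (3 * Real.pi / 4) (-(1 / 160) + 2 * Real.pi)) :
      ‖duhamel α f x (r * unitDir (-θ))‖ ≤
        √(∫ s in Ioi (0 : ℝ), ‖f s‖ ^ 2) / κ * r ^ (-(3 / 4) : ℝ) := by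
    have hr₀ : 0 < r := by linarith
    obtain ⟨χ, hcos, hsin, hsep⟩ := hseparation θ hθ
    obtain ⟨A, B, hne, hd, hpair_eq⟩ := hpair (r * unitDir (-θ))
    have hnorm := norm_polar hr₀.le (-θ)
    have hbound := norm_duhamel_le hd hne hα hf hpair_eq (hr.trans_eq hnorm.symm) hκ hcos hsin
      (by rw [hnorm]; exact hsep r hr₀.le) hx
    rw [hnorm] at hbound
    refine hbound.trans_eq ?_
    rw [sqrt_mul_mul_sqrt hκ.le hr₀, Real.rpow_neg hr₀.le]
    field_simp
  exact eq_zero_of_growth_of_cone (differentiable_duhamel hα hf x) (by linarith)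
    (by rw [lt_div_iff₀ (by linarith)]; linarith) hC hgrow (by norm_num) hcone lam

end Duhamel

/-! ### Completeness -/

section Completeness

variable {α : ℝ} {f : ℝ → ℂ} {lam : ℂ} {σ : ℕ}

lemma partialPairing_eq_intervalIntegral (α : ℝ) (f : ℝ → ℂ) (σ : ℕ) (lam : ℂ) {x : ℝ}
    (hx : 0 ≤ x) :
    partialPairing α f σ x lam = ∫ s in (0 : ℝ)..x, rayBasis α σ 0 lam s * f s :=
  (intervalIntegral.integral_of_le hx).symm

lemma continuousOn_partialPairing (hα : 0 < α) (hσ : σ ≤ 1)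
    (hf : MemLp f 2 (volume.restrict (Ioi 0))) (lam : ℂ) :
    ContinuousOn (fun x ↦ partialPairing α f σ x lam) (Ioi 0) := by
  intro x hx
  rw [mem_Ioi] at hx
  have hint := integrableOn_rayBasis_mul hα hσ hf lam (x + 1)
  have hcont := intervalIntegral.continuousOn_primitive_interval (a := 0) (b := x + 1)
    (f := fun s ↦ rayBasis α σ 0 lam s * f s) (μ := volume)
    (by rwa [uIcc_of_le (by linarith), integrableOn_Icc_iff_integrableOn_Ioc])
  rw [uIcc_of_le (by linarith)] at hcont
  refine ((hcont.continuousAt (Icc_mem_nhds hx (by linarith))).congr ?_).continuousWithinAt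
  filter_upwards [Ioi_mem_nhds hx] with s hs
    using (partialPairing_eq_intervalIntegral α f σ lam (le_of_lt hs)).symm

lemma ae_hasDerivAt_partialPairing (hα : 0 < α) (hσ : σ ≤ 1)
    (hf : MemLp f 2 (volume.restrict (Ioi 0))) (lam : ℂ) :
    ∀ᵐ x ∂volume.restrict (Ioi (0 : ℝ)),
      HasDerivAt (fun x ↦ partialPairing α f σ x lam) (rayBasis α σ 0 lam x * f x) x := by
  have hint (n : ℕ) : IntervalIntegrable (fun s ↦ rayBasis α σ 0 lam s * f s) volume 0 n :=
    (intervalIntegrable_iff_integrableOn_Ioc_of_le n.cast_nonneg).2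
      (integrableOn_rayBasis_mul hα hσ hf lam n)
  rw [ae_restrict_iff' measurableSet_Ioi]
  filter_upwards [ae_all_iff.2 fun n ↦ (hint n).ae_hasDerivAt_integral] with x hderiv hx
  rw [mem_Ioi] at hx
  obtain ⟨n, hn⟩ := exists_nat_ge x
  refine (hderiv n (by rw [uIcc_of_le n.cast_nonneg]; exact ⟨hx.le, hn⟩) 0
    left_mem_uIcc).congr_of_eventuallyEq ?_
  filter_upwards [Ioi_mem_nhds hx] with s hs
    using partialPairing_eq_intervalIntegral α f σ lam (le_of_lt hs)

lemma hasDerivAt_eq_zero_of_eqOn_zero {u : ℝ → ℂ} {d : ℂ} {x : ℝ} (hu : EqOn u 0 (Ioi 0))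
    (hx : 0 < x) (hd : HasDerivAt u d x) : d = 0 :=
  hd.unique ((hasDerivAt_const x (0 : ℂ)).congr_of_eventuallyEq
    (hu.eventuallyEq_of_mem (Ioi_mem_nhds hx)))

/-- As `duhamel` and its derivative both vanish, the invertible Wronskian matrix annihilates the
vector of partial pairings. -/
lemma partialPairing_eqOn_zero (hα : 0 < α) (hf : MemLp f 2 (volume.restrict (Ioi 0)))
    (hduhamel : ∀ x, 0 ≤ x → duhamel α f x lam = 0) (hσ : σ ≤ 1) :
    EqOn (fun x ↦ partialPairing α f σ x lam) 0 (Ioi 0) := by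
  have hzero : EqOn (fun x ↦ duhamel α f x lam) 0 (Ioi 0) := fun x hx ↦ hduhamel x (le_of_lt hx)
  refine Measure.eqOn_open_of_ae_eq (μ := volume) ?_ isOpen_Ioi
    (continuousOn_partialPairing hα hσ hf lam) continuousOn_const
  filter_upwards [ae_hasDerivAt_partialPairing hα zero_le_one hf lam,
    ae_hasDerivAt_partialPairing hα le_rfl hf lam, ae_restrict_mem measurableSet_Ioi]
    with x hderiv₀ hderiv₁ hx
  have hvalue := hduhamel x (le_of_lt hx)
  have hwronskian := rayBasis_wronskian hα lam (le_of_lt hx)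
  have hderiv := hasDerivAt_eq_zero_of_eqOn_zero hzero hx
    ((((isSolution_rayBasis hα le_rfl 0 lam).hasDerivAt x hx).mul hderiv₀).sub
      (((isSolution_rayBasis hα zero_le_one 0 lam).hasDerivAt x hx).mul hderiv₁))
  rw [duhamel] at hvalue
  rw [Pi.zero_apply]
  interval_cases σ
  · linear_combination -partialPairing α f 0 x lam * hwronskian +
      rayBasis α 0 0 lam x * hderiv - rayBasis' α 0 0 lam x * hvalue
  · linear_combination -partialPairing α f 1 x lam * hwronskian +
      rayBasis α 1 0 lam x * hderiv - rayBasis' α 1 0 lam x * hvalue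

lemma ae_eq_zero_of_orthogonal (hα : 133 / 200 < α) (hf : MemLp f 2 (volume.restrict (Ioi 0)))
    (horth : ∀ lam y, IsEigenfunction α Complex.I lam y → ∫ s in Ioi (0 : ℝ), y s * f s = 0) :
    ∀ᵐ x ∂volume.restrict (Ioi (0 : ℝ)), f x = 0 := by
  have hα₀ : 0 < α := by linarith
  obtain ⟨F, hdiff, hF⟩ := exists_differentiable_isPairingQuotient hα₀ hf horth
  have hpair (lam : ℂ) : ∃ A B : ℂ, (A ≠ 0 ∨ B ≠ 0) ∧ IsRecessive α 0 lam A B ∧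
      pairing α f lam A B = 0 := by
    obtain ⟨A, B, hne, hd, hquot⟩ := hF lam
    exact ⟨A, B, hne, hd, by rw [hquot, hF.eq_zero hdiff hα hf, zero_mul]⟩
  have hpartial {σ : ℕ} (hσ : σ ≤ 1) :=
    partialPairing_eqOn_zero hα₀ hf (fun x hx ↦ duhamel_eq_zero hα₀ hf hpair hx 0) hσ
  filter_upwards [ae_hasDerivAt_partialPairing hα₀ zero_le_one hf 0,
    ae_hasDerivAt_partialPairing hα₀ le_rfl hf 0, ae_restrict_mem measurableSet_Ioi]
    with x hderiv₀ hderiv₁ hx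
  have hzero₀ := hasDerivAt_eq_zero_of_eqOn_zero (hpartial zero_le_one) hx hderiv₀
  have hzero₁ := hasDerivAt_eq_zero_of_eqOn_zero (hpartial le_rfl) hx hderiv₁
  linear_combination -f x * rayBasis_wronskian hα₀ 0 (le_of_lt hx) +
    rayBasis' α 1 0 0 x * hzero₀ - rayBasis' α 0 0 0 x * hzero₁

end Completeness

namespace IsEigenfunction

lemma memLp {α : ℝ} {c lam : ℂ} {y : ℝ → ℂ} (h : IsEigenfunction α c lam y) :
    MemLp y 2 (volume.restrict (Ioi (0 : ℝ))) :=
  (memLp_two_iff_integrable_sq_norm ((h.1.mono Ioi_subset_Ici_self).aestronglyMeasurable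
    measurableSet_Ioi)).2 h.2.2.2.2

end IsEigenfunction

theorem eigenfunctionsComplete_of_orthogonal {α : ℝ} {c : ℂ}
    (h : ∀ f : ℝ → ℂ, MemLp f 2 (volume.restrict (Ioi 0)) →
      (∀ lam y, IsEigenfunction α c lam y → ∫ s in Ioi (0 : ℝ), y s * f s = 0) →
      ∀ᵐ x ∂volume.restrict (Ioi (0 : ℝ)), f x = 0) :
    EigenfunctionsComplete α c := by
  rw [EigenfunctionsComplete, ← Submodule.topologicalClosure_coe, ← Submodule.top_coe (R := ℂ),
    SetLike.coe_set_eq, Submodule.topologicalClosure_eq_top_iff, Submodule.eq_bot_iff]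
  intro u hu
  rw [Submodule.mem_orthogonal'] at hu
  have hzero := h (fun x ↦ conj (u x)) (Lp.memLp u).star fun lam y hy ↦ by
    have hinner := hu hy.memLp.toLp (Submodule.subset_span ⟨lam, y, hy, hy.memLp.coeFn_toLp⟩)
    rw [L2.inner_def] at hinner
    rw [← hinner]
    refine integral_congr_ae ?_
    filter_upwards [hy.memLp.coeFn_toLp] with x hx
    rw [hx, RCLike.inner_apply]
  refine Lp.eq_zero_iff_ae_eq_zero.2 ?_
  filter_upwards [hzero] with x hx
  simpa using hx

theorem stmt3_general {α : ℝ} (hα : 133 / 200 < α) : EigenfunctionsComplete α Complex.I :=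
  eigenfunctionsComplete_of_orthogonal fun _ hf horth ↦ ae_eq_zero_of_orthogonal hα hf horth

/-- there exists `α₀ < 2/3` such that for every `α` with `α₀ < α < 2`,
the system of eigenfunctions of `𝓛_{i,α}` is complete in `L²((0,∞),ℂ)`. -/
theorem stmt3 :
    ∃ α₀ : ℝ, α₀ < 2 / 3 ∧ ∀ α : ℝ, α₀ < α → α < 2 →
      EigenfunctionsComplete α Complex.I :=
  ⟨133 / 200, by norm_num, fun _ hα _ ↦ stmt3_general hα⟩
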